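/- arXiv:2604.08095 — 2 statements merged into one kernel-verified Lean document; each statement's English description precedes it below -/
import Mathlib

section
/- For every integer d ≥ 1 and every real α with 0 < α < 1/2, there exists a constant C > 0, depending only on d and α, such that for every integer n ≥ 1 and every degree-d polynomial threshold function f : {-1,1}^n → {-1,1}, one has E_x[s_f(x)^α] ≤ C · (log(e·n))^{C}, where x is uniform on {-1,1}^n. -/
open Finset
open scoped Classical

/-- The embedding of `Bool` into `{-1, 1} ⊆ ℝ`. -/
noncomputable def chi (b : Bool) : ℝ := if b then 1 else -1

/-- Flip the `i`-th coordinate of a point of the Boolean cube. -/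
def flipAt {n : ℕ} (x : Fin n → Bool) (i : Fin n) : Fin n → Bool :=
  Function.update x i (!x i)

/-- The sensitivity of `f` at `x`: the number of coordinates whose flip changes `f`. -/
noncomputable def sens {n : ℕ} (f : (Fin n → Bool) → ℝ) (x : Fin n → Bool) : ℕ :=
  (Finset.univ.filter (fun i => f (flipAt x i) ≠ f x)).card

/-- The Boolean surface area `BSA[f] = E_x √(s_f(x))`, `x` uniform on the cube. -/
noncomputable def BSA {n : ℕ} (f : (Fin n → Bool) → ℝ) : ℝ :=
  (∑ x : Fin n → Bool, Real.sqrt (sens f x)) / 2 ^ n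

/-- Evaluation of a polynomial at a point of the cube `{-1,1}^n`. -/
noncomputable def pev {n : ℕ} (p : MvPolynomial (Fin n) ℝ) (x : Fin n → Bool) : ℝ :=
  MvPolynomial.eval (fun i => chi (x i)) p

/-- `f` is a degree-`d` polynomial threshold function: `f = sgn p` for some multilinear
polynomial `p` of total degree at most `d` that is nonvanishing on the cube. -/
def IsPTF (d : ℕ) {n : ℕ} (f : (Fin n → Bool) → ℝ) : Prop :=
  ∃ p : MvPolynomial (Fin n) ℝ,
    (∀ m ∈ p.support, ∀ i, m i ≤ 1) ∧ p.totalDegree ≤ d ∧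
    ∀ x, pev p x ≠ 0 ∧ f x = Real.sign (pev p x)

/-!
Let `M` be the supremum of `E[s_f ^ α]` over the threshold functions `f = sgn c` of degree `d`
in `n` variables; the goal is a bound `M ≤ R + (1 - ε) M` with `ε` depending only on `d` and `R`
polylogarithmic in `n`. If `c` is skew, that is, if its squared mean exceeds its variance by a
polylogarithmic factor, then hypercontractivity makes sign changes so rare that
`E[s_f ^ α] ≤ 1`. Otherwise query influential variables one after the other: by the
Paley–Zygmund inequality, with probability bounded below this soon leads to a skew or a regular
polynomial, and the remaining branches contribute at most a `1 - 2 ε` fraction of `M`.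

For regular `c`, fix all but a random set of coordinates of density `δ ≈ N ^ (-2)`. A fraction
`δ` of the sensitive coordinates survives, so `δ ^ α E[s_f ^ α]` is controlled by the average of
the same moment over the restrictions, which is at most `1` at a skew restriction. A restriction
that is not skew is detected by the values of `c` at two `δ`-close points, through a smooth test
of whether they differ much in proportion to their size. By regularity and Lindeberg's argument
these pairs of points may be replaced by pairs `√2 cos θ`, `√2 cos (θ + 2π / N)` with `θ` on a
circle of `N` points. When all the angles are rotated together, `c` becomes a trigonometric
polynomial of degree `d`, which changes much between neighbours only near its at most `2 d`
roots, hence with probability `O(κ / N)` where `κ` is polylogarithmic. So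
`E[s_f ^ α] ≤ N ^ (2 α) (3 + O(κ M / N))`, and since `2 α < 1` a suitable power of `κ` as
`N` makes the coefficient of `M` at most `ε`.
-/

/-- Probability weights on a finite type. -/
structure IsProbWeight {Ω : Type*} [Fintype Ω] (w : Ω → ℝ) : Prop where
  nonneg : ∀ a, 0 ≤ w a
  sum_eq_one : ∑ a, w a = 1

/-- The expectation of `F` with respect to the weights `w` on a finite type. -/
def expectation {Ω : Type*} [Fintype Ω] (w F : Ω → ℝ) : ℝ := ∑ a, w a * F a

/-- The weights of independent coordinates, each distributed according to `w`. -/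
def piWeight {ι Ω : Type*} [Fintype ι] (w : Ω → ℝ) : (ι → Ω) → ℝ := fun ω => ∏ i, w (ω i)

/-- The weights of a pair of independent variables. -/
def prodWeight {Ω₁ Ω₂ : Type*} (w₁ : Ω₁ → ℝ) (w₂ : Ω₂ → ℝ) : Ω₁ × Ω₂ → ℝ :=
  fun q => w₁ q.1 * w₂ q.2

local notation "𝔼[" w "]" => expectation (piWeight w)

lemma piWeight_update_mul {ι Ω : Type*} [Fintype ι] [DecidableEq ι] (w : Ω → ℝ) (ω : ι → Ω) (j : ι)
    (a : Ω) : piWeight w (Function.update ω j a) * w (ω j) = piWeight w ω * w a := by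
  have h : ∏ i ∈ univ.erase j, w (Function.update ω j a i) = ∏ i ∈ univ.erase j, w (ω i) :=
    prod_congr rfl fun i hi => by rw [Function.update_of_ne (ne_of_mem_erase hi)]
  rw [piWeight, piWeight, ← mul_prod_erase univ _ (mem_univ j),
    ← mul_prod_erase univ (fun i => w (ω i)) (mem_univ j), h, Function.update_self]
  ring

section Expectation

variable {Ω Ω₁ Ω₂ : Type*} [Fintype Ω] [Fintype Ω₁] [Fintype Ω₂]
  {w : Ω → ℝ} {w₁ : Ω₁ → ℝ} {w₂ : Ω₂ → ℝ}

lemma expectation_add (w F G : Ω → ℝ) :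
    expectation w (fun a => F a + G a) = expectation w F + expectation w G := by
  simp only [expectation, mul_add, sum_add_distrib]

lemma expectation_sub (w F G : Ω → ℝ) :
    expectation w (fun a => F a - G a) = expectation w F - expectation w G := by
  simp only [expectation, mul_sub, sum_sub_distrib]

lemma expectation_const_mul (w F : Ω → ℝ) (k : ℝ) :
    expectation w (fun a => k * F a) = k * expectation w F := by
  simp only [expectation, mul_sum, mul_left_comm]

lemma expectation_mul_const (w F : Ω → ℝ) (k : ℝ) :
    expectation w (fun a => F a * k) = expectation w F * k := by
  simp only [expectation, sum_mul, mul_assoc]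

lemma expectation_sum {κ : Type*} (w : Ω → ℝ) (s : Finset κ) (F : κ → Ω → ℝ) :
    expectation w (fun a => ∑ k ∈ s, F k a) = ∑ k ∈ s, expectation w (F k) := by
  simp only [expectation, mul_sum]
  exact sum_comm

lemma expectation_comm (w₁ : Ω₁ → ℝ) (w₂ : Ω₂ → ℝ) (F : Ω₁ → Ω₂ → ℝ) :
    expectation w₁ (fun a => expectation w₂ (F a)) =
      expectation w₂ (fun b => expectation w₁ (fun a => F a b)) := by
  simp only [expectation, mul_sum]
  rw [sum_comm]
  simp only [mul_left_comm]

lemma expectation_prodWeight (w₁ : Ω₁ → ℝ) (w₂ : Ω₂ → ℝ) (F : Ω₁ × Ω₂ → ℝ) :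
    expectation (prodWeight w₁ w₂) F =
      expectation w₁ (fun a => expectation w₂ (fun b => F (a, b))) := by
  simp only [expectation, prodWeight, Fintype.sum_prod_type, mul_sum, mul_assoc]

namespace IsProbWeight

lemma expectation_const (hw : IsProbWeight w) (k : ℝ) : expectation w (fun _ => k) = k := by
  rw [expectation, ← sum_mul, hw.sum_eq_one, one_mul]

lemma expectation_mono (hw : IsProbWeight w) {F G : Ω → ℝ} (h : ∀ a, F a ≤ G a) :
    expectation w F ≤ expectation w G :=
  sum_le_sum fun a _ => mul_le_mul_of_nonneg_left (h a) (hw.nonneg a)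

lemma expectation_nonneg (hw : IsProbWeight w) {F : Ω → ℝ} (h : ∀ a, 0 ≤ F a) :
    0 ≤ expectation w F :=
  sum_nonneg fun a _ => mul_nonneg (hw.nonneg a) (h a)

lemma expectation_ite_mul_le (hw : IsProbWeight w) {F : Ω → ℝ} (hF : ∀ a, 0 ≤ F a) (t : ℝ) :
    expectation w (fun a => if t ≤ F a then 1 else 0) * t ≤ expectation w F := by
  rw [← expectation_mul_const]
  refine hw.expectation_mono fun a => ?_
  split_ifs with h
  · rwa [one_mul]
  · rw [zero_mul]
    exact hF a

lemma abs_expectation_le (hw : IsProbWeight w) (F : Ω → ℝ) :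
    |expectation w F| ≤ expectation w (fun a => |F a|) := by
  refine (abs_sum_le_sum_abs _ _).trans_eq (sum_congr rfl fun a _ => ?_)
  rw [abs_mul, abs_of_nonneg (hw.nonneg a)]

lemma sq_expectation_mul_le (hw : IsProbWeight w) (F G : Ω → ℝ) :
    expectation w (fun a => F a * G a) ^ 2 ≤
      expectation w (fun a => F a ^ 2) * expectation w (fun a => G a ^ 2) :=
  sum_sq_le_sum_mul_sum_of_sq_le_mul _ (fun a _ => mul_nonneg (hw.nonneg a) (sq_nonneg _))
    (fun a _ => mul_nonneg (hw.nonneg a) (sq_nonneg _)) (fun a _ => le_of_eq (by ring))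

lemma prod (h₁ : IsProbWeight w₁) (h₂ : IsProbWeight w₂) : IsProbWeight (prodWeight w₁ w₂) where
  nonneg q := mul_nonneg (h₁.nonneg _) (h₂.nonneg _)
  sum_eq_one := by
    simp only [prodWeight, Fintype.sum_prod_type, ← mul_sum, h₂.sum_eq_one, mul_one, h₁.sum_eq_one]

end IsProbWeight

variable {ι : Type*} [Fintype ι] [DecidableEq ι]

lemma IsProbWeight.pi (hw : IsProbWeight w) : IsProbWeight (piWeight (ι := ι) w) where
  nonneg ω := prod_nonneg fun i _ => hw.nonneg (ω i)
  sum_eq_one := by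
    have h := prod_univ_sum (fun _ : ι => (univ : Finset Ω)) (fun _ a => w a)
    simpa only [hw.sum_eq_one, prod_const_one, Fintype.piFinset_univ, piWeight] using h.symm

lemma IsProbWeight.expectation_pi_resample (hw : IsProbWeight w) (j : ι) (F : (ι → Ω) → ℝ) :
    𝔼[w] F = 𝔼[w] (fun ω => expectation w (fun a => F (Function.update ω j a))) := by
  have hswap : Function.Involutive
      fun q : (ι → Ω) × Ω => (Function.update q.1 j q.2, q.1 j) := fun q => by simp
  calc 𝔼[w] F = expectation (prodWeight (piWeight w) w) (fun q => F q.1) := by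
        simp only [expectation_prodWeight, hw.expectation_const]
    _ = expectation (prodWeight (piWeight w) w) (fun q => F (Function.update q.1 j q.2)) := by
        rw [expectation, ← Equiv.sum_comp hswap.toPerm]
        refine sum_congr rfl fun q _ => ?_
        simp only [Function.Involutive.coe_toPerm, prodWeight, piWeight_update_mul]
    _ = _ := expectation_prodWeight _ _ _

lemma IsProbWeight.expectation_pi_mul (hw : IsProbWeight w) (j : ι) (g : Ω → ℝ)
    {G : (ι → Ω) → ℝ} (hG : ∀ ω a, G (Function.update ω j a) = G ω) :
    𝔼[w] (fun ω => g (ω j) * G ω) = expectation w g * 𝔼[w] G := by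
  rw [hw.expectation_pi_resample j, ← expectation_const_mul]
  simp only [Function.update_self, hG, expectation_mul_const]

lemma expectation_pi_prodWeight (w₁ : Ω₁ → ℝ) (w₂ : Ω₂ → ℝ) (F : (ι → Ω₁ × Ω₂) → ℝ) :
    𝔼[prodWeight w₁ w₂] F = 𝔼[w₁] (fun a => 𝔼[w₂] (fun b => F (fun i => (a i, b i)))) := by
  rw [← expectation_prodWeight (piWeight w₁) (piWeight w₂)
      (fun q : (ι → Ω₁) × (ι → Ω₂) => F (fun i => (q.1 i, q.2 i))),
    expectation,
    ← Equiv.sum_comp (Equiv.arrowProdEquivProdArrow ι (fun _ => Ω₁) (fun _ => Ω₂)).symm]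
  refine sum_congr rfl fun q _ => ?_
  simp only [Equiv.arrowProdEquivProdArrow, Equiv.coe_fn_symm_mk, piWeight, prodWeight,
    prod_mul_distrib]

end Expectation

/-- A multilinear polynomial in the variables `ι`, encoded by its coefficients: `c S` is the
coefficient of the monomial `∏ i ∈ S, x i`. -/
abbrev MLPoly (ι : Type*) := Finset ι → ℝ

namespace MLPoly

/-- The degree of the polynomial `c` is at most `d`. -/
def DegLE {ι : Type*} (d : ℕ) (c : MLPoly ι) : Prop := ∀ S, d < S.card → c S = 0

protected lemma DegLE.smul {ι : Type*} {d : ℕ} {c : MLPoly ι} (h : c.DegLE d) (a : ℝ) :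
    (a • c).DegLE d := fun S hS => by
  rw [Pi.smul_apply, h S hS, smul_zero]

section Evaluation

variable {ι : Type*} [Fintype ι]

/-- The value of the polynomial `c` at the point `z`. -/
def eval (c : MLPoly ι) (z : ι → ℝ) : ℝ := ∑ S, c S * ∏ i ∈ S, z i

/-- The squared `ℓ²` norm of the coefficients, which is the second moment of `c` at a random point
with independent standardized coordinates. -/
def normSq (c : MLPoly ι) : ℝ := ∑ S, c S ^ 2

lemma normSq_nonneg (c : MLPoly ι) : 0 ≤ normSq c := sum_nonneg fun _ _ => sq_nonneg _

lemma eval_zero (z : ι → ℝ) : eval 0 z = 0 := by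
  simp only [eval, Pi.zero_apply, zero_mul, sum_const_zero]

lemma eval_smul (a : ℝ) (c : MLPoly ι) (z : ι → ℝ) : (a • c).eval z = a * c.eval z := by
  simp only [eval, Pi.smul_apply, smul_eq_mul, mul_sum, mul_assoc]

lemma normSq_smul (a : ℝ) (c : MLPoly ι) : normSq (a • c) = a ^ 2 * normSq c := by
  simp only [normSq, Pi.smul_apply, smul_eq_mul, mul_sum, mul_pow]

end Evaluation

section Basic

variable {ι : Type*} [DecidableEq ι]

/-- The part of `c` that does not involve the variable `j`. -/
def freePart (j : ι) (c : MLPoly ι) : MLPoly ι := fun S => if j ∈ S then 0 else c S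

/-- The partial derivative of `c` in the variable `j`. -/
def pderiv (j : ι) (c : MLPoly ι) : MLPoly ι := fun S => if j ∈ S then 0 else c (insert j S)

namespace DegLE

variable {d : ℕ} {c : MLPoly ι}

protected lemma freePart (h : c.DegLE d) (j : ι) : (c.freePart j).DegLE d := fun S hS => by
  rw [MLPoly.freePart, h S hS, ite_self]

protected lemma pderiv (h : c.DegLE d) (j : ι) : (c.pderiv j).DegLE (d - 1) := fun S hS => by
  rw [MLPoly.pderiv]
  split_ifs with hj
  · rfl
  · exact h _ (by rw [card_insert_of_notMem hj]; omega)

lemma pderiv_eq_zero (h : c.DegLE 0) (j : ι) : c.pderiv j = 0 := by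
  funext S
  have := h (insert j S) (card_pos.2 (insert_nonempty j S))
  simp only [MLPoly.pderiv, this, ite_self, Pi.zero_apply]

end DegLE

theorem induction_pderiv [Finite ι] {P : MLPoly ι → Prop} (single_empty : ∀ a, P (Pi.single ∅ a))
    (step : ∀ j c, P (c.freePart j) → P (c.pderiv j) → P c) (c : MLPoly ι) : P c := by
  cases nonempty_fintype ι
  suffices h : ∀ (s : Finset ι) (c : MLPoly ι), (∀ S, ¬ S ⊆ s → c S = 0) → P c from
    h univ c fun S hS => absurd (subset_univ S) hS
  intro s
  induction s using Finset.induction_on with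
  | empty =>
    intro c hc
    have : c = Pi.single ∅ (c ∅) := by
      funext S
      by_cases hS : S = ∅
      · rw [hS, Pi.single_eq_same]
      · rw [Pi.single_eq_of_ne hS, hc S (by rwa [subset_empty])]
    exact this ▸ single_empty (c ∅)
  | insert j s _ ih =>
    intro c hc
    refine step j c (ih _ fun S hS => ?_) (ih _ fun S hS => ?_) <;>
      simp only [freePart, pderiv] <;> split_ifs with hj
    · rfl
    · exact hc S (by rwa [subset_insert_iff_of_notMem hj])
    · rfl
    · exact hc _ (by rwa [insert_subset_insert_iff hj])

variable [Fintype ι]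

lemma eval_single_empty (a : ℝ) (z : ι → ℝ) : eval (Pi.single ∅ a) z = a := by
  simp [eval, Pi.single_apply]

lemma normSq_single_empty (a : ℝ) : normSq (Pi.single ∅ a : MLPoly ι) = a ^ 2 := by
  simp [normSq, Pi.single_apply, ite_pow]

lemma sum_finset_eq_add (j : ι) (f : Finset ι → ℝ) :
    ∑ S, f S = ∑ S, (if j ∈ S then 0 else f S) + ∑ S, (if j ∈ S then 0 else f (insert j S)) := by
  have hmem : ∑ S with j ∈ S, f S = ∑ S with j ∉ S, f (insert j S) := by
    refine sum_nbij' (fun S => S.erase j) (fun S => insert j S) ?_ ?_ ?_ ?_ ?_ <;>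
      simp +contextual [insert_erase]
  simp_rw [← ite_not (j ∈ _), ← sum_filter]
  rw [← hmem, add_comm, sum_filter_add_sum_filter_not]

lemma eval_eq_freePart_add (j : ι) (c : MLPoly ι) (z : ι → ℝ) :
    c.eval z = (c.freePart j).eval z + z j * (c.pderiv j).eval z := by
  simp only [eval, freePart, pderiv, mul_sum]
  rw [sum_finset_eq_add j]
  congr 1 <;> refine sum_congr rfl fun S _ => ?_ <;> split_ifs with hj
  · rw [zero_mul]
  · rfl
  · rw [zero_mul, mul_zero]
  · rw [prod_insert hj, mul_left_comm]

lemma normSq_eq_freePart_add (j : ι) (c : MLPoly ι) :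
    c.normSq = (c.freePart j).normSq + (c.pderiv j).normSq := by
  simp only [normSq, freePart, pderiv]
  rw [sum_finset_eq_add j]
  simp only [ite_pow, zero_pow two_ne_zero]

private lemma eval_update_of_forall_mem {c : MLPoly ι} {j : ι} (hc : ∀ S, j ∈ S → c S = 0)
    (z : ι → ℝ) (a : ℝ) : c.eval (Function.update z j a) = c.eval z := by
  refine sum_congr rfl fun S _ => ?_
  by_cases hj : j ∈ S
  · rw [hc S hj, zero_mul, zero_mul]
  · rw [prod_congr rfl fun i hi => Function.update_of_ne (ne_of_mem_of_not_mem hi hj) a z]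

lemma eval_freePart_update (j : ι) (c : MLPoly ι) (z : ι → ℝ) (a : ℝ) :
    (c.freePart j).eval (Function.update z j a) = (c.freePart j).eval z :=
  eval_update_of_forall_mem (fun _ hS => if_pos hS) z a

lemma eval_pderiv_update (j : ι) (c : MLPoly ι) (z : ι → ℝ) (a : ℝ) :
    (c.pderiv j).eval (Function.update z j a) = (c.pderiv j).eval z :=
  eval_update_of_forall_mem (fun _ hS => if_pos hS) z a

end Basic

/-- The value of `c` at the random point whose independent coordinates are `z i`. -/
def randEval {ι Ω : Type*} [Fintype ι] (c : MLPoly ι) (z : ι → Ω → ℝ) (ω : ι → Ω) : ℝ :=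
  c.eval fun i => z i (ω i)

/-- The random variable `z` on a space with weights `w` is standardized with vanishing third moment
and fourth moment at most `9`. -/
structure IsStandardized {Ω : Type*} [Fintype Ω] (w z : Ω → ℝ) : Prop where
  mean_eq_zero : expectation w z = 0
  mean_sq : expectation w (fun a => z a ^ 2) = 1
  mean_pow_three : expectation w (fun a => z a ^ 3) = 0
  mean_pow_four_le : expectation w (fun a => z a ^ 4) ≤ 9

section RandEval

variable {ι Ω : Type*} [Fintype ι] [DecidableEq ι]

lemma randEval_freePart_update (c : MLPoly ι) (z : ι → Ω → ℝ) (ω : ι → Ω) (j : ι) (a : Ω) :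
    (c.freePart j).randEval z (Function.update ω j a) = (c.freePart j).randEval z ω := by
  simp only [randEval, Function.apply_update z ω j a, eval_freePart_update]

lemma randEval_pderiv_update (c : MLPoly ι) (z : ι → Ω → ℝ) (ω : ι → Ω) (j : ι) (a : Ω) :
    (c.pderiv j).randEval z (Function.update ω j a) = (c.pderiv j).randEval z ω := by
  simp only [randEval, Function.apply_update z ω j a, eval_pderiv_update]

lemma randEval_eq_freePart_add (c : MLPoly ι) (z : ι → Ω → ℝ) (ω : ι → Ω) (j : ι) :
    c.randEval z ω = (c.freePart j).randEval z ω + z j (ω j) * (c.pderiv j).randEval z ω :=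
  eval_eq_freePart_add j c _

end RandEval

section Moments

variable {ι Ω : Type*} [Fintype ι] [DecidableEq ι] [Fintype Ω] {w : Ω → ℝ} {z : ι → Ω → ℝ}

lemma expectation_randEval (hw : IsProbWeight w) (hz : ∀ i, IsStandardized w (z i))
    (c : MLPoly ι) : 𝔼[w] (c.randEval z) = c ∅ := by
  induction c using induction_pderiv with
  | single_empty a =>
    simp only [funext fun ω => show randEval (Pi.single ∅ a) z ω = a from eval_single_empty a _,
      hw.pi.expectation_const, Pi.single_eq_same]
  | step j c ihA _ =>
    rw [funext fun ω => randEval_eq_freePart_add c z ω j, expectation_add,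
      hw.expectation_pi_mul j (z j) fun ω a => randEval_pderiv_update c z ω j a,
      (hz j).mean_eq_zero, ihA, zero_mul, add_zero, freePart, if_neg (notMem_empty j)]

lemma expectation_randEval_sq (hw : IsProbWeight w) (hz : ∀ i, IsStandardized w (z i))
    (c : MLPoly ι) : 𝔼[w] (fun ω => c.randEval z ω ^ 2) = c.normSq := by
  induction c using induction_pderiv with
  | single_empty a =>
    simp only [randEval, eval_single_empty, hw.pi.expectation_const, normSq_single_empty]
  | step j c ihA ihB =>
    have expand (ω : ι → Ω) : c.randEval z ω ^ 2 =
        (c.freePart j).randEval z ω ^ 2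
        + z j (ω j) * (2 * (c.freePart j).randEval z ω * (c.pderiv j).randEval z ω)
        + z j (ω j) ^ 2 * (c.pderiv j).randEval z ω ^ 2 := by
      rw [randEval_eq_freePart_add c z ω j]; ring
    rw [funext expand, expectation_add, expectation_add,
      hw.expectation_pi_mul j (z j)
        fun ω a => by rw [randEval_pderiv_update, randEval_freePart_update],
      hw.expectation_pi_mul j (fun a => z j a ^ 2) fun ω a => by rw [randEval_pderiv_update],
      (hz j).mean_eq_zero, (hz j).mean_sq, ihA, ihB, normSq_eq_freePart_add j c]
    ring

private lemma expectation_randEval_pow_four_eq (hw : IsProbWeight w)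
    (hz : ∀ i, IsStandardized w (z i)) (j : ι) (c : MLPoly ι) :
    𝔼[w] (fun ω => c.randEval z ω ^ 4) =
      𝔼[w] (fun ω => (c.freePart j).randEval z ω ^ 4)
      + 6 * 𝔼[w] (fun ω => (c.freePart j).randEval z ω ^ 2 * (c.pderiv j).randEval z ω ^ 2)
      + expectation w (fun a => z j a ^ 4) * 𝔼[w] (fun ω => (c.pderiv j).randEval z ω ^ 4) := by
  have expand (ω : ι → Ω) : c.randEval z ω ^ 4 =
      (c.freePart j).randEval z ω ^ 4
      + z j (ω j) * (4 * (c.freePart j).randEval z ω ^ 3 * (c.pderiv j).randEval z ω)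
      + z j (ω j) ^ 2 * (6 * ((c.freePart j).randEval z ω ^ 2 * (c.pderiv j).randEval z ω ^ 2))
      + z j (ω j) ^ 3 * (4 * (c.freePart j).randEval z ω * (c.pderiv j).randEval z ω ^ 3)
      + z j (ω j) ^ 4 * (c.pderiv j).randEval z ω ^ 4 := by
    rw [randEval_eq_freePart_add c z ω j]; ring
  rw [funext expand]
  simp only [expectation_add]
  rw [hw.expectation_pi_mul j (z j)
      fun ω a => by rw [randEval_pderiv_update, randEval_freePart_update],
    hw.expectation_pi_mul j (fun a => z j a ^ 2)
      fun ω a => by rw [randEval_pderiv_update, randEval_freePart_update],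
    hw.expectation_pi_mul j (fun a => z j a ^ 3)
      fun ω a => by rw [randEval_pderiv_update, randEval_freePart_update],
    hw.expectation_pi_mul j (fun a => z j a ^ 4) fun ω a => by rw [randEval_pderiv_update],
    (hz j).mean_eq_zero, (hz j).mean_sq, (hz j).mean_pow_three, expectation_const_mul]
  ring

/-- Bonami's hypercontractive inequality. -/
theorem expectation_randEval_pow_four_le (hw : IsProbWeight w)
    (hz : ∀ i, IsStandardized w (z i)) {d : ℕ} {c : MLPoly ι} (hc : c.DegLE d) :
    𝔼[w] (fun ω => c.randEval z ω ^ 4) ≤ 9 ^ d * c.normSq ^ 2 := by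
  induction c using induction_pderiv generalizing d with
  | single_empty a =>
    simp only [randEval, eval_single_empty, hw.pi.expectation_const, normSq_single_empty]
    nlinarith [one_le_pow₀ (M₀ := ℝ) (a := 9) (n := d) (by norm_num), sq_nonneg (a ^ 2)]
  | step j c ihA ihB =>
    rw [expectation_randEval_pow_four_eq hw hz j c, normSq_eq_freePart_add j c]
    have hA := ihA (hc.freePart j)
    have hB : 9 * 𝔼[w] (fun ω => (c.pderiv j).randEval z ω ^ 4) ≤
        9 ^ d * (c.pderiv j).normSq ^ 2 := by
      cases d with
      | zero =>
        simp only [hc.pderiv_eq_zero j, randEval, eval_zero, ne_eq, OfNat.ofNat_ne_zero,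
          not_false_eq_true, zero_pow, hw.pi.expectation_const, mul_zero]
        positivity
      | succ d => linear_combination 9 * ihB (d := d) (hc.pderiv j)
    have hB0 : 0 ≤ 𝔼[w] (fun ω => (c.pderiv j).randEval z ω ^ 4) :=
      hw.pi.expectation_nonneg fun ω => by positivity
    have cross : 3 * 𝔼[w] (fun ω => (c.freePart j).randEval z ω ^ 2
        * (c.pderiv j).randEval z ω ^ 2) ≤
        9 ^ d * ((c.freePart j).normSq * (c.pderiv j).normSq) := by
      have hnA := (c.freePart j).normSq_nonneg
      have hnB := (c.pderiv j).normSq_nonneg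
      have cauchy := hw.pi.sq_expectation_mul_le (fun ω => (c.freePart j).randEval z ω ^ 2)
        fun ω => (c.pderiv j).randEval z ω ^ 2
      simp only [← pow_mul, Nat.reduceMul] at cauchy
      refine (abs_le_of_sq_le_sq' ?_ (by positivity)).2
      linear_combination 9 * cauchy + mul_le_mul hA hB (by positivity) (by positivity)
    have fourth := mul_le_mul_of_nonneg_right (hz j).mean_pow_four_le hB0
    linear_combination hA + 2 * cross + hB + fourth

end Moments

end MLPoly

/-- The weights of a fair coin. -/
noncomputable def coin : Bool → ℝ := fun _ => 1 / 2

lemma expectation_coin (F : Bool → ℝ) : expectation coin F = (F true + F false) / 2 := by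
  simp only [expectation, Fintype.sum_bool, coin]
  ring

lemma isProbWeight_coin : IsProbWeight coin :=
  ⟨fun _ => by norm_num [coin], by norm_num [coin]⟩

lemma chi_mul_self (b : Bool) : chi b * chi b = 1 := by cases b <;> simp [chi]

lemma prod_chi_mul_prod_chi {ι : Type*} [DecidableEq ι] (S T : Finset ι) (x : ι → Bool) :
    (∏ i ∈ S, chi (x i)) * ∏ i ∈ T, chi (x i) = ∏ i ∈ symmDiff S T, chi (x i) := by
  have hcommon : (∏ i ∈ S ∩ T, chi (x i)) * ∏ i ∈ S ∩ T, chi (x i) = 1 := by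
    rw [← prod_mul_distrib]
    exact prod_eq_one fun i _ => chi_mul_self _
  rw [← prod_inter_mul_prod_sdiff S T, ← prod_inter_mul_prod_sdiff T S, inter_comm T S,
    symmDiff_def, sup_eq_union, prod_union disjoint_sdiff_sdiff]
  linear_combination ((∏ i ∈ S \ T, chi (x i)) * ∏ i ∈ T \ S, chi (x i)) * hcommon

namespace MLPoly

lemma isStandardized_chi : IsStandardized coin chi := by
  constructor <;> norm_num [expectation_coin, chi]

/-- The value of `c` at a point of the cube. -/
noncomputable def cubeEval {ι : Type*} [Fintype ι] (c : MLPoly ι) (x : ι → Bool) : ℝ :=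
  c.randEval (fun _ => chi) x

/-- The polynomial `c` without its constant term. -/
def center {ι : Type*} [DecidableEq ι] (c : MLPoly ι) : MLPoly ι := fun S =>
  if S = ∅ then 0 else c S

lemma center_smul {ι : Type*} [DecidableEq ι] (a : ℝ) (c : MLPoly ι) :
    (a • c).center = a • c.center := by
  funext S
  simp [center]

protected lemma DegLE.center {ι : Type*} [DecidableEq ι] {d : ℕ} {c : MLPoly ι}
    (hc : c.DegLE d) : c.center.DegLE d :=
  fun S hS => by rw [MLPoly.center, hc S hS, ite_self]

section CubeEval

variable {ι : Type*} [Fintype ι]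

lemma cubeEval_eq_sum (c : MLPoly ι) (x : ι → Bool) :
    c.cubeEval x = ∑ S, c S * ∏ i ∈ S, chi (x i) := rfl

lemma cubeEval_smul (a : ℝ) (c : MLPoly ι) (x : ι → Bool) :
    (a • c).cubeEval x = a * c.cubeEval x :=
  eval_smul a c _

variable [DecidableEq ι]

lemma expectation_cubeEval (c : MLPoly ι) : 𝔼[coin] c.cubeEval = c ∅ :=
  expectation_randEval isProbWeight_coin (fun _ => isStandardized_chi) c

lemma expectation_cubeEval_sq (c : MLPoly ι) : 𝔼[coin] (fun x => c.cubeEval x ^ 2) = c.normSq :=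
  expectation_randEval_sq isProbWeight_coin (fun _ => isStandardized_chi) c

lemma DegLE.expectation_cubeEval_pow_four_le {d : ℕ} {c : MLPoly ι} (hc : c.DegLE d) :
    𝔼[coin] (fun x => c.cubeEval x ^ 4) ≤ 9 ^ d * c.normSq ^ 2 :=
  expectation_randEval_pow_four_le isProbWeight_coin (fun _ => isStandardized_chi) hc

/-- The product of two polynomials as functions on the cube, that is, modulo `x i ^ 2 = 1`. -/
def cubeMul (c e : MLPoly ι) : MLPoly ι := fun U => ∑ S, c S * e (symmDiff S U)

lemma cubeEval_cubeMul (c e : MLPoly ι) (x : ι → Bool) :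
    (c.cubeMul e).cubeEval x = c.cubeEval x * e.cubeEval x := by
  simp only [cubeEval_eq_sum, cubeMul, sum_mul]
  rw [sum_comm]
  refine sum_congr rfl fun S _ => ?_
  rw [mul_sum, ← Equiv.sum_comp (symmDiff_right_involutive S).toPerm
    (fun U => c S * e (symmDiff S U) * _)]
  refine sum_congr rfl fun T _ => ?_
  rw [Function.Involutive.coe_toPerm, symmDiff_symmDiff_cancel_left, ← prod_chi_mul_prod_chi]
  ring

protected lemma DegLE.cubeMul {d d' : ℕ} {c e : MLPoly ι} (hc : c.DegLE d) (he : e.DegLE d') :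
    (c.cubeMul e).DegLE (d + d') := fun U hU => by
  refine sum_eq_zero fun S _ => ?_
  have hcard : U.card ≤ S.card + (symmDiff S U).card := by
    refine (card_le_card fun i hi => ?_).trans (card_union_le _ _)
    by_cases hS : i ∈ S <;> simp [mem_symmDiff, hS, hi]
  rcases lt_or_ge d S.card with hS | hS
  · rw [hc S hS, zero_mul]
  · rw [he _ (by omega), mul_zero]

/-- Higher moments follow from the fourth by squaring the polynomial repeatedly. -/
theorem DegLE.expectation_cubeEval_pow_two_pow_le (j : ℕ) {d : ℕ} {c : MLPoly ι}
    (hc : c.DegLE d) :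
    𝔼[coin] (fun x => c.cubeEval x ^ 2 ^ (j + 1)) ≤ (9 ^ (d * j) * c.normSq) ^ 2 ^ j := by
  induction j generalizing d c with
  | zero => simp [expectation_cubeEval_sq]
  | succ j ih =>
    have hsq : (c.cubeMul c).normSq ≤ 9 ^ d * c.normSq ^ 2 := by
      rw [← expectation_cubeEval_sq]
      simpa only [cubeEval_cubeMul, ← pow_two, ← pow_mul, Nat.reducePow] using
        hc.expectation_cubeEval_pow_four_le
    have h9 : (1 : ℝ) ≤ 9 ^ d := one_le_pow₀ (by norm_num)
    calc 𝔼[coin] (fun x => c.cubeEval x ^ 2 ^ (j + 1 + 1))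
        = 𝔼[coin] (fun x => (c.cubeMul c).cubeEval x ^ 2 ^ (j + 1)) := by
          simp only [cubeEval_cubeMul, ← pow_two, ← pow_mul, ← pow_succ']
      _ ≤ (9 ^ ((d + d) * j) * (c.cubeMul c).normSq) ^ 2 ^ j := ih (hc.cubeMul hc)
      _ ≤ ((9 ^ (d * (j + 1)) * c.normSq) ^ 2) ^ 2 ^ j := by
          refine pow_le_pow_left₀ (mul_nonneg (by positivity) (normSq_nonneg _)) ?_ _
          calc 9 ^ ((d + d) * j) * (c.cubeMul c).normSq
              ≤ 9 ^ ((d + d) * j) * ((9 ^ d * 9 ^ d) * c.normSq ^ 2) := by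
                gcongr
                exact hsq.trans (by gcongr; exact le_mul_of_one_le_left (by positivity) h9)
            _ = (9 ^ (d * (j + 1)) * c.normSq) ^ 2 := by ring
      _ = (9 ^ (d * (j + 1)) * c.normSq) ^ 2 ^ (j + 1) := by rw [← pow_mul, ← pow_succ']

/-- The variance of `c` at a random point with independent standardized coordinates. -/
def variance (c : MLPoly ι) : ℝ := c.center.normSq

lemma variance_nonneg (c : MLPoly ι) : 0 ≤ c.variance := normSq_nonneg _

lemma variance_smul (a : ℝ) (c : MLPoly ι) : (a • c).variance = a ^ 2 * c.variance := by
  rw [variance, center_smul, normSq_smul, variance]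

lemma eval_eq_add_center (c : MLPoly ι) (z : ι → ℝ) : c.eval z = c ∅ + c.center.eval z := by
  have hc : c = Pi.single ∅ (c ∅) + c.center := by
    funext S
    by_cases hS : S = ∅ <;> simp [center, hS]
  conv_lhs => rw [hc]
  simp only [eval, Pi.add_apply, add_mul, sum_add_distrib]
  rw [← eval, eval_single_empty]

lemma normSq_eq_sq_add_variance (c : MLPoly ι) : c.normSq = c ∅ ^ 2 + c.variance := by
  have hc (S : Finset ι) : c S ^ 2 = (if S = ∅ then c ∅ ^ 2 else 0) + c.center S ^ 2 := by
    by_cases hS : S = ∅ <;> simp [center, hS]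
  rw [variance, normSq, sum_congr rfl fun S _ => hc S, sum_add_distrib, sum_ite_eq',
    if_pos (mem_univ _), normSq]

lemma cubeEval_eq_of_variance_eq_zero {c : MLPoly ι} (h : c.variance = 0) (x : ι → Bool) :
    c.cubeEval x = c ∅ := by
  have hcenter : c.center = 0 := by
    funext S
    have := (sum_eq_zero_iff_of_nonneg fun S _ => sq_nonneg (c.center S)).1 h S (mem_univ S)
    simpa using this
  rw [cubeEval, randEval, eval_eq_add_center, hcenter, eval_zero, add_zero]

/-- Markov's inequality for the moment of order `2 ^ (j + 1)`. -/
lemma DegLE.expectation_deviation_mul_le {d j : ℕ} {c : MLPoly ι} (hc : c.DegLE d)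
    (h0 : c ∅ ≠ 0) (hskew : 2 * 9 ^ (d * j) * c.variance ≤ c ∅ ^ 2) :
    𝔼[coin] (fun x => if c ∅ ^ 2 ≤ c.center.cubeEval x ^ 2 then (1 : ℝ) else 0) * 2 ^ 2 ^ j
      ≤ 1 := by
  have hμ : 0 < c ∅ ^ 2 := by positivity
  have hscale : (9 ^ (d * j) * c.center.normSq) ^ 2 ^ j ≤ (c ∅ ^ 2 / 2) ^ 2 ^ j := by
    refine pow_le_pow_left₀ (mul_nonneg (by positivity) (normSq_nonneg _)) ?_ _
    rw [← variance]
    linarith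
  have markov := isProbWeight_coin.pi.expectation_ite_mul_le
    (F := fun x => (c.center.cubeEval x ^ 2) ^ 2 ^ j) (fun x => by positivity) ((c ∅ ^ 2) ^ 2 ^ j)
  have hmoment := hc.center.expectation_cubeEval_pow_two_pow_le j
  simp only [pow_succ' 2 j, pow_mul _ 2] at hmoment
  simp only [pow_le_pow_iff_left₀ hμ.le (sq_nonneg _) (pow_ne_zero j two_ne_zero)] at markov
  have hscaled := markov.trans (hmoment.trans hscale)
  rw [div_pow, le_div_iff₀ (by positivity), mul_right_comm] at hscaled
  exact le_of_mul_le_mul_right (by rwa [one_mul]) (pow_pos hμ (2 ^ j))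

end CubeEval

/-- The threshold function `x ↦ sign (c x)` on the cube. -/
noncomputable def sgn {ι : Type*} [Fintype ι] (c : MLPoly ι) (x : ι → Bool) : ℝ :=
  Real.sign (c.cubeEval x)

lemma sgn_eq_of_center_sq_lt {ι : Type*} [Fintype ι] [DecidableEq ι] {c : MLPoly ι}
    {x : ι → Bool} (h : c.center.cubeEval x ^ 2 < c ∅ ^ 2) : c.sgn x = Real.sign (c ∅) := by
  have habs := sq_lt_sq.1 h
  have heval : c.cubeEval x = c ∅ + c.center.cubeEval x := eval_eq_add_center c _
  rcases lt_trichotomy (c ∅) 0 with hneg | hzero | hpos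
  · rw [abs_of_neg hneg, abs_lt] at habs
    rw [sgn, Real.sign_of_neg hneg, Real.sign_of_neg (by linarith)]
  · rw [hzero, abs_zero] at habs
    exact absurd (abs_nonneg _) habs.not_ge
  · rw [abs_of_pos hpos, abs_lt] at habs
    rw [sgn, Real.sign_of_pos hpos, Real.sign_of_pos (by linarith)]

lemma sgn_smul {ι : Type*} [Fintype ι] {a : ℝ} (ha : 0 < a) (c : MLPoly ι) :
    (a • c).sgn = c.sgn := by
  funext x
  rw [sgn, sgn, cubeEval_smul]
  rcases lt_trichotomy (c.cubeEval x) 0 with hneg | hzero | hpos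
  · rw [Real.sign_of_neg hneg, Real.sign_of_neg (mul_neg_of_pos_of_neg ha hneg)]
  · rw [hzero, mul_zero]
  · rw [Real.sign_of_pos hpos, Real.sign_of_pos (mul_pos ha hpos)]

end MLPoly

/-- The fractional moment `E_x[s_f(x) ^ α]` of the sensitivity. -/
noncomputable def sensMoment {n : ℕ} (α : ℝ) (f : (Fin n → Bool) → ℝ) : ℝ :=
  𝔼[coin] fun x => (sens f x : ℝ) ^ α

lemma natCast_rpow_le_self {α : ℝ} (h0 : 0 < α) (h1 : α ≤ 1) (s : ℕ) : (s : ℝ) ^ α ≤ s := by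
  rcases s.eq_zero_or_pos with rfl | hs
  · rw [Nat.cast_zero, Real.zero_rpow h0.ne']
  · simpa using Real.rpow_le_rpow_of_exponent_le (show (1 : ℝ) ≤ s by exact_mod_cast hs) h1

section SensMoment

variable {n : ℕ} {α : ℝ} {f : (Fin n → Bool) → ℝ}

lemma flipAt_flipAt (x : Fin n → Bool) (i : Fin n) : flipAt (flipAt x i) i = x := by
  simp [flipAt]

lemma expectation_flipAt (i : Fin n) (F : (Fin n → Bool) → ℝ) :
    𝔼[coin] (fun x => F (flipAt x i)) = 𝔼[coin] F := by
  have hinv : Function.Involutive fun x : Fin n → Bool => flipAt x i := fun x => flipAt_flipAt x i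
  rw [expectation, expectation, ← Equiv.sum_comp hinv.toPerm]
  refine sum_congr rfl fun x _ => ?_
  rw [Function.Involutive.coe_toPerm, flipAt_flipAt]
  simp only [piWeight, coin]

lemma sens_le (f : (Fin n → Bool) → ℝ) (x : Fin n → Bool) : sens f x ≤ n :=
  (card_le_univ _).trans_eq (Fintype.card_fin n)

lemma sens_rpow_le (h0 : 0 < α) (h1 : α ≤ 1) (f : (Fin n → Bool) → ℝ) (x : Fin n → Bool) :
    (sens f x : ℝ) ^ α ≤ n :=
  (natCast_rpow_le_self h0 h1 _).trans (by exact_mod_cast sens_le f x)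

lemma sensMoment_nonneg (α : ℝ) (f : (Fin n → Bool) → ℝ) : 0 ≤ sensMoment α f :=
  isProbWeight_coin.pi.expectation_nonneg fun x => by positivity

lemma sensMoment_le_card (h0 : 0 < α) (h1 : α ≤ 1) (f : (Fin n → Bool) → ℝ) :
    sensMoment α f ≤ n :=
  (isProbWeight_coin.pi.expectation_mono (sens_rpow_le h0 h1 f)).trans_eq
    (isProbWeight_coin.pi.expectation_const _)

lemma sens_eq_zero {x : Fin n → Bool} (h : ∀ i, f (flipAt x i) = f x) : sens f x = 0 := by
  simp [sens, h]

lemma sensMoment_eq_zero_of_const (h0 : 0 < α) {k : ℝ} (h : ∀ x, f x = k) :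
    sensMoment α f = 0 := by
  have hsens (x : Fin n → Bool) : sens f x = 0 := sens_eq_zero fun i => by rw [h, h]
  simp only [sensMoment, hsens, Nat.cast_zero, Real.zero_rpow h0.ne',
    isProbWeight_coin.pi.expectation_const]

lemma MLPoly.sensMoment_sgn_of_variance_eq_zero (h0 : 0 < α) {c : MLPoly (Fin n)}
    (h : c.variance = 0) : sensMoment α c.sgn = 0 :=
  sensMoment_eq_zero_of_const h0 fun x => by
    rw [MLPoly.sgn, MLPoly.cubeEval_eq_of_variance_eq_zero h]

lemma sensMoment_le_of_eq_const_off (h0 : 0 < α) (h1 : α ≤ 1) {B : (Fin n → Bool) → Prop} {k : ℝ}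
    (hf : ∀ x, ¬ B x → f x = k) :
    sensMoment α f ≤ n * (n + 1) * 𝔼[coin] (fun x => if B x then (1 : ℝ) else 0) := by
  set bad : (Fin n → Bool) → ℝ := fun x => if B x then 1 else 0
  have bad_nonneg (x : Fin n → Bool) : 0 ≤ bad x := by positivity
  have pointwise (x : Fin n → Bool) :
      (sens f x : ℝ) ^ α ≤ n * (bad x + ∑ i, bad (flipAt x i)) := by
    have hsum : 0 ≤ ∑ i, bad (flipAt x i) := sum_nonneg fun i _ => bad_nonneg _
    by_cases hx : B x ∨ ∃ i, B (flipAt x i)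
    · have hone : 1 ≤ bad x + ∑ i, bad (flipAt x i) := by
        rcases hx with hx | ⟨i, hi⟩
        · simpa only [bad, if_pos hx] using le_add_of_nonneg_right hsum
        · have := single_le_sum (f := fun i => bad (flipAt x i)) (fun i _ => bad_nonneg _)
            (mem_univ i)
          simp only [bad, hi, if_true] at this
          linarith [bad_nonneg x]
      exact (sens_rpow_le h0 h1 f x).trans (le_mul_of_one_le_right n.cast_nonneg hone)
    · push Not at hx
      rw [sens_eq_zero fun i => by rw [hf _ (hx.2 i), hf x hx.1], Nat.cast_zero,
        Real.zero_rpow h0.ne']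
      exact mul_nonneg n.cast_nonneg (add_nonneg (bad_nonneg x) hsum)
  refine (isProbWeight_coin.pi.expectation_mono pointwise).trans_eq ?_
  simp only [expectation_const_mul, expectation_add, expectation_sum, expectation_flipAt,
    sum_const, card_univ, Fintype.card_fin, nsmul_eq_mul]
  ring

theorem MLPoly.DegLE.sensMoment_sgn_le_one_of_skew (h0 : 0 < α) (h1 : α ≤ 1) {d j : ℕ}
    {c : MLPoly (Fin n)} (hc : c.DegLE d) (hskew : 2 * 9 ^ (d * j) * c.variance ≤ c ∅ ^ 2)
    (hn : (n : ℝ) * (n + 1) ≤ 2 ^ 2 ^ j) : sensMoment α c.sgn ≤ 1 := by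
  by_cases hzero : c ∅ = 0
  · have hvar : c.variance = 0 := by
      rw [hzero, zero_pow two_ne_zero] at hskew
      exact le_antisymm (nonpos_of_mul_nonpos_right hskew (by positivity)) c.variance_nonneg
    rw [sensMoment_sgn_of_variance_eq_zero h0 hvar]
    exact zero_le_one
  · have hoff := sensMoment_le_of_eq_const_off h0 h1 (f := c.sgn)
      fun x hx => sgn_eq_of_center_sq_lt (not_le.1 hx)
    refine hoff.trans (le_trans ?_ (hc.expectation_deviation_mul_le hzero hskew))
    rw [mul_comm]
    gcongr
    exact isProbWeight_coin.pi.expectation_nonneg fun x => by positivity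

end SensMoment

namespace MLPoly

/-- The total influence of `c`, summed over the monomials instead of the variables. -/
def totalInfluence {ι : Type*} [Fintype ι] (c : MLPoly ι) : ℝ := ∑ S, (S.card : ℝ) * c S ^ 2

lemma totalInfluence_nonneg {ι : Type*} [Fintype ι] (c : MLPoly ι) : 0 ≤ c.totalInfluence :=
  sum_nonneg fun S _ => by positivity

section Restriction

variable {ι : Type*} [DecidableEq ι]

/-- The polynomial obtained from `c` by giving the variable `j` the value `chi b`. -/
noncomputable def restrict (j : ι) (b : Bool) (c : MLPoly ι) : MLPoly ι :=
  c.freePart j + chi b • c.pderiv j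

protected lemma DegLE.restrict {d : ℕ} {c : MLPoly ι} (hc : c.DegLE d) (j : ι) (b : Bool) :
    (c.restrict j b).DegLE d := fun S hS => by
  rw [MLPoly.restrict, Pi.add_apply, Pi.smul_apply, hc.freePart j S hS,
    hc.pderiv j S (by omega), smul_zero, add_zero]

variable [Fintype ι]

lemma cubeEval_restrict (j : ι) (b : Bool) (c : MLPoly ι) (x : ι → Bool) :
    (c.restrict j b).cubeEval x = c.cubeEval (Function.update x j b) := by
  rw [cubeEval, cubeEval, randEval_eq_freePart_add c _ _ j, randEval_freePart_update,
    randEval_pderiv_update, Function.update_self]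
  simp only [randEval, eval, restrict, Pi.add_apply, Pi.smul_apply, smul_eq_mul, add_mul,
    sum_add_distrib, mul_sum, mul_assoc]

lemma sgn_restrict (j : ι) (b : Bool) (c : MLPoly ι) :
    (c.restrict j b).sgn = fun x => c.sgn (Function.update x j b) := by
  funext x
  rw [sgn, cubeEval_restrict, sgn]

lemma expectation_normSq_restrict (j : ι) (c : MLPoly ι) :
    expectation coin (fun b => (c.restrict j b).normSq) = c.normSq := by
  rw [normSq_eq_freePart_add j c, expectation_coin]
  simp only [normSq, restrict, chi, Pi.add_apply, Pi.smul_apply, smul_eq_mul, if_true,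
    Bool.false_eq_true, if_false]
  rw [← sum_add_distrib, ← sum_add_distrib, sum_div]
  exact sum_congr rfl fun S _ => by ring

lemma expectation_cubeEval_restrict_pow (k : ℕ) (j : ι) (c : MLPoly ι) :
    expectation coin (fun b => 𝔼[coin] fun x => (c.restrict j b).cubeEval x ^ k) =
      𝔼[coin] (fun x => c.cubeEval x ^ k) := by
  rw [isProbWeight_coin.expectation_pi_resample j, expectation_comm]
  simp only [cubeEval_restrict]

lemma sum_normSq_pderiv (c : MLPoly ι) : ∑ j, (c.pderiv j).normSq = c.totalInfluence := by
  have h (j : ι) : (c.pderiv j).normSq = ∑ S, if j ∈ S then c S ^ 2 else 0 := by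
    rw [sum_finset_eq_add j, normSq, ← sum_add_distrib]
    refine sum_congr rfl fun S _ => ?_
    by_cases hj : j ∈ S <;> simp [pderiv, hj]
  simp only [h, totalInfluence]
  rw [sum_comm]
  simp

lemma expectation_totalInfluence_restrict (j : ι) (c : MLPoly ι) :
    expectation coin (fun b => (c.restrict j b).totalInfluence) =
      c.totalInfluence - (c.pderiv j).normSq := by
  rw [expectation_coin, totalInfluence, totalInfluence, totalInfluence, normSq,
    sum_finset_eq_add j (fun S => (S.card : ℝ) * c S ^ 2), ← sum_add_distrib, ← sum_add_distrib,
    ← sum_sub_distrib, sum_div]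
  refine sum_congr rfl fun S _ => ?_
  simp only [restrict, freePart, pderiv, chi, Pi.add_apply, Pi.smul_apply, smul_eq_mul, if_true,
    Bool.false_eq_true, if_false]
  split_ifs with hj
  · ring
  · rw [card_insert_of_notMem hj]
    push_cast
    ring

lemma variance_le_totalInfluence (c : MLPoly ι) : c.variance ≤ c.totalInfluence := by
  refine sum_le_sum fun S _ => ?_
  rw [center]
  split_ifs with hS
  · simp [hS]
  · have hcard : (1 : ℝ) ≤ S.card := by
      exact_mod_cast card_pos.2 (nonempty_iff_ne_empty.2 hS)
    exact le_mul_of_one_le_left (sq_nonneg _) hcard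

lemma DegLE.totalInfluence_le {d : ℕ} {c : MLPoly ι} (hc : c.DegLE d) :
    c.totalInfluence ≤ d * c.variance := by
  rw [totalInfluence, variance, normSq, mul_sum]
  refine sum_le_sum fun S _ => ?_
  rw [center]
  split_ifs with hS
  · simp [hS]
  · rcases lt_or_ge d S.card with hd | hd
    · simp [hc S hd]
    · gcongr

/-- Every variable has influence at most `τ`, relative to the variance. -/
def IsRegular (τ : ℝ) (c : MLPoly ι) : Prop := ∀ j, (c.pderiv j).normSq ≤ τ * c.variance

end Restriction

section Potential

variable {ι : Type*} [DecidableEq ι] [Fintype ι] {d t : ℕ} {K τ : ℝ} {c : MLPoly ι}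

/-- An upper bound for the probability that a random restriction of `c` has squared norm below
`1 / 2`. This is the Paley–Zygmund inequality in the form of a quantity that averages exactly under
restrictions. -/
noncomputable def smallNormBound (d : ℕ) (c : MLPoly ι) : ℝ :=
  1 - (c.normSq - 1 / 2) / 9 ^ d + 𝔼[coin] (fun x => c.cubeEval x ^ 4) / (4 * (9 ^ d) ^ 2)

lemma normSq_sq_le (c : MLPoly ι) : c.normSq ^ 2 ≤ 𝔼[coin] fun x => c.cubeEval x ^ 4 := by
  have h := isProbWeight_coin.pi.sq_expectation_mul_le (fun x => c.cubeEval x ^ 2) fun _ => 1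
  simpa only [mul_one, one_pow, isProbWeight_coin.pi.expectation_const, expectation_cubeEval_sq,
    ← pow_mul, Nat.reduceMul] using h

lemma smallNormBound_nonneg (d : ℕ) (c : MLPoly ι) : 0 ≤ c.smallNormBound d := by
  calc (0 : ℝ) ≤ (1 - c.normSq / (2 * 9 ^ d)) ^ 2 + 1 / (2 * 9 ^ d) := by positivity
    _ = 1 - (c.normSq - 1 / 2) / 9 ^ d + c.normSq ^ 2 / (4 * (9 ^ d) ^ 2) := by field_simp; ring
    _ ≤ c.smallNormBound d := by
      rw [smallNormBound]
      gcongr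
      exact normSq_sq_le c

lemma one_le_smallNormBound (d : ℕ) (hc : c.normSq < 1 / 2) : 1 ≤ c.smallNormBound d := by
  have hneg : (c.normSq - 1 / 2) / 9 ^ d ≤ 0 :=
    div_nonpos_of_nonpos_of_nonneg (by linarith) (by positivity)
  have hpos : 0 ≤ 𝔼[coin] (fun x => c.cubeEval x ^ 4) / (4 * (9 ^ d) ^ 2) :=
    div_nonneg ((sq_nonneg _).trans (normSq_sq_le c)) (by positivity)
  rw [smallNormBound]
  linarith

lemma expectation_smallNormBound_restrict (d : ℕ) (j : ι) (c : MLPoly ι) :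
    expectation coin (fun b => (c.restrict j b).smallNormBound d) = c.smallNormBound d := by
  simp only [smallNormBound, div_eq_mul_inv, expectation_add, expectation_sub,
    expectation_mul_const, isProbWeight_coin.expectation_const, expectation_normSq_restrict,
    expectation_cubeEval_restrict_pow]

lemma DegLE.smallNormBound_le (hc : c.DegLE d) (h1 : c.normSq = 1) :
    c.smallNormBound d ≤ 1 - 1 / (4 * 9 ^ d) := by
  have h4 := hc.expectation_cubeEval_pow_four_le
  rw [h1, one_pow, mul_one] at h4
  calc c.smallNormBound d ≤ 1 - (1 - 1 / 2) / 9 ^ d + 9 ^ d / (4 * (9 ^ d) ^ 2) := by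
        rw [smallNormBound, h1]
        gcongr
    _ = 1 - 1 / (4 * 9 ^ d) := by field_simp; ring

/-- An upper bound for the probability that a decision tree of depth `t`, which queries a variable
of relative influence above `τ` as long as there is one, ends in a polynomial that is neither
regular nor skew. -/
noncomputable def treePotential (d : ℕ) (K τ : ℝ) (t : ℕ) (c : MLPoly ι) : ℝ :=
  2 * (K + 1) * (1 - τ / d) ^ t * c.totalInfluence + c.smallNormBound d

lemma treePotential_nonneg (hK : 0 ≤ K) (hτ : τ / d ≤ 1) (t : ℕ) (c : MLPoly ι) :
    0 ≤ c.treePotential d K τ t :=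
  add_nonneg (mul_nonneg (mul_nonneg (by linarith) (pow_nonneg (by linarith) t))
    c.totalInfluence_nonneg) (c.smallNormBound_nonneg d)

lemma one_le_treePotential_zero (hK : 0 ≤ K) (hskew : c ∅ ^ 2 < K * c.variance) :
    1 ≤ c.treePotential d K τ 0 := by
  rw [treePotential, pow_zero, mul_one]
  rcases lt_or_ge c.normSq (1 / 2) with h | h
  · exact le_add_of_nonneg_of_le (mul_nonneg (by linarith) c.totalInfluence_nonneg)
      (one_le_smallNormBound d h)
  · refine le_add_of_le_of_nonneg ?_ (c.smallNormBound_nonneg d)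
    have hvar := mul_le_mul_of_nonneg_left c.variance_le_totalInfluence (add_nonneg hK zero_le_one)
    linarith [c.normSq_eq_sq_add_variance]

lemma DegLE.expectation_treePotential_restrict_le (hd : 1 ≤ d) (hc : c.DegLE d) (hK : 0 ≤ K)
    (hτ0 : 0 ≤ τ) (hτ : τ / d ≤ 1) {j : ι} (hj : τ * c.variance ≤ (c.pderiv j).normSq) :
    expectation coin (fun b => (c.restrict j b).treePotential d K τ t) ≤
      c.treePotential d K τ (t + 1) := by
  have hd0 : (0 : ℝ) < d := by exact_mod_cast hd
  have hdecay : c.totalInfluence - (c.pderiv j).normSq ≤ (1 - τ / d) * c.totalInfluence := by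
    have := mul_le_mul_of_nonneg_left hc.totalInfluence_le (div_nonneg hτ0 hd0.le)
    rw [← mul_assoc, div_mul_cancel₀ _ hd0.ne'] at this
    linarith
  have hfactor : 0 ≤ 2 * (K + 1) * (1 - τ / d) ^ t :=
    mul_nonneg (by linarith) (pow_nonneg (by linarith) t)
  simp only [treePotential, expectation_add, expectation_const_mul,
    expectation_smallNormBound_restrict, expectation_totalInfluence_restrict]
  rw [pow_succ, ← mul_assoc, mul_assoc _ (1 - τ / d)]
  exact add_le_add (mul_le_mul_of_nonneg_left hdecay hfactor) le_rfl

end Potential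

end MLPoly

section SensRestriction

variable {n : ℕ}

lemma update_flipAt_of_ne (x : Fin n → Bool) {i j : Fin n} (h : i ≠ j) (b : Bool) :
    Function.update (flipAt x i) j b = flipAt (Function.update x j b) i := by
  rw [flipAt, flipAt, Function.update_comm h.symm, Function.update_of_ne h]

lemma sens_comp_update_update (f : (Fin n → Bool) → ℝ) (j : Fin n) (b b' : Bool)
    (x : Fin n → Bool) :
    sens (fun y => f (Function.update y j b)) (Function.update x j b') =
      sens (fun y => f (Function.update y j b)) x := by
  rw [sens, sens]
  congr 1
  ext i
  simp only [mem_filter, mem_univ, true_and]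
  by_cases hij : i = j
  · simp [hij, flipAt]
  · simp [← update_flipAt_of_ne _ hij]

lemma sens_le_sens_comp_update_add_one (f : (Fin n → Bool) → ℝ) (j : Fin n) (x : Fin n → Bool) :
    sens f x ≤ sens (fun y => f (Function.update y j (x j))) x + 1 := by
  refine (card_le_card fun i hi => ?_).trans (card_insert_le j _)
  by_cases hij : i = j
  · exact mem_insert.2 (Or.inl hij)
  · simpa [update_flipAt_of_ne _ hij, hij] using hi

variable {α : ℝ}

lemma sensMoment_le_one_add_expectation_update (h0 : 0 < α) (h1 : α ≤ 1) (j : Fin n)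
    (f : (Fin n → Bool) → ℝ) :
    sensMoment α f ≤
      1 + expectation coin fun b => sensMoment α fun x => f (Function.update x j b) := by
  have pointwise (x : Fin n → Bool) : (sens f x : ℝ) ^ α ≤
      1 + (sens (fun y => f (Function.update y j (x j))) x : ℝ) ^ α := by
    have hs : (sens f x : ℝ) ≤ 1 + sens (fun y => f (Function.update y j (x j))) x := by
      rw [add_comm]
      exact_mod_cast sens_le_sens_comp_update_add_one f j x
    calc (sens f x : ℝ) ^ α ≤ (1 + sens (fun y => f (Function.update y j (x j))) x : ℝ) ^ α :=
          Real.rpow_le_rpow (by positivity) hs h0.le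
      _ ≤ 1 ^ α + (sens (fun y => f (Function.update y j (x j))) x : ℝ) ^ α :=
          Real.rpow_add_le_add_rpow zero_le_one (by positivity) h0.le h1
      _ = _ := by rw [Real.one_rpow]
  refine (isProbWeight_coin.pi.expectation_mono pointwise).trans_eq ?_
  rw [expectation_add, isProbWeight_coin.pi.expectation_const,
    isProbWeight_coin.expectation_pi_resample j, expectation_comm]
  simp only [Function.update_self, sens_comp_update_update, sensMoment]

namespace MLPoly

variable {d : ℕ} {K M R τ : ℝ}

/-- Query influential variables until the polynomial is regular or skew, or the depth is exhausted;
the potential bounds the probability of the last event. -/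
lemma DegLE.sensMoment_sgn_le_add_treePotential (h0 : 0 < α) (h1 : α ≤ 1) (hd : 1 ≤ d)
    (hM0 : 0 ≤ M) (hR0 : 0 ≤ R) (hτ0 : 0 ≤ τ) (hτ1 : τ ≤ 1) (hK : 0 ≤ K)
    (hM : ∀ c : MLPoly (Fin n), c.DegLE d → sensMoment α c.sgn ≤ M)
    (hR : ∀ c : MLPoly (Fin n), c.DegLE d → c.IsRegular τ → sensMoment α c.sgn ≤ R)
    (hskew : ∀ c : MLPoly (Fin n), c.DegLE d → K * c.variance ≤ c ∅ ^ 2 → sensMoment α c.sgn ≤ 1)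
    (t : ℕ) {c : MLPoly (Fin n)} (hc : c.DegLE d) :
    sensMoment α c.sgn ≤ t + 1 + R + M * c.treePotential d K τ t := by
  have hτd : τ / d ≤ 1 := div_le_one_of_le₀ (hτ1.trans (by exact_mod_cast hd)) d.cast_nonneg
  induction t generalizing c with
  | zero =>
    have hpot := mul_nonneg hM0 (treePotential_nonneg hK hτd 0 c)
    rw [Nat.cast_zero, zero_add]
    rcases le_or_gt (K * c.variance) (c ∅ ^ 2) with h | h
    · linarith [hskew c hc h]
    · linarith [hM c hc,
        le_mul_of_one_le_right hM0 (one_le_treePotential_zero (d := d) (τ := τ) hK h)]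
  | succ t ih =>
    push_cast
    by_cases hreg : c.IsRegular τ
    · have hpot := mul_nonneg hM0 (treePotential_nonneg hK hτd (t + 1) c)
      linarith [hR c hc hreg, t.cast_nonneg (α := ℝ)]
    · obtain ⟨j, hj⟩ := not_forall.1 hreg
      have hquery := sensMoment_le_one_add_expectation_update h0 h1 j c.sgn
      have hleaf := isProbWeight_coin.expectation_mono fun b => ih (hc.restrict j b)
      have hpot := mul_le_mul_of_nonneg_left
        (hc.expectation_treePotential_restrict_le (t := t) hd hK hτ0 hτd (not_le.1 hj).le) hM0
      simp only [sgn_restrict, expectation_add, isProbWeight_coin.expectation_const,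
        expectation_const_mul] at hleaf
      linarith

theorem DegLE.sensMoment_sgn_le_of_decisionTree (h0 : 0 < α) (h1 : α ≤ 1) (hd : 1 ≤ d)
    (hM0 : 0 ≤ M) (hR0 : 0 ≤ R) (hτ0 : 0 ≤ τ) (hτ1 : τ ≤ 1) (hK : 0 ≤ K)
    (hM : ∀ c : MLPoly (Fin n), c.DegLE d → sensMoment α c.sgn ≤ M)
    (hR : ∀ c : MLPoly (Fin n), c.DegLE d → c.IsRegular τ → sensMoment α c.sgn ≤ R)
    (hskew : ∀ c : MLPoly (Fin n), c.DegLE d → K * c.variance ≤ c ∅ ^ 2 → sensMoment α c.sgn ≤ 1)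
    {t : ℕ} (ht : 2 * (K + 1) * (1 - τ / d) ^ t * d ≤ 1 / (8 * 9 ^ d))
    {c : MLPoly (Fin n)} (hc : c.DegLE d) :
    sensMoment α c.sgn ≤ t + 1 + R + M * (1 - 1 / (8 * 9 ^ d)) := by
  wlog hnorm : c.normSq = 1 generalizing c
  · rcases c.normSq_nonneg.eq_or_lt with hzero | hpos
    · have hvar : c.variance = 0 := by
        linarith [c.normSq_eq_sq_add_variance, c.variance_nonneg, sq_nonneg (c ∅)]
      have h9 : 1 / (8 * 9 ^ d) ≤ (1 : ℝ) :=
        div_le_one_of_le₀ (by linarith [one_le_pow₀ (M₀ := ℝ) (a := 9) (n := d) (by norm_num)])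
          (by positivity)
      rw [sensMoment_sgn_of_variance_eq_zero h0 hvar]
      have := mul_nonneg hM0 (sub_nonneg.2 h9)
      positivity
    · rw [← sgn_smul (inv_pos.2 (Real.sqrt_pos.2 hpos)) c]
      refine this (hc.smul _) ?_
      rw [normSq_smul, inv_pow, Real.sq_sqrt hpos.le, inv_mul_cancel₀ hpos.ne']
  have hpot : c.treePotential d K τ t ≤ 1 - 1 / (8 * 9 ^ d) := by
    have hinf : c.totalInfluence ≤ d := by
      refine hc.totalInfluence_le.trans (mul_le_of_le_one_right d.cast_nonneg ?_)
      linarith [c.normSq_eq_sq_add_variance, sq_nonneg (c ∅)]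
    have hτd : τ / d ≤ 1 := div_le_one_of_le₀ (hτ1.trans (by exact_mod_cast hd)) d.cast_nonneg
    have hfactor : 0 ≤ 2 * (K + 1) * (1 - τ / d) ^ t :=
      mul_nonneg (by linarith) (pow_nonneg (by linarith) t)
    have hsplit : 1 / (4 * 9 ^ d) = 2 * (1 / (8 * 9 ^ d) : ℝ) := by ring
    rw [treePotential]
    linarith [hc.smallNormBound_le hnorm, (mul_le_mul_of_nonneg_left hinf hfactor).trans ht]
  refine (hc.sensMoment_sgn_le_add_treePotential h0 h1 hd hM0 hR0 hτ0 hτ1 hK hM hR hskew t).trans ?_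
  gcongr

end MLPoly

end SensRestriction

/-- The function `Ψ` is approximated around every point by a polynomial of degree at most three, up
to an error of `L` times the fourth powers of the increments. -/
def HasCubicApprox (L : ℝ) (Ψ : ℝ → ℝ → ℝ) : Prop :=
  ∀ a b, ∃ p : MvPolynomial (Fin 2) ℝ, p.totalDegree ≤ 3 ∧
    ∀ x : Fin 2 → ℝ, |Ψ (a + x 0) (b + x 1) - p.eval x| ≤ L * (x 0 ^ 4 + x 1 ^ 4)

/-- A smooth surrogate for the indicator of `a ^ 2 ≤ b ^ 2`, with values in `[0, 1]`. -/
noncomputable def ratioTest (a b : ℝ) : ℝ := b ^ 2 / (a ^ 2 + b ^ 2 + 1)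

lemma ratioTest_nonneg (a b : ℝ) : 0 ≤ ratioTest a b := by unfold ratioTest; positivity

lemma ratioTest_le_one (a b : ℝ) : ratioTest a b ≤ 1 := by
  rw [ratioTest, div_le_one (by positivity)]
  linarith [sq_nonneg a]

section Taylor

variable {l m y g β δ : ℝ}

/-- The first terms of the expansion of `(β + y + g) / (1 + (l + m))`, where `l, y` have order `δ`
and `m, g` have order `δ ^ 2`. -/
private lemma abs_expansion_terms_le (hδ : 0 ≤ δ) (hl : |l| ≤ 2 * δ) (hm : |m| ≤ δ ^ 2)
    (hy : |y| ≤ 2 * δ) (hg : |g| ≤ δ ^ 2) (hβ : |β| ≤ 1) :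
    |y - l * β| ≤ 4 * δ ∧ |g - l * (y - l * β) - m * β| ≤ 10 * δ ^ 2 ∧
      |l * (g - l * (y - l * β) - m * β) + m * (y - l * β)| ≤ 24 * δ ^ 3 := by
  have first : |y - l * β| ≤ 4 * δ := by
    have := mul_le_mul hl hβ (abs_nonneg _) (by positivity)
    rw [← abs_mul] at this
    linarith [abs_sub y (l * β)]
  have second : |g - l * (y - l * β) - m * β| ≤ 10 * δ ^ 2 := by
    have h₁ := mul_le_mul hl first (abs_nonneg _) (by positivity)
    have h₂ := mul_le_mul hm hβ (abs_nonneg _) (by positivity)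
    rw [← abs_mul] at h₁ h₂
    linarith [abs_sub (g - l * (y - l * β)) (m * β), abs_sub g (l * (y - l * β))]
  refine ⟨first, second, ?_⟩
  have h₁ := mul_le_mul hl second (abs_nonneg _) (by positivity)
  have h₂ := mul_le_mul hm first (abs_nonneg _) (by positivity)
  rw [← abs_mul] at h₁ h₂
  linarith [abs_add_le (l * (g - l * (y - l * β) - m * β)) (m * (y - l * β))]

private lemma abs_sub_expansion_le_of_le_one (hδ : 0 ≤ δ) (hδ1 : δ ≤ 1) {k₀ k₁ k₂ k₃ : ℝ}
    (hl : |l| ≤ 2 * δ) (hm : |m| ≤ δ ^ 2) (hpos : 1 ≤ 4 * (1 + (l + m)))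
    (hk₁ : k₁ = y - l * k₀) (hk₂ : k₂ = g - l * k₁ - m * k₀) (hk₃ : k₃ = l * k₂ + m * k₁)
    (hk₂' : |k₂| ≤ 10 * δ ^ 2) (hk₃' : |k₃| ≤ 24 * δ ^ 3) :
    |(k₀ + y + g) / (1 + (l + m)) - (k₀ + k₁ + k₂ - k₃)| ≤ 328 * δ ^ 4 := by
  have hden : 0 < 1 + (l + m) := by linarith
  have remainder : (k₀ + y + g) / (1 + (l + m)) - (k₀ + k₁ + k₂ - k₃) =
      (l * k₃ - m * k₂ + m * k₃) / (1 + (l + m)) := by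
    rw [eq_div_iff hden.ne', sub_mul, div_mul_cancel₀ _ hden.ne', hk₃, hk₂, hk₁]
    ring
  rw [remainder, abs_div, abs_of_pos hden, div_le_iff₀ hden]
  have h₁ := mul_le_mul hl hk₃' (abs_nonneg _) (by positivity)
  have h₂ := mul_le_mul hm hk₂' (abs_nonneg _) (by positivity)
  have h₃ := mul_le_mul hm hk₃' (abs_nonneg _) (by positivity)
  rw [← abs_mul] at h₁ h₂ h₃
  have h₄ : δ ^ 4 * δ ≤ δ ^ 4 * 1 := mul_le_mul_of_nonneg_left hδ1 (by positivity)
  have numerator : |l * k₃ - m * k₂ + m * k₃| ≤ 82 * δ ^ 4 := by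
    linear_combination abs_add_le (l * k₃ - m * k₂) (m * k₃) + abs_sub (l * k₃) (m * k₂) + h₁
      + h₂ + h₃ + 24 * h₄
  linear_combination numerator + 82 * δ ^ 4 * hpos

private lemma abs_sub_expansion_le (hδ : 0 ≤ δ) {k₀ k₁ k₂ k₃ : ℝ} (hl : |l| ≤ 2 * δ)
    (hm : |m| ≤ δ ^ 2) (hy : |y| ≤ 2 * δ) (hg : |g| ≤ δ ^ 2) (hk₀ : |k₀| ≤ 1)
    (hden : 1 ≤ (2 + 2 * δ ^ 2) * (1 + (l + m)))
    (hk₁ : k₁ = y - l * k₀) (hk₂ : k₂ = g - l * k₁ - m * k₀) (hk₃ : k₃ = l * k₂ + m * k₁)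
    (hquot : |(k₀ + y + g) / (1 + (l + m))| ≤ 1) :
    |(k₀ + y + g) / (1 + (l + m)) - (k₀ + k₁ + k₂ - k₃)| ≤ 328 * δ ^ 4 := by
  obtain ⟨h₁, h₂, h₃⟩ := abs_expansion_terms_le hδ hl hm hy hg hk₀
  rw [← hk₁] at h₁ h₂ h₃
  rw [← hk₂] at h₂ h₃
  rw [← hk₃] at h₃
  obtain hδ1 | hδ1 := le_total δ 1
  · have hpos : 0 < 1 + (l + m) := pos_of_mul_pos_right (one_pos.trans_le hden) (by positivity)
    refine abs_sub_expansion_le_of_le_one hδ hδ1 hl hm ?_ hk₁ hk₂ hk₃ h₂ h₃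
    exact hden.trans (mul_le_mul_of_nonneg_right (by nlinarith) hpos.le)
  · have p₀ : 1 ≤ δ ^ 4 := one_le_pow₀ hδ1
    have p₁ : δ ≤ δ ^ 4 := le_self_pow₀ hδ1 (by norm_num)
    have p₂ : δ ^ 2 ≤ δ ^ 4 := pow_le_pow_right₀ hδ1 (by norm_num)
    have p₃ : δ ^ 3 ≤ δ ^ 4 := pow_le_pow_right₀ hδ1 (by norm_num)
    rw [abs_le] at hk₀ h₁ h₂ h₃ hquot ⊢
    constructor <;> linarith [hk₀.1, hk₀.2, h₁.1, h₁.2, h₂.1, h₂.2, h₃.1, h₃.2]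

end Taylor

/-- The coefficients are those of the quotient of `(b + t) ^ 2` and `(a + s) ^ 2 + (b + t) ^ 2 + 1`
after both have been divided by `D = a ^ 2 + b ^ 2 + 1`. -/
private lemma abs_ratioTest_sub_cubic_le {a b s t D l m y g k₁ k₂ : ℝ}
    (hD : D = a ^ 2 + b ^ 2 + 1) (hl : l = 2 * (a * s + b * t) / D)
    (hm : m = (s ^ 2 + t ^ 2) / D) (hy : y = 2 * (b * t) / D) (hg : g = t ^ 2 / D)
    (hk₁ : k₁ = y - l * (b ^ 2 / D)) (hk₂ : k₂ = g - l * k₁ - m * (b ^ 2 / D)) :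
    |ratioTest (a + s) (b + t) - (b ^ 2 / D + k₁ + k₂ - (l * k₂ + m * k₁))| ≤
      656 * (s ^ 4 + t ^ 4) := by
  have hD1 : 1 ≤ D := by rw [hD]; nlinarith
  have hD0 : 0 < D := one_pos.trans_le hD1
  set δ := √(s ^ 2 + t ^ 2)
  have hδ2 : δ ^ 2 = s ^ 2 + t ^ 2 := Real.sq_sqrt (by positivity)
  have hδ4 : 328 * δ ^ 4 ≤ 656 * (s ^ 4 + t ^ 4) := by
    rw [pow_mul δ 2 2, hδ2]; nlinarith [sq_nonneg (s ^ 2 - t ^ 2)]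
  have hl' : |l| ≤ 2 * δ := by
    refine abs_le_of_sq_le_sq ?_ (by positivity)
    rw [hl, mul_pow 2 δ, hδ2, div_pow, div_le_iff₀ (by positivity)]
    have : a ^ 2 + b ^ 2 ≤ D ^ 2 := by nlinarith
    nlinarith [sq_nonneg (a * t - b * s), mul_le_mul_of_nonneg_left this (sq_nonneg δ)]
  have hy' : |y| ≤ 2 * δ := by
    refine abs_le_of_sq_le_sq ?_ (by positivity)
    rw [hy, mul_pow 2 δ, hδ2, div_pow, div_le_iff₀ (by positivity)]
    have : b ^ 2 ≤ D ^ 2 := by nlinarith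
    nlinarith [mul_le_mul_of_nonneg_left this (sq_nonneg t), mul_nonneg (sq_nonneg s) (sq_nonneg D)]
  have hm' : |m| ≤ δ ^ 2 := by
    rw [hm, hδ2, abs_of_nonneg (by positivity)]
    exact div_le_self (by positivity) hD1
  have hg' : |g| ≤ δ ^ 2 := by
    rw [hg, hδ2, abs_of_nonneg (by positivity)]
    exact (div_le_self (by positivity) hD1).trans (le_add_of_nonneg_left (sq_nonneg s))
  have hβ : |b ^ 2 / D| ≤ 1 := by
    rw [abs_of_nonneg (by positivity), div_le_one hD0, hD]; linarith [sq_nonneg a]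
  have denominator : 1 + (l + m) = ((a + s) ^ 2 + (b + t) ^ 2 + 1) / D := by
    rw [hl, hm]; field_simp; rw [hD]; ring
  have quotient : (b ^ 2 / D + y + g) / (1 + (l + m)) = ratioTest (a + s) (b + t) := by
    rw [denominator, hy, hg, ratioTest]; field_simp; ring
  have hden : 1 ≤ (2 + 2 * δ ^ 2) * (1 + (l + m)) := by
    rw [denominator, hδ2, mul_div_assoc', le_div_iff₀ hD0, hD]
    nlinarith [sq_nonneg (a + 2 * s), sq_nonneg (b + 2 * t),
      mul_nonneg (add_nonneg (sq_nonneg s) (sq_nonneg t))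
        (add_nonneg (sq_nonneg (a + s)) (sq_nonneg (b + t)))]
  refine le_trans ?_ hδ4
  rw [← quotient]
  refine abs_sub_expansion_le (Real.sqrt_nonneg _) hl' hm' hy' hg' hβ hden hk₁ hk₂ rfl ?_
  rw [quotient, abs_of_nonneg (ratioTest_nonneg _ _)]
  exact ratioTest_le_one _ _

section TotalDegree

open MvPolynomial

variable {σ : Type*}

lemma exists_cubic_approx_ratioTest (a b : ℝ) {S T : MvPolynomial σ ℝ} (hS : S.totalDegree ≤ 1)
    (hT : T.totalDegree ≤ 1) :
    ∃ p : MvPolynomial σ ℝ, p.totalDegree ≤ 3 ∧ ∀ x,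
      |ratioTest (a + eval x S) (b + eval x T) - eval x p| ≤
        656 * (eval x S ^ 4 + eval x T ^ 4) := by
  have degree_mul {i j : ℕ} {p q : MvPolynomial σ ℝ} (hp : p.totalDegree ≤ i)
      (hq : q.totalDegree ≤ j) : (p * q).totalDegree ≤ i + j :=
    (totalDegree_mul p q).trans (add_le_add hp hq)
  have degree_C_mul {i : ℕ} (k : ℝ) {p : MvPolynomial σ ℝ} (hp : p.totalDegree ≤ i) :
      (C k * p).totalDegree ≤ i := by
    simpa only [zero_add] using degree_mul (totalDegree_C k).le hp
  have degree_add {i : ℕ} {p q : MvPolynomial σ ℝ} (hp : p.totalDegree ≤ i)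
      (hq : q.totalDegree ≤ i) : (p + q).totalDegree ≤ i :=
    (totalDegree_add p q).trans (max_le hp hq)
  have degree_sub {i : ℕ} {p q : MvPolynomial σ ℝ} (hp : p.totalDegree ≤ i)
      (hq : q.totalDegree ≤ i) : (p - q).totalDegree ≤ i :=
    (totalDegree_sub p q).trans (max_le hp hq)
  set D := a ^ 2 + b ^ 2 + 1
  set l := C (2 * a / D) * S + C (2 * b / D) * T
  set m := C (1 / D) * (S * S + T * T)
  set y := C (2 * b / D) * T
  set g := C (1 / D) * (T * T)
  set k₁ := y - C (b ^ 2 / D) * l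
  set k₂ := g - l * k₁ - C (b ^ 2 / D) * m
  have hl : l.totalDegree ≤ 1 := degree_add (degree_C_mul _ hS) (degree_C_mul _ hT)
  have hm : m.totalDegree ≤ 2 := degree_C_mul _ (degree_add (degree_mul hS hS) (degree_mul hT hT))
  have hk₁ : k₁.totalDegree ≤ 1 := degree_sub (degree_C_mul _ hT) (degree_C_mul _ hl)
  have hk₂ : k₂.totalDegree ≤ 2 := degree_sub
    (degree_sub (degree_C_mul _ (degree_mul hT hT)) (degree_mul hl hk₁)) (degree_C_mul _ hm)
  refine ⟨C (b ^ 2 / D) + k₁ + k₂ - (l * k₂ + m * k₁), degree_sub (degree_add (degree_add ?_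
    (hk₁.trans (by norm_num))) (hk₂.trans (by norm_num)))
    (degree_add (degree_mul hl hk₂) (degree_mul hm hk₁)), fun x => ?_⟩
  · rw [totalDegree_C]; exact Nat.zero_le _
  · have := abs_ratioTest_sub_cubic_le (s := eval x S) (t := eval x T) (D := D) (l := eval x l)
      (m := eval x m) (y := eval x y) (g := eval x g) (k₁ := eval x k₁) (k₂ := eval x k₂) rfl
      (by simp only [l, map_add, map_mul, eval_C]; ring)
      (by simp only [m, map_add, map_mul, eval_C]; ring)
      (by simp only [y, map_mul, eval_C]; ring) (by simp only [g, map_mul, eval_C]; ring)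
      (by simp only [k₁, map_sub, map_mul, eval_C]; ring)
      (by simp only [k₂, map_sub, map_mul, eval_C]; ring)
    simpa only [map_sub, map_add, map_mul, eval_C] using this

end TotalDegree

lemma hasCubicApprox_ratioTest_linear {A P Q B : ℝ} (hA : A ^ 4 ≤ B) (hP : P ^ 4 ≤ B)
    (hQ : Q ^ 4 ≤ B) :
    HasCubicApprox (6000 * B) fun u v => ratioTest (A * u) (P * u + Q * v) := by
  intro u v
  have degree (k : ℝ) (i : Fin 2) : (MvPolynomial.C k * .X i).totalDegree ≤ 1 :=
    (MvPolynomial.totalDegree_mul _ _).trans (by simp)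
  obtain ⟨p, hp, approx⟩ := exists_cubic_approx_ratioTest (A * u) (P * u + Q * v) (degree A 0)
    ((MvPolynomial.totalDegree_add _ _).trans (max_le (degree P 0) (degree Q 1)))
  refine ⟨p, hp, fun x => ?_⟩
  simp only [map_add, map_mul, MvPolynomial.eval_C, MvPolynomial.eval_X] at approx
  refine (le_of_eq ?_).trans ((approx x).trans ?_)
  · ring_nf
  · have hB : 0 ≤ B := le_trans (by positivity) hA
    have hx := pow_nonneg (sq_nonneg (x 0)) 2
    have hy := pow_nonneg (sq_nonneg (x 1)) 2
    have split : (P * x 0 + Q * x 1) ^ 4 ≤ 8 * ((P * x 0) ^ 4 + (Q * x 1) ^ 4) :=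
      (by decide : Even 4).add_pow_le.trans_eq (by norm_num)
    linear_combination 656 * split + 656 * mul_le_mul_of_nonneg_right hA hx
      + 5248 * mul_le_mul_of_nonneg_right hP hx + 5248 * mul_le_mul_of_nonneg_right hQ hy
      + 96 * mul_nonneg hB hx + 752 * mul_nonneg hB hy

namespace MLPoly

private lemma eval_eq_of_eq_off {ι : Type*} [Fintype ι] [DecidableEq ι] {c : MLPoly ι} {j : ι}
    (hc : ∀ (z : ι → ℝ) a, c.eval (Function.update z j a) = c.eval z) {x y : ι → ℝ}
    (h : ∀ i, i ≠ j → x i = y i) : c.eval x = c.eval y := by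
  rw [Function.eq_update_iff.2 ⟨rfl, h⟩, hc]

private lemma randEval_eq_of_eq_off {ι Ω : Type*} [Fintype ι] [DecidableEq ι] {c : MLPoly ι} {j : ι}
    {z y : ι → Ω → ℝ} (h : ∀ i, i ≠ j → z i = y i) (ω : ι → Ω) :
    (c.freePart j).randEval z ω = (c.freePart j).randEval y ω ∧
      (c.pderiv j).randEval z ω = (c.pderiv j).randEval y ω :=
  ⟨eval_eq_of_eq_off (eval_freePart_update j c) fun i hi => by rw [h i hi],
    eval_eq_of_eq_off (eval_pderiv_update j c) fun i hi => by rw [h i hi]⟩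

end MLPoly

section Lindeberg

variable {Ω Ω₁ Ω₂ : Type*} [Fintype Ω] [Fintype Ω₁] [Fintype Ω₂]
  {w : Ω → ℝ} {w₁ : Ω₁ → ℝ} {w₂ : Ω₂ → ℝ} {ρ : ℝ}

/-- A pair of standardized random variables with covariance `ρ` and vanishing mixed third
moments. -/
structure IsStandardizedPair (w z z' : Ω → ℝ) (ρ : ℝ) : Prop where
  fst : MLPoly.IsStandardized w z
  snd : MLPoly.IsStandardized w z'
  mean_mul : expectation w (fun a => z a * z' a) = ρ
  mean_sq_mul : expectation w (fun a => z a ^ 2 * z' a) = 0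
  mean_mul_sq : expectation w (fun a => z a * z' a ^ 2) = 0

lemma IsProbWeight.expectation_prodWeight_fst (h₂ : IsProbWeight w₂) (F : Ω₁ → ℝ) :
    expectation (prodWeight w₁ w₂) (fun q => F q.1) = expectation w₁ F := by
  simp only [expectation_prodWeight, h₂.expectation_const]

lemma IsProbWeight.expectation_prodWeight_snd (h₁ : IsProbWeight w₁) (F : Ω₂ → ℝ) :
    expectation (prodWeight w₁ w₂) (fun q => F q.2) = expectation w₂ F := by
  simp only [expectation_prodWeight, h₁.expectation_const]

namespace IsStandardizedPair

lemma expectation_pow_mul_pow (hw₁ : IsProbWeight w₁) (hw₂ : IsProbWeight w₂) {z₁ z₁' : Ω₁ → ℝ}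
    {z₂ z₂' : Ω₂ → ℝ} (h₁ : IsStandardizedPair w₁ z₁ z₁' ρ) (h₂ : IsStandardizedPair w₂ z₂ z₂' ρ)
    {i j : ℕ} (hij : i + j ≤ 3) :
    expectation w₁ (fun a => z₁ a ^ i * z₁' a ^ j) =
      expectation w₂ (fun a => z₂ a ^ i * z₂' a ^ j) := by
  have hi : i ≤ 3 := by omega
  have hj : j ≤ 3 := by omega
  interval_cases i <;> interval_cases j <;> first
    | omega
    | simp only [pow_zero, pow_one, one_mul, mul_one, hw₁.expectation_const, hw₂.expectation_const,
        h₁.fst.mean_eq_zero, h₁.fst.mean_sq, h₁.fst.mean_pow_three, h₁.snd.mean_eq_zero,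
        h₁.snd.mean_sq, h₁.snd.mean_pow_three, h₁.mean_mul, h₁.mean_sq_mul, h₁.mean_mul_sq,
        h₂.fst.mean_eq_zero, h₂.fst.mean_sq, h₂.fst.mean_pow_three, h₂.snd.mean_eq_zero,
        h₂.snd.mean_sq, h₂.snd.mean_pow_three, h₂.mean_mul, h₂.mean_sq_mul, h₂.mean_mul_sq]

lemma comp_fst (h₂ : IsProbWeight w₂) {z z' : Ω₁ → ℝ} (h : IsStandardizedPair w₁ z z' ρ) :
    IsStandardizedPair (prodWeight w₁ w₂) (fun q => z q.1) (fun q => z' q.1) ρ := by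
  have key := h₂.expectation_prodWeight_fst (w₁ := w₁)
  exact ⟨⟨(key _).trans h.fst.1, (key _).trans h.fst.2, (key _).trans h.fst.3,
      (key _).trans_le h.fst.4⟩,
    ⟨(key _).trans h.snd.1, (key _).trans h.snd.2, (key _).trans h.snd.3,
      (key _).trans_le h.snd.4⟩,
    (key _).trans h.3, (key _).trans h.4, (key _).trans h.5⟩

lemma comp_snd (h₁ : IsProbWeight w₁) {z z' : Ω₂ → ℝ} (h : IsStandardizedPair w₂ z z' ρ) :
    IsStandardizedPair (prodWeight w₁ w₂) (fun q => z q.2) (fun q => z' q.2) ρ := by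
  have key := h₁.expectation_prodWeight_snd (w₂ := w₂)
  exact ⟨⟨(key _).trans h.fst.1, (key _).trans h.fst.2, (key _).trans h.fst.3,
      (key _).trans_le h.fst.4⟩,
    ⟨(key _).trans h.snd.1, (key _).trans h.snd.2, (key _).trans h.snd.3,
      (key _).trans_le h.snd.4⟩,
    (key _).trans h.3, (key _).trans h.4, (key _).trans h.5⟩

/-- A cubic polynomial only sees the moments shared by all standardized pairs with the same
covariance. -/
lemma expectation_eval_eq (hw : IsProbWeight w) {z z' y y' : Ω → ℝ}
    (hz : IsStandardizedPair w z z' ρ) (hy : IsStandardizedPair w y y' ρ)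
    {p : MvPolynomial (Fin 2) ℝ} (hp : p.totalDegree ≤ 3) (u v : ℝ) :
    expectation w (fun a => p.eval ![z a * u, z' a * v]) =
      expectation w (fun a => p.eval ![y a * u, y' a * v]) := by
  simp only [MvPolynomial.eval_eq', Fin.prod_univ_two, Matrix.cons_val_zero, Matrix.cons_val_one,
    mul_pow, expectation_sum, expectation_const_mul]
  refine sum_congr rfl fun k hk => ?_
  have hdeg : k 0 + k 1 ≤ 3 := by
    have := (MvPolynomial.le_totalDegree hk).trans hp
    rwa [Finsupp.sum_fintype _ _ fun _ => rfl, Fin.sum_univ_two] at this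
  have key := expectation_pow_mul_pow hw hw hz hy hdeg
  simp only [mul_mul_mul_comm _ (u ^ k 0), expectation_mul_const, key]

lemma abs_expectation_sub_eval_le (hw : IsProbWeight w) {z z' : Ω → ℝ}
    (hz : IsStandardizedPair w z z' ρ) {L : ℝ} (hL : 0 ≤ L) (Φ : ℝ → ℝ → ℝ)
    {p : MvPolynomial (Fin 2) ℝ}
    (hp : ∀ x : Fin 2 → ℝ, |Φ (x 0) (x 1) - p.eval x| ≤ L * (x 0 ^ 4 + x 1 ^ 4)) (u v : ℝ) :
    |expectation w (fun a => Φ (z a * u) (z' a * v))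
      - expectation w (fun a => p.eval ![z a * u, z' a * v])| ≤ 9 * L * (u ^ 4 + v ^ 4) := by
  rw [← expectation_sub]
  calc _ ≤ expectation w (fun a => L * (z a ^ 4 * u ^ 4 + z' a ^ 4 * v ^ 4)) := by
        refine (hw.abs_expectation_le _).trans (hw.expectation_mono fun a => ?_)
        simpa only [Matrix.cons_val_zero, Matrix.cons_val_one, mul_pow] using
          hp ![z a * u, z' a * v]
    _ = L * (expectation w (fun a => z a ^ 4) * u ^ 4
          + expectation w (fun a => z' a ^ 4) * v ^ 4) := by
        rw [expectation_const_mul, expectation_add, expectation_mul_const, expectation_mul_const]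
    _ ≤ L * (9 * u ^ 4 + 9 * v ^ 4) := mul_le_mul_of_nonneg_left
        (add_le_add (mul_le_mul_of_nonneg_right hz.fst.mean_pow_four_le (by positivity))
          (mul_le_mul_of_nonneg_right hz.snd.mean_pow_four_le (by positivity))) hL
    _ = 9 * L * (u ^ 4 + v ^ 4) := by ring

lemma abs_expectation_sub_le (hw : IsProbWeight w) {z z' y y' : Ω → ℝ}
    (hz : IsStandardizedPair w z z' ρ) (hy : IsStandardizedPair w y y' ρ) {L : ℝ} (hL : 0 ≤ L)
    {Ψ : ℝ → ℝ → ℝ} (hΨ : HasCubicApprox L Ψ) (u₀ v₀ u v : ℝ) :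
    |expectation w (fun a => Ψ (u₀ + z a * u) (v₀ + z' a * v))
      - expectation w (fun a => Ψ (u₀ + y a * u) (v₀ + y' a * v))| ≤
        18 * L * (u ^ 4 + v ^ 4) := by
  obtain ⟨p, hdeg, hp⟩ := hΨ u₀ v₀
  have h₁ := hz.abs_expectation_sub_eval_le hw hL (fun s t => Ψ (u₀ + s) (v₀ + t)) hp u v
  have h₂ := hy.abs_expectation_sub_eval_le hw hL (fun s t => Ψ (u₀ + s) (v₀ + t)) hp u v
  rw [← hz.expectation_eval_eq hw hy hdeg, abs_sub_comm] at h₂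
  linarith [abs_sub_le (expectation w (fun a => Ψ (u₀ + z a * u) (v₀ + z' a * v)))
    (expectation w (fun a => p.eval ![z a * u, z' a * v]))
    (expectation w (fun a => Ψ (u₀ + y a * u) (v₀ + y' a * v)))]

end IsStandardizedPair

namespace MLPoly

variable {ι : Type*} [Fintype ι] [DecidableEq ι] {L : ℝ} {Ψ : ℝ → ℝ → ℝ} {d : ℕ} {c : MLPoly ι}

private lemma expectation_comp_randEval_eq (hw : IsProbWeight w) (z z' : ι → Ω → ℝ) (j : ι) :
    𝔼[w] (fun ω => Ψ (c.randEval z ω) (c.randEval z' ω)) =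
      𝔼[w] (fun ω => expectation w (fun a =>
        Ψ ((c.freePart j).randEval z ω + z j a * (c.pderiv j).randEval z ω)
          ((c.freePart j).randEval z' ω + z' j a * (c.pderiv j).randEval z' ω))) := by
  rw [hw.expectation_pi_resample j]
  simp only [randEval_eq_freePart_add c _ _ j, randEval_freePart_update, randEval_pderiv_update,
    Function.update_self]

lemma abs_expectation_sub_le_of_eq_off (hw : IsProbWeight w) (hL : 0 ≤ L)
    (hΨ : HasCubicApprox L Ψ) (hc : c.DegLE d) {z z' y y' : ι → Ω → ℝ} (j : ι)
    (hz : ∀ i, IsStandardizedPair w (z i) (z' i) ρ) (hy : IsStandardizedPair w (y j) (y' j) ρ)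
    (h : ∀ i, i ≠ j → z i = y i) (h' : ∀ i, i ≠ j → z' i = y' i) :
    |𝔼[w] (fun ω => Ψ (c.randEval z ω) (c.randEval z' ω))
      - 𝔼[w] (fun ω => Ψ (c.randEval y ω) (c.randEval y' ω))| ≤
        36 * L * 9 ^ d * (c.pderiv j).normSq ^ 2 := by
  have hdeg : (c.pderiv j).DegLE d := fun S hS => hc.pderiv j S (by omega)
  rw [expectation_comp_randEval_eq hw z z' j, expectation_comp_randEval_eq hw y y' j,
    ← expectation_sub]
  calc _ ≤ 𝔼[w] (fun ω => 18 * L *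
          ((c.pderiv j).randEval z ω ^ 4 + (c.pderiv j).randEval z' ω ^ 4)) := by
        refine (hw.pi.abs_expectation_le _).trans (hw.pi.expectation_mono fun ω => ?_)
        obtain ⟨free, deriv⟩ := randEval_eq_of_eq_off (c := c) h ω
        obtain ⟨free', deriv'⟩ := randEval_eq_of_eq_off (c := c) h' ω
        rw [← free, ← deriv, ← free', ← deriv']
        exact (hz j).abs_expectation_sub_le hw hy hL hΨ _ _ _ _
    _ = 18 * L * (𝔼[w] (fun ω => (c.pderiv j).randEval z ω ^ 4)
          + 𝔼[w] (fun ω => (c.pderiv j).randEval z' ω ^ 4)) := by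
        rw [expectation_const_mul, expectation_add]
    _ ≤ 18 * L * (9 ^ d * (c.pderiv j).normSq ^ 2 + 9 ^ d * (c.pderiv j).normSq ^ 2) :=
        mul_le_mul_of_nonneg_left
          (add_le_add (expectation_randEval_pow_four_le hw (fun i => (hz i).fst) hdeg)
            (expectation_randEval_pow_four_le hw (fun i => (hz i).snd) hdeg)) (by positivity)
    _ = 36 * L * 9 ^ d * (c.pderiv j).normSq ^ 2 := by ring

/-- The invariance principle, by Lindeberg's replacement of one coordinate at a time. -/
theorem abs_expectation_sub_le_sum_normSq_pderiv (hw₁ : IsProbWeight w₁) (hw₂ : IsProbWeight w₂)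
    {z₁ z₁' : Ω₁ → ℝ} {z₂ z₂' : Ω₂ → ℝ} (h₁ : IsStandardizedPair w₁ z₁ z₁' ρ)
    (h₂ : IsStandardizedPair w₂ z₂ z₂' ρ) (hL : 0 ≤ L) (hΨ : HasCubicApprox L Ψ)
    (hc : c.DegLE d) :
    |𝔼[w₁] (fun ω => Ψ (c.randEval (fun _ => z₁) ω) (c.randEval (fun _ => z₁') ω))
      - 𝔼[w₂] (fun ω => Ψ (c.randEval (fun _ => z₂) ω) (c.randEval (fun _ => z₂') ω))| ≤
        36 * L * 9 ^ d * ∑ j, (c.pderiv j).normSq ^ 2 := by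
  set W := prodWeight w₁ w₂
  have hW : IsProbWeight W := hw₁.prod hw₂
  set hybrid : Finset ι → (Ω₁ → ℝ) → (Ω₂ → ℝ) → ι → Ω₁ × Ω₂ → ℝ :=
    fun s y₁ y₂ i q => if i ∈ s then y₁ q.1 else y₂ q.2
  have hybrid_off {s : Finset ι} {j : ι} (y₁ y₂) (i : ι) (hi : i ≠ j) :
      hybrid (insert j s) y₁ y₂ i = hybrid s y₁ y₂ i := by
    simp only [hybrid, mem_insert, hi, false_or]
  have hybrid_pair (s : Finset ι) (i : ι) :
      IsStandardizedPair W (hybrid s z₁ z₂ i) (hybrid s z₁' z₂' i) ρ := by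
    by_cases hi : i ∈ s
    · simpa only [hybrid, hi, if_true] using h₁.comp_fst hw₂
    · simpa only [hybrid, hi, if_false] using h₂.comp_snd hw₁
  set E : Finset ι → ℝ := fun s =>
    𝔼[W] (fun ω => Ψ (c.randEval (hybrid s z₁ z₂) ω) (c.randEval (hybrid s z₁' z₂') ω))
  have telescope (s : Finset ι) :
      |E s - E ∅| ≤ 36 * L * 9 ^ d * ∑ j ∈ s, (c.pderiv j).normSq ^ 2 := by
    induction s using Finset.induction_on with
    | empty => simp
    | insert j s hj ih =>
      have step := abs_expectation_sub_le_of_eq_off hW hL hΨ hc j (hybrid_pair (insert j s))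
        (hybrid_pair s j) (hybrid_off z₁ z₂) (hybrid_off z₁' z₂')
      rw [sum_insert hj, mul_add]
      exact (abs_sub_le _ (E s) _).trans (add_le_add step ih)
  have all_first : E univ =
      𝔼[w₁] (fun ω => Ψ (c.randEval (fun _ => z₁) ω) (c.randEval (fun _ => z₁') ω)) := by
    simp only [E, W, hybrid, expectation_pi_prodWeight, randEval, mem_univ, if_true,
      hw₂.pi.expectation_const]
  have all_second : E ∅ =
      𝔼[w₂] (fun ω => Ψ (c.randEval (fun _ => z₂) ω) (c.randEval (fun _ => z₂') ω)) := by
    simp only [E, W, hybrid, expectation_pi_prodWeight, randEval, notMem_empty, if_false,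
      hw₁.pi.expectation_const]
  simpa only [all_first, all_second] using telescope univ

end MLPoly

end Lindeberg

section RootsOfUnity

variable {N : ℕ} [NeZero N]

local notation "𝐞" => ZMod.stdAddChar

private lemma natCast_pos_of_neZero : 0 < (N : ℝ) := Nat.cast_pos.2 (NeZero.pos N)

private lemma two_div_pi_mul_min_le_sin {x : ℝ} (h0 : 0 ≤ x) (hπ : x ≤ Real.pi) :
    2 / Real.pi * min x (Real.pi - x) ≤ Real.sin x := by
  rcases le_total x (Real.pi - x) with h | h
  · rw [min_eq_left h]
    exact Real.mul_le_sin h0 (by linarith)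
  · rw [min_eq_right h, ← Real.sin_pi_sub]
    exact Real.mul_le_sin (by linarith) (by linarith)

lemma stdAddChar_natCast (m : ℕ) :
    𝐞 (m : ZMod N) = Complex.exp (Complex.I * ((2 * Real.pi * m / N : ℝ) : ℂ)) := by
  have h := ZMod.stdAddChar_coe (N := N) (m : ℤ)
  push_cast at h ⊢
  rw [h]
  ring_nf

lemma norm_stdAddChar_natCast_sub_one (m : ℕ) :
    ‖𝐞 (m : ZMod N) - 1‖ = 2 * |Real.sin (Real.pi * m / N)| := by
  rw [stdAddChar_natCast, Complex.norm_exp_I_mul_ofReal_sub_one, Real.norm_eq_abs, abs_mul,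
    abs_two]
  ring_nf

lemma le_norm_stdAddChar_natCast_sub_one {m : ℕ} (hm : m ≤ N) :
    4 * min (m : ℝ) (N - m) / N ≤ ‖𝐞 (m : ZMod N) - 1‖ := by
  have hN := natCast_pos_of_neZero (N := N)
  have hmN : (m : ℝ) ≤ N := by exact_mod_cast hm
  have := Real.pi_pos
  have hle : Real.pi * m / N ≤ Real.pi := by
    rw [div_le_iff₀ hN]
    gcongr
  have scale : min (Real.pi * m / N) (Real.pi - Real.pi * m / N) =
      Real.pi / N * min (m : ℝ) (N - m) := by
    rw [mul_min_of_nonneg _ _ (by positivity)]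
    congr 1 <;> field_simp
  have sin_ge := two_div_pi_mul_min_le_sin (by positivity) hle
  rw [norm_stdAddChar_natCast_sub_one]
  calc 4 * min (m : ℝ) (N - m) / N
      = 2 * (2 / Real.pi * min (Real.pi * m / N) (Real.pi - Real.pi * m / N)) := by
        rw [scale]
        field_simp
        ring
    _ ≤ 2 * |Real.sin (Real.pi * m / N)| := by linarith [le_abs_self (Real.sin (Real.pi * m / N))]

lemma norm_stdAddChar_add_sub (a k : ZMod N) : ‖𝐞 (a + k) - 𝐞 a‖ = ‖𝐞 k - 1‖ := by
  rw [AddChar.map_add_eq_mul, ← mul_sub_one, norm_mul, AddChar.norm_apply, one_mul]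

lemma norm_stdAddChar_add_one_sub_le (k : ZMod N) : ‖𝐞 (k + 1) - 𝐞 k‖ ≤ 7 / N := by
  have hN := natCast_pos_of_neZero (N := N)
  have h := norm_stdAddChar_natCast_sub_one (N := N) 1
  rw [Nat.cast_one, Nat.cast_one, mul_one] at h
  rw [norm_stdAddChar_add_sub, h]
  calc 2 * |Real.sin (Real.pi / N)| ≤ 2 * |Real.pi / N| := by
        gcongr 2 * ?_
        exact Real.abs_sin_le_abs
    _ = 2 * Real.pi / N := by rw [abs_of_pos (by positivity)]; ring
    _ ≤ 7 / N := by
        gcongr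
        linarith [Real.pi_lt_d2]

lemma re_stdAddChar_sq_add_im_sq (k : ZMod N) : (𝐞 k).re ^ 2 + (𝐞 k).im ^ 2 = 1 := by
  rw [← Complex.normSq_add_mul_I, Complex.re_add_im, Complex.normSq_eq_norm_sq,
    AddChar.norm_apply, one_pow]

lemma re_stdAddChar_one_le (hN : 2 ≤ N) : (𝐞 (1 : ZMod N)).re ≤ 1 - 8 / N ^ 2 := by
  have h := le_norm_stdAddChar_natCast_sub_one (N := N) (m := 1) (by omega)
  have hmin : min ((1 : ℕ) : ℝ) (N - (1 : ℕ)) = 1 := by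
    have : (2 : ℝ) ≤ N := by exact_mod_cast hN
    rw [Nat.cast_one]
    exact min_eq_left (by linarith)
  rw [hmin, Nat.cast_one] at h
  have hsq := pow_le_pow_left₀ (by positivity) h 2
  have norm_sq : ‖𝐞 (1 : ZMod N) - 1‖ ^ 2 = 2 - 2 * (𝐞 (1 : ZMod N)).re := by
    rw [Complex.sq_norm, Complex.normSq_apply]
    simp only [Complex.sub_re, Complex.one_re, Complex.sub_im, Complex.one_im]
    linear_combination re_stdAddChar_sq_add_im_sq (1 : ZMod N)
  rw [norm_sq] at hsq
  linear_combination hsq / 2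

lemma sum_zmod_val (φ : ℕ → ℝ) : ∑ k : ZMod N, φ k.val = ∑ m ∈ range N, φ m :=
  Finset.sum_nbij' ZMod.val (fun m => (m : ZMod N)) (fun k _ => mem_range.2 (ZMod.val_lt k))
    (fun _ _ => mem_univ _) (fun k _ => ZMod.natCast_zmod_val k)
    (fun _ hm => ZMod.val_cast_of_lt (mem_range.1 hm)) fun _ _ => rfl

lemma sum_sq_div_succ_sq_add_sq_le {b : ℝ} (hb : 0 < b) (M : ℕ) :
    ∑ j ∈ range M, b ^ 2 / (((j + 1 : ℕ) : ℝ) ^ 2 + b ^ 2) ≤ 2 * b := by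
  have telescoping (j : ℕ) : b ^ 2 / (((j + 1 : ℕ) : ℝ) ^ 2 + b ^ 2) ≤
      2 * b ^ 2 * (1 / ((j : ℝ) + b) - 1 / (((j + 1 : ℕ) : ℝ) + b)) := by
    have e : 2 * b ^ 2 * (1 / ((j : ℝ) + b) - 1 / (((j + 1 : ℕ) : ℝ) + b)) =
        2 * b ^ 2 / ((j + b) * (j + 1 + b)) := by
      push_cast
      field_simp
      ring
    rw [e, div_le_div_iff₀ (by positivity) (by positivity), mul_right_comm 2]
    have : (j + b) * (j + 1 + b) ≤ 2 * (((j + 1 : ℕ) : ℝ) ^ 2 + b ^ 2) := by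
      push_cast
      nlinarith [sq_nonneg ((j : ℝ) + 1 - b), (Nat.cast_nonneg j : (0 : ℝ) ≤ j)]
    nlinarith [sq_nonneg b]
  refine (sum_le_sum fun j _ => telescoping j).trans ?_
  rw [← mul_sum, sum_range_sub' (fun j : ℕ => 1 / ((j : ℝ) + b)), Nat.cast_zero, zero_add]
  calc 2 * b ^ 2 * (1 / b - 1 / (M + b)) ≤ 2 * b ^ 2 * (1 / b) := by
        gcongr
        exact sub_le_self _ (by positivity)
    _ = 2 * b := by field_simp

lemma sum_sq_div_min_sq_add_sq_le {b : ℝ} (hb : 0 < b) (M : ℕ) :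
    ∑ m ∈ range M, b ^ 2 / (min (m : ℝ) (M - m) ^ 2 + b ^ 2) ≤ 1 + 4 * b := by
  let ψ : ℕ → ℝ := fun m => b ^ 2 / ((m : ℝ) ^ 2 + b ^ 2)
  have hψ (m : ℕ) : 0 ≤ ψ m := by positivity
  have min_le (m : ℕ) (hm : m ∈ range M) :
      b ^ 2 / (min (m : ℝ) (M - m) ^ 2 + b ^ 2) ≤ ψ m + ψ (M - m) := by
    rw [← Nat.cast_sub (mem_range.1 hm).le]
    rcases min_choice (m : ℝ) ((M - m : ℕ) : ℝ) with h | h <;> rw [h]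
    · exact le_add_of_nonneg_right (hψ _)
    · exact le_add_of_nonneg_left (hψ _)
  have tail : ∑ j ∈ range M, ψ (j + 1) ≤ 2 * b := sum_sq_div_succ_sq_add_sq_le hb M
  have reflected : ∑ m ∈ range M, ψ (M - m) = ∑ j ∈ range M, ψ (j + 1) := by
    rw [← sum_range_reflect (fun j => ψ (j + 1)) M]
    refine sum_congr rfl fun m hm => ?_
    have := mem_range.1 hm
    congr 1
    omega
  have direct : ∑ m ∈ range M, ψ m ≤ ∑ j ∈ range M, ψ (j + 1) + ψ 0 := by
    rw [← sum_range_succ', sum_range_succ]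
    exact le_add_of_nonneg_right (hψ M)
  have hψ0 : ψ 0 = 1 := by
    simp only [ψ, Nat.cast_zero]
    field_simp
    ring
  refine (sum_le_sum min_le).trans ?_
  rw [sum_add_distrib]
  linarith

/-- The sum is a smooth count of the roots of unity within distance `B` of `z`. -/
lemma sum_sq_div_norm_stdAddChar_sub_sq_le {B : ℝ} (hB : 0 < B) (z : ℂ) :
    ∑ k : ZMod N, B ^ 2 / (‖𝐞 k - z‖ ^ 2 + B ^ 2) ≤ 1 + 2 * B * N := by
  have hN := natCast_pos_of_neZero (N := N)
  obtain ⟨k₀, hk₀⟩ := Finite.exists_min fun k : ZMod N => ‖𝐞 k - z‖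
  let b := B * N / 2
  have hb : 0 < b := by positivity
  let φ : ℕ → ℝ := fun m => b ^ 2 / (min (m : ℝ) (N - m) ^ 2 + b ^ 2)
  have termwise (k : ZMod N) : B ^ 2 / (‖𝐞 (k₀ + k) - z‖ ^ 2 + B ^ 2) ≤ φ k.val := by
    have hval : (k.val : ℝ) ≤ N := by exact_mod_cast (ZMod.val_lt k).le
    have : 0 ≤ min (k.val : ℝ) (N - k.val) := le_min (by positivity) (by linarith)
    have chord := le_norm_stdAddChar_natCast_sub_one (ZMod.val_lt k).le
    rw [ZMod.natCast_zmod_val] at chord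
    have triangle : ‖𝐞 k - 1‖ ≤ 2 * ‖𝐞 (k₀ + k) - z‖ := by
      have h := norm_sub_le (𝐞 (k₀ + k) - z) (𝐞 k₀ - z)
      rw [sub_sub_sub_cancel_right, norm_stdAddChar_add_sub] at h
      linarith [hk₀ (k₀ + k)]
    have far : 2 * min (k.val : ℝ) (N - k.val) / N ≤ ‖𝐞 (k₀ + k) - z‖ := by
      linear_combination (chord + triangle) / 2
    calc B ^ 2 / (‖𝐞 (k₀ + k) - z‖ ^ 2 + B ^ 2)
        ≤ B ^ 2 / ((2 * min (k.val : ℝ) (N - k.val) / N) ^ 2 + B ^ 2) := by gcongr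
      _ = φ k.val := by simp only [φ, b]; field_simp
  calc ∑ k : ZMod N, B ^ 2 / (‖𝐞 k - z‖ ^ 2 + B ^ 2)
      = ∑ k : ZMod N, B ^ 2 / (‖𝐞 (k₀ + k) - z‖ ^ 2 + B ^ 2) :=
        (Equiv.sum_comp (Equiv.addLeft k₀) _).symm
    _ ≤ ∑ k : ZMod N, φ k.val := sum_le_sum fun k _ => termwise k
    _ = ∑ m ∈ range N, φ m := sum_zmod_val φ
    _ ≤ 1 + 4 * b := sum_sq_div_min_sq_add_sq_le hb N
    _ = 1 + 2 * B * N := by ring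

/-- The uniform weight on `ZMod N`. -/
noncomputable def circleWeight (N : ℕ) : ZMod N → ℝ := fun _ => 1 / N

lemma isProbWeight_circleWeight : IsProbWeight (circleWeight N) := by
  refine ⟨fun _ => by unfold circleWeight; positivity, ?_⟩
  simp [circleWeight, ZMod.card]

/-- The first coordinate of the `k`-th of `N` equidistant points on the circle of radius `√2`,
which makes it a standardized random variable whenever `4 ∣ N`. -/
noncomputable def circleCoord (k : ZMod N) : ℝ := √2 * (𝐞 k).re

lemma expectation_circleWeight_eq_zero {f : ZMod N → ℝ} (h : ZMod N) (hf : ∀ k, f (k + h) = -f k) :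
    expectation (circleWeight N) f = 0 := by
  have shift : expectation (circleWeight N) f = expectation (circleWeight N) fun k => f (k + h) :=
    (Equiv.sum_comp (Equiv.addRight h) fun k => circleWeight N k * f k).symm
  simp only [hf, expectation, mul_neg, sum_neg_distrib] at shift
  change ∑ k, circleWeight N k * f k = 0
  linarith

section QuarterTurn

variable {L : ℕ} (hL : N = 4 * L)
include hL

lemma stdAddChar_quarter : 𝐞 (L : ZMod N) = Complex.I := by
  have hL0 : (L : ℝ) ≠ 0 := Nat.cast_ne_zero.2 fun h => NeZero.ne N (by rw [hL, h, mul_zero])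
  have angle : (2 * Real.pi * L / N : ℝ) = Real.pi / 2 := by
    rw [hL]
    push_cast
    field_simp
    ring
  rw [stdAddChar_natCast, angle, mul_comm]
  push_cast
  exact Complex.exp_pi_div_two_mul_I

lemma circleCoord_add_quarter (k : ZMod N) : circleCoord (k + (L : ZMod N)) = -(√2 * (𝐞 k).im) := by
  simp [circleCoord, AddChar.map_add_eq_mul, stdAddChar_quarter hL]

lemma circleCoord_add_half (k : ZMod N) :
    circleCoord (k + ((L : ZMod N) + (L : ZMod N))) = -circleCoord k := by
  simp [circleCoord, AddChar.map_add_eq_mul, stdAddChar_quarter hL]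

lemma circleCoord_add_half_add (m k : ZMod N) :
    circleCoord (k + ((L : ZMod N) + (L : ZMod N)) + m) = -circleCoord (k + m) := by
  rw [add_right_comm, circleCoord_add_half hL]

lemma isStandardized_circleCoord_add (m : ZMod N) :
    MLPoly.IsStandardized (circleWeight N) fun k => circleCoord (k + m) where
  mean_eq_zero := expectation_circleWeight_eq_zero ((L : ZMod N) + (L : ZMod N))
    (circleCoord_add_half_add hL m)
  mean_sq := by
    have h := expectation_circleWeight_eq_zero (f := fun k => circleCoord (k + m) ^ 2 - 1)
      (L : ZMod N) fun k => by
        rw [add_right_comm, circleCoord_add_quarter hL, circleCoord]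
        linear_combination 2 * re_stdAddChar_sq_add_im_sq (k + m) +
          ((𝐞 (k + m)).re ^ 2 + (𝐞 (k + m)).im ^ 2) * Real.sq_sqrt (x := 2) (by norm_num)
    rw [expectation_sub, isProbWeight_circleWeight.expectation_const] at h
    linarith
  mean_pow_three := expectation_circleWeight_eq_zero ((L : ZMod N) + (L : ZMod N)) fun k => by
    rw [circleCoord_add_half_add hL]
    ring
  mean_pow_four_le := by
    refine (isProbWeight_circleWeight.expectation_mono fun k => ?_).trans
      (isProbWeight_circleWeight.expectation_const 9).le
    have h : circleCoord (k + m) ^ 2 ≤ 2 := by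
      rw [circleCoord, mul_pow, Real.sq_sqrt (by norm_num)]
      linarith [re_stdAddChar_sq_add_im_sq (k + m), sq_nonneg (𝐞 (k + m)).im]
    nlinarith [sq_nonneg (circleCoord (k + m))]

lemma isStandardizedPair_circleCoord (m : ZMod N) :
    IsStandardizedPair (circleWeight N) circleCoord (fun k => circleCoord (k + m)) (𝐞 m).re where
  fst := by simpa only [add_zero] using isStandardized_circleCoord_add hL (0 : ZMod N)
  snd := isStandardized_circleCoord_add hL m
  mean_mul := by
    have h := expectation_circleWeight_eq_zero
      (f := fun k => circleCoord k * circleCoord (k + m) - (𝐞 m).re) (L : ZMod N) fun k => by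
        rw [add_right_comm, circleCoord_add_quarter hL, circleCoord_add_quarter hL, circleCoord,
          circleCoord, AddChar.map_add_eq_mul, Complex.mul_re, Complex.mul_im]
        linear_combination (2 * (𝐞 m).re) * re_stdAddChar_sq_add_im_sq k +
          ((𝐞 k).re * ((𝐞 k).re * (𝐞 m).re - (𝐞 k).im * (𝐞 m).im) +
            (𝐞 k).im * ((𝐞 k).re * (𝐞 m).im + (𝐞 k).im * (𝐞 m).re)) *
            Real.sq_sqrt (x := 2) (by norm_num)
    rw [expectation_sub, isProbWeight_circleWeight.expectation_const] at h
    linarith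
  mean_sq_mul := expectation_circleWeight_eq_zero ((L : ZMod N) + (L : ZMod N)) fun k => by
    rw [circleCoord_add_half_add hL, circleCoord_add_half hL]
    ring
  mean_mul_sq := expectation_circleWeight_eq_zero ((L : ZMod N) + (L : ZMod N)) fun k => by
    rw [circleCoord_add_half_add hL, circleCoord_add_half hL]
    ring

end QuarterTurn

/-- The values `g` on the `N`-th roots of unity of a trigonometric polynomial of degree at most
`d`, encoded through the algebraic polynomial of degree at most `2 * d` obtained by multiplying it
by the `d`-th power of the variable. -/
def IsTrigPoly (d : ℕ) (g : ZMod N → ℝ) : Prop :=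
  ∃ P : Polynomial ℂ, P.natDegree ≤ 2 * d ∧ ∀ k, P.eval (𝐞 k) = 𝐞 k ^ d * g k

namespace IsTrigPoly

variable {d e : ℕ} {g g' : ZMod N → ℝ}

lemma const (a : ℝ) : IsTrigPoly 0 fun _ : ZMod N => a :=
  ⟨Polynomial.C (a : ℂ), by simp, fun k => by simp⟩

lemma mul (hg : IsTrigPoly d g) (hg' : IsTrigPoly e g') :
    IsTrigPoly (d + e) fun k => g k * g' k := by
  obtain ⟨P, hP, hPg⟩ := hg
  obtain ⟨Q, hQ, hQg⟩ := hg'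
  refine ⟨P * Q, by linarith [P.natDegree_mul_le (q := Q)], fun k => ?_⟩
  rw [Polynomial.eval_mul, hPg, hQg]
  push_cast
  ring

lemma mono (hg : IsTrigPoly d g) (h : d ≤ e) : IsTrigPoly e g := by
  obtain ⟨P, hP, hPg⟩ := hg
  refine ⟨Polynomial.X ^ (e - d) * P, ?_, fun k => ?_⟩
  · refine Polynomial.natDegree_mul_le.trans ?_
    rw [Polynomial.natDegree_X_pow]
    omega
  · rw [Polynomial.eval_mul, Polynomial.eval_pow, Polynomial.eval_X, hPg, ← mul_assoc, ← pow_add,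
      Nat.sub_add_cancel h]

lemma sum {ι : Type*} {s : Finset ι} {f : ι → ZMod N → ℝ} (hf : ∀ i ∈ s, IsTrigPoly d (f i)) :
    IsTrigPoly d fun k => ∑ i ∈ s, f i k := by
  choose! P hP hPf using hf
  refine ⟨∑ i ∈ s, P i, Polynomial.natDegree_sum_le_of_forall_le _ _ hP, fun k => ?_⟩
  push_cast
  rw [Polynomial.eval_finsetSum, mul_sum]
  exact sum_congr rfl fun i hi => hPf i hi k

lemma prod {ι : Type*} (s : Finset ι) {f : ι → ZMod N → ℝ} (hf : ∀ i, IsTrigPoly 1 (f i)) :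
    IsTrigPoly s.card fun k => ∏ i ∈ s, f i k := by
  induction s using Finset.induction_on with
  | empty => simpa using const 1
  | insert i s hi ih =>
    simp only [prod_insert hi, card_insert_of_notMem hi, add_comm s.card]
    exact (hf i).mul ih

lemma circleCoord_add (a : ZMod N) : IsTrigPoly 1 fun k => circleCoord (a + k) := by
  refine ⟨Polynomial.C ((√2 / 2 : ℝ) : ℂ) * (Polynomial.C (𝐞 a) * Polynomial.X ^ 2 +
    Polynomial.C (star (𝐞 a))), by compute_degree, fun k => ?_⟩
  have re_eq : ((𝐞 (a + k)).re : ℂ) = (𝐞 a * 𝐞 k + star (𝐞 a) * star (𝐞 k)) / 2 := by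
    rw [Complex.re_eq_add_conj, AddChar.map_add_eq_mul, map_mul]
    rfl
  have conj_mul : 𝐞 k * star (𝐞 k) = 1 := by
    simpa [Complex.normSq_eq_norm_sq, AddChar.norm_apply] using Complex.mul_conj (𝐞 k)
  simp only [Polynomial.eval_mul, Polynomial.eval_add, Polynomial.eval_pow, Polynomial.eval_C,
    Polynomial.eval_X, circleCoord]
  push_cast
  rw [re_eq]
  linear_combination (-((√2 : ℝ) : ℂ) / 2 * star (𝐞 a)) * conj_mul

lemma randEval_circleCoord {ι : Type*} [Fintype ι] {c : MLPoly ι} (hc : c.DegLE d)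
    (ω : ι → ZMod N) :
    IsTrigPoly d fun k => c.randEval (fun _ => circleCoord) fun i => ω i + k := by
  refine sum fun S _ => ?_
  by_cases hS : d < S.card
  · simpa only [hc S hS, zero_mul] using (const 0).mono (Nat.zero_le d)
  · exact ((const (c S)).mul (prod S fun i => circleCoord_add (ω i))).mono (by omega)

lemma eq_zero_or_exists_roots (hg : IsTrigPoly d g) :
    g = 0 ∨ ∃ m ≤ 2 * d, ∃ (r : Fin m → ℂ) (a : ℂ), a ≠ 0 ∧
      ∀ k, 𝐞 k ^ d * (g k : ℂ) = a * ∏ i, (𝐞 k - r i) := by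
  obtain ⟨P, hP, hPg⟩ := hg
  rcases eq_or_ne P 0 with rfl | hP0
  · left
    funext k
    have hk : 𝐞 k ≠ 0 := norm_ne_zero_iff.1 (by rw [AddChar.norm_apply]; exact one_ne_zero)
    simpa [hk] using (hPg k).symm
  · refine Or.inr ⟨P.roots.toList.length, ?_, fun i => P.roots.toList.get i, P.leadingCoeff,
      Polynomial.leadingCoeff_ne_zero.2 hP0, fun k => ?_⟩
    · rw [Multiset.length_toList]
      exact P.card_roots'.trans hP
    · rw [← hPg, (IsAlgClosed.splits P).eval_eq_prod_roots, ← Multiset.coe_toList P.roots,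
        Multiset.map_coe, Multiset.prod_coe, ← Fin.prod_univ_fun_getElem, Multiset.coe_toList]
      rfl

end IsTrigPoly

end RootsOfUnity

section NearRoots

variable {ι : Type*} [Fintype ι] {d : ℕ} {w w' a : ℂ} {u v h κ A : ℝ} {r : ι → ℂ}

lemma ratioTest_le_of_sq_le {a b s : ℝ} (hs : 0 ≤ s) (h : b ^ 2 ≤ s * a ^ 2) :
    ratioTest a b ≤ s := by
  rw [ratioTest, div_le_iff₀ (by positivity)]
  linarith [mul_nonneg hs (sq_nonneg b)]

lemma le_add_two_mul_sum_of_far {F ε B : ℝ} {ρ : ι → ℝ} (hB : 0 < B) (hρ : ∀ i, 0 ≤ ρ i)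
    (hε : 0 ≤ ε) (hF : F ≤ 1)
    (far : (∀ i, B ≤ ρ i) → F ≤ ε + 2 * ∑ i, B ^ 2 / (ρ i ^ 2 + B ^ 2)) :
    F ≤ ε + 2 * ∑ i, B ^ 2 / (ρ i ^ 2 + B ^ 2) := by
  by_cases hfar : ∀ i, B ≤ ρ i
  · exact far hfar
  · push Not at hfar
    obtain ⟨i, hi⟩ := hfar
    have half_le : 1 / 2 ≤ B ^ 2 / (ρ i ^ 2 + B ^ 2) := by
      rw [div_le_div_iff₀ two_pos (by positivity)]
      linarith [pow_le_pow_left₀ (hρ i) hi.le 2]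
    have le_sum : B ^ 2 / (ρ i ^ 2 + B ^ 2) ≤ ∑ i, B ^ 2 / (ρ i ^ 2 + B ^ 2) :=
      single_le_sum (f := fun i => B ^ 2 / (ρ i ^ 2 + B ^ 2)) (fun i _ => by positivity)
        (mem_univ i)
    linarith

lemma norm_prod_one_add_sub_one_le_two_mul {f : ι → ℂ} {Δ : ℝ} (hf : ∑ i, ‖f i‖ ≤ Δ)
    (hΔ : Δ ≤ 1) : ‖∏ i, (1 + f i) - 1‖ ≤ 2 * Δ := by
  have hΔ0 : 0 ≤ Δ := (sum_nonneg fun i _ => norm_nonneg (f i)).trans hf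
  calc ‖∏ i, (1 + f i) - 1‖ ≤ Real.exp (∑ i, ‖f i‖) - 1 := norm_prod_one_add_sub_one_le univ f
    _ ≤ Real.exp Δ - 1 := by gcongr
    _ ≤ |Real.exp Δ - 1| := le_abs_self _
    _ ≤ 2 * |Δ| := Real.abs_exp_sub_one_le (by rwa [abs_of_nonneg hΔ0])
    _ = 2 * Δ := by rw [abs_of_nonneg hΔ0]

/-- The quotient `v / u` is a product of `d` factors `1 + (w - w') / w'` and of the factors
`1 + (w' - w) / (w - r i)`. -/
lemma sq_sub_le_of_eq_mul_prod (hw' : ‖w'‖ = 1) (ha : a ≠ 0)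
    (hu : w ^ d * (u : ℂ) = a * ∏ i, (w - r i)) (hv : w' ^ d * (v : ℂ) = a * ∏ i, (w' - r i))
    (hr : ∀ i, w - r i ≠ 0) (hh : ‖w' - w‖ ≤ h) (hΔ : d * h + ∑ i, h / ‖w - r i‖ ≤ 1) :
    (u - v) ^ 2 ≤ (2 * (d * h + ∑ i, h / ‖w - r i‖)) ^ 2 * u ^ 2 := by
  have hw0 : w' ≠ 0 := norm_ne_zero_iff.1 (by rw [hw']; exact one_ne_zero)
  have hprod : ∏ i, (w - r i) ≠ 0 := prod_ne_zero_iff.2 fun i _ => hr i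
  have hu0 : (u : ℂ) ≠ 0 := right_ne_zero_of_mul (hu ▸ mul_ne_zero ha hprod)
  let f : Fin d ⊕ ι → ℂ := Sum.elim (fun _ => (w - w') / w') fun i => (w' - w) / (w - r i)
  have ratio : ∏ i, (1 + f i) = (v : ℂ) / u := by
    have left : 1 + (w - w') / w' = w / w' := by field_simp; ring
    have right (i : ι) : 1 + (w' - w) / (w - r i) = (w' - r i) / (w - r i) := by
      have := hr i
      field_simp
      ring
    simp only [f, Fintype.prod_sum_type, Sum.elim_inl, Sum.elim_inr, left, right, prod_div_distrib,
      prod_const, card_univ, Fintype.card_fin]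
    rw [div_mul_div_comm, div_eq_div_iff (mul_ne_zero (pow_ne_zero _ hw0) hprod) hu0]
    refine mul_left_cancel₀ ha ?_
    linear_combination (a * ∏ i, (w' - r i)) * hu - (a * ∏ i, (w - r i)) * hv
  have norms : ∑ i, ‖f i‖ ≤ d * h + ∑ i, h / ‖w - r i‖ := by
    simp only [f, Fintype.sum_sum_type, Sum.elim_inl, Sum.elim_inr, norm_div, hw', div_one,
      sum_const, card_univ, Fintype.card_fin, nsmul_eq_mul, norm_sub_rev w w']
    gcongr
  have close := norm_prod_one_add_sub_one_le_two_mul norms hΔ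
  rw [ratio, ← Complex.ofReal_div, ← Complex.ofReal_one, ← Complex.ofReal_sub, Complex.norm_real,
    Real.norm_eq_abs] at close
  have hu0' : u ≠ 0 := by exact_mod_cast hu0
  calc (u - v) ^ 2 = |v / u - 1| ^ 2 * u ^ 2 := by
        rw [sq_abs]
        field_simp
        ring
    _ ≤ (2 * (d * h + ∑ i, h / ‖w - r i‖)) ^ 2 * u ^ 2 := by gcongr

private lemma four_mul_sq_add_sum_le {ρ : ι → ℝ} {B : ℝ} (hB : B = 6 * d * κ * h) (hB0 : 0 < B)
    (hd : 1 ≤ d) (hcard : Fintype.card ι ≤ 2 * d) (hρ : ∀ i, B ≤ ρ i) :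
    κ ^ 2 * (2 * (d * h + ∑ i, h / ρ i)) ^ 2 ≤
      8 * κ ^ 2 * d ^ 2 * h ^ 2 + 2 * ∑ i, B ^ 2 / (ρ i ^ 2 + B ^ 2) := by
  have hd1 : (1 : ℝ) ≤ d := by exact_mod_cast hd
  have hcard' : (Fintype.card ι : ℝ) ≤ 2 * d := by exact_mod_cast hcard
  have cauchy : (∑ i, h / ρ i) ^ 2 ≤ Fintype.card ι * ∑ i, (h / ρ i) ^ 2 :=
    sq_sum_le_card_mul_sum_sq
  have termwise (i : ι) :
      κ ^ 2 * 8 * (Fintype.card ι * (h / ρ i) ^ 2) ≤ 2 * (B ^ 2 / (ρ i ^ 2 + B ^ 2)) := by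
    have hρ0 := hB0.trans_le (hρ i)
    have hcoef : 8 * (Fintype.card ι : ℝ) ≤ 36 * d ^ 2 := by nlinarith
    calc κ ^ 2 * 8 * (Fintype.card ι * (h / ρ i) ^ 2)
        = κ ^ 2 * (8 * Fintype.card ι) * (h / ρ i) ^ 2 := by ring
      _ ≤ κ ^ 2 * (36 * d ^ 2) * (h / ρ i) ^ 2 := by gcongr
      _ = 2 * (B ^ 2 / (ρ i ^ 2 + ρ i ^ 2)) := by
        rw [hB]
        field_simp
        ring
      _ ≤ 2 * (B ^ 2 / (ρ i ^ 2 + B ^ 2)) := by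
        gcongr
        exact hρ i
  calc κ ^ 2 * (2 * (d * h + ∑ i, h / ρ i)) ^ 2
      ≤ 8 * κ ^ 2 * d ^ 2 * h ^ 2 + κ ^ 2 * 8 * (∑ i, h / ρ i) ^ 2 := by
        linarith [mul_nonneg (sq_nonneg κ) (sq_nonneg (d * h - ∑ i, h / ρ i))]
    _ ≤ 8 * κ ^ 2 * d ^ 2 * h ^ 2 + κ ^ 2 * 8 * (Fintype.card ι * ∑ i, (h / ρ i) ^ 2) := by gcongr
    _ ≤ 8 * κ ^ 2 * d ^ 2 * h ^ 2 + 2 * ∑ i, B ^ 2 / (ρ i ^ 2 + B ^ 2) := by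
        rw [mul_sum, mul_sum, mul_sum]
        exact add_le_add_right (sum_le_sum fun i _ => termwise i) _

lemma ratioTest_sub_le_of_eq_mul_prod (hd : 1 ≤ d) (hcard : Fintype.card ι ≤ 2 * d)
    (hw' : ‖w'‖ = 1) (ha : a ≠ 0) (hh : ‖w' - w‖ ≤ h) (hh0 : 0 < h) (hκ : 1 ≤ κ)
    (hdh : d * h ≤ 1 / 2) (hu : w ^ d * (u : ℂ) = a * ∏ i, (w - r i))
    (hv : w' ^ d * (v : ℂ) = a * ∏ i, (w' - r i)) :
    ratioTest (A * u) (κ * A * u + -(κ * A) * v) ≤ 8 * κ ^ 2 * d ^ 2 * h ^ 2 +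
      2 * ∑ i, (6 * d * κ * h) ^ 2 / (‖w - r i‖ ^ 2 + (6 * d * κ * h) ^ 2) := by
  have : (1 : ℝ) ≤ d := by exact_mod_cast hd
  have hB : 0 < 6 * d * κ * h := by positivity
  refine le_add_two_mul_sum_of_far hB (fun i => norm_nonneg (w - r i)) (by positivity)
    (ratioTest_le_one _ _) fun far => ?_
  have hr (i : ι) : w - r i ≠ 0 := norm_ne_zero_iff.1 (hB.trans_le (far i)).ne'
  have hΔ : d * h + ∑ i, h / ‖w - r i‖ ≤ 1 := by
    have roots : ∑ i, h / ‖w - r i‖ ≤ 1 / 2 := calc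
      ∑ i, h / ‖w - r i‖ ≤ ∑ _i : ι, h / (6 * d * κ * h) := by
        gcongr with i
        exact far i
      _ = Fintype.card ι * (1 / (6 * d * κ)) := by
        rw [sum_const, card_univ, nsmul_eq_mul]
        field_simp
      _ ≤ (2 * d : ℕ) * (1 / (6 * d * 1)) := by gcongr
      _ ≤ 1 / 2 := by
        push_cast
        field_simp
        norm_num
    linarith
  have key := sq_sub_le_of_eq_mul_prod hw' ha hu hv hr hh hΔ
  refine (ratioTest_le_of_sq_le (by positivity) ?_).trans
    (four_mul_sq_add_sum_le rfl hB hd hcard far)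
  calc (κ * A * u + -(κ * A) * v) ^ 2 = κ ^ 2 * A ^ 2 * (u - v) ^ 2 := by ring
    _ ≤ κ ^ 2 * A ^ 2 * ((2 * (d * h + ∑ i, h / ‖w - r i‖)) ^ 2 * u ^ 2) := by gcongr
    _ = _ := by ring

lemma ratioTest_le_of_eq_mul_prod {N : ℝ} (hN : 1 ≤ N) (hcard : Fintype.card ι ≤ 2 * d)
    (hw : ‖w‖ = 1) (hw' : ‖w'‖ = 1) (hu : w ^ d * (u : ℂ) = a * ∏ i, (w - r i))
    (hv : w' ^ d * (v : ℂ) = a * ∏ i, (w' - r i)) :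
    ratioTest ((3 * N) ^ (2 * d) * N * u) v ≤
      1 / N ^ 2 + 2 * ∑ i, (1 / N) ^ 2 / (‖w - r i‖ ^ 2 + (1 / N) ^ 2) := by
  refine le_add_two_mul_sum_of_far (by positivity) (fun i => norm_nonneg (w - r i)) (by positivity)
    (ratioTest_le_one _ _) fun far => ?_
  have norm_u : |u| = ‖a‖ * ∏ i, ‖w - r i‖ := by simpa [hw] using congrArg norm hu
  have norm_v : |v| = ‖a‖ * ∏ i, ‖w' - r i‖ := by simpa [hw'] using congrArg norm hv
  have factor_le (i : ι) : ‖w' - r i‖ ≤ 3 * N * ‖w - r i‖ := by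
    have h₁ := norm_sub_le_norm_sub_add_norm_sub w' w (r i)
    have h₂ : ‖w' - w‖ ≤ 2 := by linarith [norm_sub_le w' w]
    have h₃ := (div_le_iff₀ (by linarith)).1 (far i)
    linarith [mul_le_mul_of_nonneg_right hN (norm_nonneg (w - r i))]
  have abs_v_le : |v| ≤ (3 * N) ^ (2 * d) * |u| := calc
    |v| ≤ ‖a‖ * ∏ i, (3 * N * ‖w - r i‖) := by
      rw [norm_v]
      gcongr with i
      exact factor_le i
    _ = (3 * N) ^ Fintype.card ι * |u| := by
      rw [prod_mul_distrib, prod_const, card_univ, norm_u]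
      ring
    _ ≤ (3 * N) ^ (2 * d) * |u| := by
      gcongr
      linarith
  have small : ratioTest ((3 * N) ^ (2 * d) * N * u) v ≤ 1 / N ^ 2 := by
    refine ratioTest_le_of_sq_le (by positivity) ?_
    calc v ^ 2 ≤ ((3 * N) ^ (2 * d) * |u|) ^ 2 := sq_le_sq.2 (abs_v_le.trans (le_abs_self _))
      _ = _ := by
        rw [mul_pow, sq_abs]
        field_simp
  exact small.trans (le_add_of_nonneg_right (by positivity))

end NearRoots

section Circle

variable {N : ℕ} [NeZero N] {d : ℕ}

local notation "𝐞" => ZMod.stdAddChar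

private lemma sum_le_of_le_add_near_roots {F : ZMod N → ℝ} {m : ℕ} {r : Fin m → ℂ} {ε B : ℝ}
    (hB : 0 < B) (hm : m ≤ 2 * d)
    (hF : ∀ k, F k ≤ ε + 2 * ∑ i, B ^ 2 / (‖𝐞 k - r i‖ ^ 2 + B ^ 2)) :
    ∑ k, F k ≤ N * ε + 4 * d * (1 + 2 * B * N) := calc
  ∑ k, F k ≤ ∑ k : ZMod N, (ε + 2 * ∑ i, B ^ 2 / (‖𝐞 k - r i‖ ^ 2 + B ^ 2)) :=
    sum_le_sum fun k _ => hF k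
  _ = N * ε + 2 * ∑ i, ∑ k : ZMod N, B ^ 2 / (‖𝐞 k - r i‖ ^ 2 + B ^ 2) := by
    rw [sum_add_distrib, sum_const, card_univ, ZMod.card, nsmul_eq_mul, ← mul_sum, sum_comm]
  _ ≤ N * ε + 2 * ∑ _i : Fin m, (1 + 2 * B * N) := by
    gcongr with i
    exact sum_sq_div_norm_stdAddChar_sub_sq_le hB (r i)
  _ ≤ N * ε + 2 * ((2 * d : ℕ) * (1 + 2 * B * N)) := by
    rw [sum_const, card_univ, Fintype.card_fin, nsmul_eq_mul]
    gcongr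
  _ = N * ε + 4 * d * (1 + 2 * B * N) := by
    push_cast
    ring

lemma IsTrigPoly.sum_ratioTest_sub_le {g : ZMod N → ℝ} (hg : IsTrigPoly d g) (hd : 1 ≤ d)
    {κ A : ℝ} (hκ : 1 ≤ κ) (hκN : κ ≤ N) (hdN : 14 * d ≤ N) :
    ∑ k, ratioTest (A * g k) (κ * A * g k + -(κ * A) * g (k + 1)) ≤ 732 * d ^ 2 * κ := by
  have hN : 0 < (N : ℝ) := Nat.cast_pos.2 (NeZero.pos N)
  have hd1 : (1 : ℝ) ≤ d := by exact_mod_cast hd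
  obtain rfl | ⟨m, hm, r, a, ha, hr⟩ := hg.eq_zero_or_exists_roots
  · simp only [Pi.zero_apply, mul_zero, add_zero, ratioTest, ne_eq, OfNat.ofNat_ne_zero,
      not_false_eq_true, zero_pow, zero_div, sum_const_zero]
    positivity
  have hdh : (d : ℝ) * (7 / N) ≤ 1 / 2 := by
    have : (14 * d : ℝ) ≤ N := by exact_mod_cast hdN
    rw [mul_div_assoc', div_le_iff₀ hN]
    linarith
  refine (sum_le_of_le_add_near_roots (by positivity) hm fun k =>
    ratioTest_sub_le_of_eq_mul_prod hd (by rwa [Fintype.card_fin])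
      (AddChar.norm_apply _ (k + 1)) ha (norm_stdAddChar_add_one_sub_le k) (by positivity) hκ hdh
      (hr k) (hr (k + 1))).trans ?_
  calc N * (8 * κ ^ 2 * d ^ 2 * (7 / N) ^ 2) + 4 * d * (1 + 2 * (6 * d * κ * (7 / N)) * N)
      = 392 * d ^ 2 * κ * (κ / N) + 4 * d + 336 * d ^ 2 * κ := by
        field_simp
        ring
    _ ≤ 392 * d ^ 2 * κ * 1 + 4 * (d ^ 2 * κ) + 336 * d ^ 2 * κ := by
        gcongr
        · exact (div_le_one hN).2 hκN
        · nlinarith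
    _ = 732 * d ^ 2 * κ := by ring

lemma IsTrigPoly.sum_ratioTest_le {g : ZMod N → ℝ} (hg : IsTrigPoly d g) (hd : 1 ≤ d)
    (m₀ : ZMod N) :
    ∑ k, ratioTest ((3 * N) ^ (2 * d) * N * g k) (g (k + m₀)) ≤ 13 * d := by
  have hN : 1 ≤ (N : ℝ) := by exact_mod_cast NeZero.pos N
  have hd1 : (1 : ℝ) ≤ d := by exact_mod_cast hd
  obtain rfl | ⟨m, hm, r, a, -, hr⟩ := hg.eq_zero_or_exists_roots
  · simp only [Pi.zero_apply, mul_zero, ratioTest, ne_eq, OfNat.ofNat_ne_zero, not_false_eq_true,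
      zero_pow, zero_div, sum_const_zero]
    positivity
  refine (sum_le_of_le_add_near_roots (by positivity) hm fun k =>
    ratioTest_le_of_eq_mul_prod hN (by rwa [Fintype.card_fin]) (AddChar.norm_apply _ k)
      (AddChar.norm_apply _ (k + m₀)) (hr k) (hr (k + m₀))).trans ?_
  calc N * (1 / N ^ 2) + 4 * d * (1 + 2 * (1 / N) * N) = 1 / (N : ℝ) + 12 * d := by
        field_simp
        ring
    _ ≤ 1 + 12 * d := by
        gcongr
        exact div_le_one_of_le₀ hN (by positivity)
    _ ≤ 13 * d := by linarith

variable {ι : Type*} [Fintype ι] [DecidableEq ι] {c : MLPoly ι}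

lemma expectation_circleWeight_eq_average_shift (F : (ι → ZMod N) → ℝ) :
    𝔼[circleWeight N] F =
      𝔼[circleWeight N] (fun ω => (∑ k : ZMod N, F fun i => ω i + k) / N) := by
  have hN : (N : ℝ) ≠ 0 := Nat.cast_ne_zero.2 (NeZero.ne N)
  have shift (k : ZMod N) :
      𝔼[circleWeight N] (fun ω => F fun i => ω i + k) = 𝔼[circleWeight N] F :=
    Equiv.sum_comp (Equiv.addRight fun _ : ι => k) fun ω => piWeight (circleWeight N) ω * F ω
  simp only [div_eq_mul_inv, expectation_mul_const, expectation_sum, shift, sum_const, card_univ,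
    ZMod.card, nsmul_eq_mul]
  field_simp

lemma expectation_ratioTest_circleCoord_sub_le (hd : 1 ≤ d) {κ A : ℝ} (hκ : 1 ≤ κ) (hκN : κ ≤ N)
    (hdN : 14 * d ≤ N) (hc : c.DegLE d) :
    𝔼[circleWeight N] (fun ω => ratioTest (A * c.randEval (fun _ => circleCoord) ω)
        (κ * A * c.randEval (fun _ => circleCoord) ω +
          -(κ * A) * c.randEval (fun _ k => circleCoord (k + 1)) ω)) ≤ 732 * d ^ 2 * κ / N := by
  rw [expectation_circleWeight_eq_average_shift]
  refine (isProbWeight_circleWeight.pi.expectation_mono fun ω => ?_).trans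
    (isProbWeight_circleWeight.pi.expectation_const _).le
  have h := (IsTrigPoly.randEval_circleCoord hc ω).sum_ratioTest_sub_le hd (A := A) hκ hκN hdN
  simp only [← add_assoc] at h
  gcongr
  exact h

lemma expectation_ratioTest_circleCoord_le (hd : 1 ≤ d) (m₀ : ZMod N) (hc : c.DegLE d) :
    𝔼[circleWeight N] (fun ω => ratioTest
        ((3 * N) ^ (2 * d) * N * c.randEval (fun _ => circleCoord) ω)
        (c.randEval (fun _ k => circleCoord (k + m₀)) ω)) ≤ 13 * d / N := by
  rw [expectation_circleWeight_eq_average_shift]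
  refine (isProbWeight_circleWeight.pi.expectation_mono fun ω => ?_).trans
    (isProbWeight_circleWeight.pi.expectation_const _).le
  have h := (IsTrigPoly.randEval_circleCoord hc ω).sum_ratioTest_le hd m₀
  simp only [← add_assoc] at h
  gcongr
  exact h

end Circle

section Merge

variable {ι Ω : Type*}

/-- The point that agrees with `x` on the coordinates selected by `t` and with `y` elsewhere. -/
def merge (t : ι → Bool) (x y : ι → Ω) : ι → Ω := fun i => if t i then x i else y i

lemma merge_update [DecidableEq ι] (t : ι → Bool) (x y : ι → Ω) (i : ι) (a : Ω) :
    merge t (Function.update x i a) y =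
      if t i then Function.update (merge t x y) i a else merge t x y := by
  funext k
  by_cases hk : k = i
  · subst hk
    cases h : t k <;> simp [merge, h]
  · cases h : t i <;> simp [merge, hk]

variable [Fintype ι] [DecidableEq ι] [Fintype Ω]

/-- Exchanging the selected coordinates of two independent points preserves their joint
distribution. -/
lemma IsProbWeight.expectation_merge {w : Ω → ℝ} (hw : IsProbWeight w) (t : ι → Bool)
    (F : (ι → Ω) → ℝ) : 𝔼[w] (fun y => 𝔼[w] fun x => F (merge t x y)) = 𝔼[w] F := by
  have hswap : Function.Involutive fun q : (ι → Ω) × (ι → Ω) =>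
      (merge t q.2 q.1, merge t q.1 q.2) := fun q => by
    refine Prod.ext ?_ ?_ <;> funext i <;> simp only [merge] <;> split_ifs <;> rfl
  have hweight (x y : ι → Ω) :
      piWeight w (merge t x y) * piWeight w (merge t y x) = piWeight w x * piWeight w y := by
    simp only [piWeight, ← prod_mul_distrib]
    refine prod_congr rfl fun i _ => ?_
    rw [merge, merge]
    split_ifs
    · rfl
    · exact mul_comm _ _
  calc 𝔼[w] (fun y => 𝔼[w] fun x => F (merge t x y))
      = expectation (prodWeight (piWeight w) (piWeight w)) (fun q => F (merge t q.2 q.1)) := by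
        rw [expectation_prodWeight]
    _ = expectation (prodWeight (piWeight w) (piWeight w)) (fun q => F q.1) := by
        simp only [expectation]
        rw [← Equiv.sum_comp hswap.toPerm fun q => prodWeight _ _ q * F q.1]
        refine sum_congr rfl fun q _ => ?_
        simp only [Function.Involutive.coe_toPerm, prodWeight, hweight, mul_comm (piWeight w q.2)]
    _ = 𝔼[w] F := by simp only [expectation_prodWeight, hw.pi.expectation_const]

end Merge

namespace MLPoly

section RestrictTo

variable {ι : Type*} [Fintype ι]

/-- The polynomial in the variables selected by `t` that is obtained from `c` by giving every other
variable `i` the value `chi (y i)`. -/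
noncomputable def restrictTo (t y : ι → Bool) (c : MLPoly ι) : MLPoly ι := fun S =>
  ∑ U with U.filter (t ·) = S, c U * ∏ i ∈ U with ¬ t i, chi (y i)

protected lemma DegLE.restrictTo {d : ℕ} {c : MLPoly ι} (hc : c.DegLE d) (t y : ι → Bool) :
    (c.restrictTo t y).DegLE d := fun S hS => by
  refine sum_eq_zero fun U hU => ?_
  obtain rfl := (mem_filter.1 hU).2
  rw [hc U (hS.trans_le (card_filter_le _ _)), zero_mul]

lemma cubeEval_restrictTo (t y : ι → Bool) (c : MLPoly ι) (x : ι → Bool) :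
    (c.restrictTo t y).cubeEval x = c.cubeEval (merge t x y) := by
  have hprod (U : Finset ι) : ∏ i ∈ U, chi (merge t x y i) =
      (∏ i ∈ U with ¬ t i, chi (y i)) * ∏ i ∈ U with t i, chi (x i) := by
    rw [← prod_filter_mul_prod_filter_not U (fun i => t i = true), mul_comm]
    congr 1 <;> refine prod_congr rfl fun i hi => ?_ <;> simp [merge, (mem_filter.1 hi).2]
  simp only [cubeEval_eq_sum, hprod]
  refine Eq.trans (sum_congr rfl fun S _ => ?_)
    (sum_fiberwise univ (fun U : Finset ι => U.filter (t ·)) _)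
  rw [restrictTo, sum_mul]
  refine sum_congr rfl fun U hU => ?_
  rw [(mem_filter.1 hU).2, mul_assoc]

lemma sgn_restrictTo (t y : ι → Bool) (c : MLPoly ι) :
    (c.restrictTo t y).sgn = fun x => c.sgn (merge t x y) := by
  funext x
  rw [sgn, cubeEval_restrictTo, sgn]

end RestrictTo

end MLPoly

/-- The number of coordinates selected by `t` whose flip changes `f`. -/
noncomputable def sensOn {n : ℕ} (t : Fin n → Bool) (f : (Fin n → Bool) → ℝ) (x : Fin n → Bool) :
    ℕ :=
  #{i ∈ {i | f (flipAt x i) ≠ f x} | t i}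

lemma sens_comp_merge {n : ℕ} (f : (Fin n → Bool) → ℝ) (t y x : Fin n → Bool) :
    sens (fun z => f (merge t z y)) x = sensOn t f (merge t x y) := by
  rw [sens, sensOn]
  congr 1
  ext i
  have hflip : merge t (flipAt x i) y = if t i then flipAt (merge t x y) i else merge t x y := by
    rw [flipAt, merge_update]
    split_ifs with h
    · simp [flipAt, merge, h]
    · rfl
  cases h : t i <;> simp [hflip, h]

lemma expectation_sensMoment_restrictTo {n : ℕ} (α : ℝ) (t : Fin n → Bool) (c : MLPoly (Fin n)) :
    𝔼[coin] (fun y => sensMoment α (c.restrictTo t y).sgn) =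
      𝔼[coin] (fun x => (sensOn t c.sgn x : ℝ) ^ α) := by
  rw [← isProbWeight_coin.expectation_merge t fun x => (sensOn t c.sgn x : ℝ) ^ α]
  simp only [sensMoment, MLPoly.sgn_restrictTo, sens_comp_merge]

/-- The weights of a coin that shows `true` with probability `δ`. -/
noncomputable def biasedCoin (δ : ℝ) : Bool → ℝ := fun b => if b then δ else 1 - δ

section BiasedCoin

variable {δ : ℝ}

lemma isProbWeight_biasedCoin (h0 : 0 ≤ δ) (h1 : δ ≤ 1) : IsProbWeight (biasedCoin δ) :=
  ⟨fun b => by cases b <;> simp [biasedCoin] <;> linarith, by simp [biasedCoin]⟩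

lemma expectation_biasedCoin_ite (δ : ℝ) :
    expectation (biasedCoin δ) (fun b => if b then 1 else 0) = δ := by
  simp [expectation, biasedCoin]

variable {ι : Type*} [Fintype ι] [DecidableEq ι]

lemma expectation_card_filter (h0 : 0 ≤ δ) (h1 : δ ≤ 1) (S : Finset ι) :
    𝔼[biasedCoin δ] (fun t => (#{i ∈ S | t i} : ℝ)) = δ * #S := by
  have hw := isProbWeight_biasedCoin h0 h1
  have hcoord (i : ι) : 𝔼[biasedCoin δ] (fun t => if t i then (1 : ℝ) else 0) = δ := by
    simpa [hw.pi.expectation_const, expectation_biasedCoin_ite] using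
      hw.expectation_pi_mul i (fun b => if b then 1 else 0) (G := fun _ => 1) fun _ _ => rfl
  simp only [natCast_card_filter, expectation_sum, hcoord, sum_const, nsmul_eq_mul, mul_comm]

lemma expectation_card_filter_sq_le (h0 : 0 ≤ δ) (h1 : δ ≤ 1) (S : Finset ι) :
    𝔼[biasedCoin δ] (fun t => (#{i ∈ S | t i} : ℝ) ^ 2) ≤ (δ * #S) ^ 2 + δ * #S := by
  have hw := isProbWeight_biasedCoin h0 h1
  induction S using Finset.induction_on with
  | empty => simp [hw.pi.expectation_const]
  | insert a S ha ih =>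
    have expand (t : ι → Bool) : (#{i ∈ insert a S | t i} : ℝ) ^ 2 =
        (if t a then 1 else 0) * (2 * #{i ∈ S | t i} + 1) + (#{i ∈ S | t i} : ℝ) ^ 2 := by
      rw [filter_insert]
      split_ifs
      · rw [card_insert_of_notMem (by simp [ha])]
        push_cast
        ring
      · ring
    have indep : ∀ (t : ι → Bool) b, (2 * #{i ∈ S | Function.update t a b i} + 1 : ℝ) =
        2 * #{i ∈ S | t i} + 1 := fun t b => by
      congr 4
      exact filter_congr fun i hi => by rw [Function.update_of_ne (ne_of_mem_of_not_mem hi ha)]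
    simp only [expand, expectation_add]
    rw [hw.expectation_pi_mul a (fun b => if b then 1 else 0) indep, expectation_biasedCoin_ite,
      expectation_add, expectation_const_mul, expectation_card_filter h0 h1,
      hw.pi.expectation_const, card_insert_of_notMem ha]
    push_cast
    nlinarith

end BiasedCoin

lemma sub_sq_div_four_le_rpow {α u : ℝ} (h0 : 0 < α) (h1 : α ≤ 1) (hu : 0 ≤ u) :
    u - u ^ 2 / 4 ≤ u ^ α := by
  rcases le_total u 1 with h | h
  · have := Real.rpow_le_rpow_of_exponent_ge' hu h h0.le h1
    rw [Real.rpow_one] at this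
    linarith [sq_nonneg u]
  · have := Real.one_le_rpow h h0.le
    linarith [sq_nonneg (u / 2 - 1)]

lemma IsProbWeight.rpow_mean_le {Ω : Type*} [Fintype Ω] {w : Ω → ℝ} (hw : IsProbWeight w)
    {α m : ℝ} (h0 : 0 < α) (h1 : α ≤ 1) {X : Ω → ℝ} (hX : ∀ a, 0 ≤ X a)
    (mean : expectation w X = m) (sq : expectation w (fun a => X a ^ 2) ≤ m ^ 2 + m) :
    m ^ α ≤ 2 * expectation w (fun a => X a ^ α) + 1 := by
  have hnonneg := hw.expectation_nonneg fun a => Real.rpow_nonneg (hX a) α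
  have hm0 : 0 ≤ m := mean ▸ hw.expectation_nonneg hX
  rcases le_or_gt m 1 with h | h
  · linarith [Real.rpow_le_one hm0 h h0.le]
  have hm : 0 < m := by linarith
  have pointwise (a : Ω) :
      m ^ α * (1 / m * X a - 1 / (4 * m ^ 2) * X a ^ 2) ≤ X a ^ α := by
    calc m ^ α * (1 / m * X a - 1 / (4 * m ^ 2) * X a ^ 2)
        = m ^ α * (X a / m - (X a / m) ^ 2 / 4) := by
          field_simp
      _ ≤ m ^ α * (X a / m) ^ α := by
          gcongr
          exact sub_sq_div_four_le_rpow h0 h1 (div_nonneg (hX a) hm0)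
      _ = X a ^ α := by
          rw [← Real.mul_rpow hm0 (div_nonneg (hX a) hm0), mul_div_cancel₀ _ hm.ne']
  have averaged := hw.expectation_mono pointwise
  simp only [expectation_const_mul, expectation_sub, mean] at averaged
  have hsq : 1 / (4 * m ^ 2) * expectation w (fun a => X a ^ 2) ≤ 1 / 2 := by
    calc 1 / (4 * m ^ 2) * expectation w (fun a => X a ^ 2)
        ≤ 1 / (4 * m ^ 2) * (2 * m ^ 2) := by
          gcongr
          nlinarith
      _ = 1 / 2 := by
          field_simp
          norm_num
  have half : m ^ α * (1 / 2) ≤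
      m ^ α * (1 / m * m - 1 / (4 * m ^ 2) * expectation w (fun a => X a ^ 2)) := by
    gcongr
    rw [one_div_mul_cancel hm.ne']
    linarith
  linarith

/-- A random set of density `δ` retains about a fraction `δ` of the sensitive coordinates. -/
theorem rpow_mul_sensMoment_sgn_le {n : ℕ} {α δ : ℝ} (h0 : 0 < α) (h1 : α ≤ 1) (hδ0 : 0 ≤ δ)
    (hδ1 : δ ≤ 1) (c : MLPoly (Fin n)) :
    δ ^ α * sensMoment α c.sgn ≤
      2 * 𝔼[biasedCoin δ] (fun t => 𝔼[coin] fun y => sensMoment α (c.restrictTo t y).sgn) + 1 := by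
  have pointwise (x : Fin n → Bool) : δ ^ α * (sens c.sgn x : ℝ) ^ α ≤
      2 * 𝔼[biasedCoin δ] (fun t => (sensOn t c.sgn x : ℝ) ^ α) + 1 := by
    rw [← Real.mul_rpow hδ0 (Nat.cast_nonneg _)]
    exact (isProbWeight_biasedCoin hδ0 hδ1).pi.rpow_mean_le h0 h1 (fun t => Nat.cast_nonneg _)
      (expectation_card_filter hδ0 hδ1 _) (expectation_card_filter_sq_le hδ0 hδ1 _)
  simp only [expectation_sensMoment_restrictTo]
  rw [expectation_comm]
  simpa only [expectation_const_mul, expectation_add, isProbWeight_coin.pi.expectation_const,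
    sensMoment] using isProbWeight_coin.pi.expectation_mono pointwise

lemma IsProbWeight.sq_expectation_sq_le_mul_ratioTest {Ω : Type*} [Fintype Ω] {w : Ω → ℝ}
    (hw : IsProbWeight w) (X Y : Ω → ℝ) :
    expectation w (fun a => Y a ^ 2) ^ 2 ≤ expectation w (fun a => ratioTest (X a) (Y a)) *
      expectation w (fun a => Y a ^ 2 * (X a ^ 2 + Y a ^ 2 + 1)) := by
  have := hw.nonneg
  refine sum_sq_le_sum_mul_sum_of_sq_le_mul _
    (fun a _ => mul_nonneg (this a) (ratioTest_nonneg _ _))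
    (fun a _ => mul_nonneg (this a) (by positivity)) fun a _ => le_of_eq ?_
  simp only [ratioTest]
  field_simp

lemma sub_pow_four_le (a b : ℝ) : (a - b) ^ 4 ≤ 8 * a ^ 4 + 8 * b ^ 4 :=
  calc (a - b) ^ 4 = ((a - b) ^ 2) ^ 2 := by ring
    _ ≤ (2 * (a ^ 2 + b ^ 2)) ^ 2 := by
      gcongr
      linarith [sq_nonneg (a + b)]
    _ ≤ 8 * a ^ 4 + 8 * b ^ 4 := by linarith [sq_nonneg (a ^ 2 - b ^ 2)]

namespace MLPoly

section Anticoncentration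

variable {ι : Type*} [Fintype ι] [DecidableEq ι] {d : ℕ} {c : MLPoly ι} {A κ : ℝ}

lemma expectation_cubeEval_sub_sq (c : MLPoly ι) :
    𝔼[coin] (fun x => 𝔼[coin] fun y => (c.cubeEval x - c.cubeEval y) ^ 2) = 2 * c.variance := by
  simp only [sub_sq, expectation_add, expectation_sub, expectation_const_mul, expectation_mul_const,
    isProbWeight_coin.pi.expectation_const, expectation_cubeEval, expectation_cubeEval_sq,
    normSq_eq_sq_add_variance]
  ring

lemma DegLE.expectation_cubeEval_sub_pow_four_le (hc : c.DegLE d) :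
    𝔼[coin] (fun x => 𝔼[coin] fun y => (c.cubeEval x - c.cubeEval y) ^ 4) ≤
      16 * 9 ^ d * c.variance ^ 2 := by
  have pointwise (x y : ι → Bool) : (c.cubeEval x - c.cubeEval y) ^ 4 ≤
      8 * c.center.cubeEval x ^ 4 + 8 * c.center.cubeEval y ^ 4 := by
    have center (x : ι → Bool) : c.cubeEval x = c ∅ + c.center.cubeEval x := eval_eq_add_center c _
    rw [center x, center y, add_sub_add_left_eq_sub]
    exact sub_pow_four_le _ _
  have averaged := isProbWeight_coin.pi.expectation_mono fun x =>
    isProbWeight_coin.pi.expectation_mono (pointwise x)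
  simp only [expectation_add, expectation_const_mul, isProbWeight_coin.pi.expectation_const]
    at averaged
  have := hc.center.expectation_cubeEval_pow_four_le
  rw [← variance] at this
  linarith

lemma half_le_expectation_inv_sq_add_one (h : A ^ 2 * c.normSq ≤ 1) :
    1 / 2 ≤ 𝔼[coin] (fun x => 1 / ((A * c.cubeEval x) ^ 2 + 1)) := by
  have tangent (x : ι → Bool) :
      3 / 4 - A ^ 2 / 4 * c.cubeEval x ^ 2 ≤ 1 / ((A * c.cubeEval x) ^ 2 + 1) := by
    rw [le_div_iff₀ (by positivity)]
    linarith [sq_nonneg ((A * c.cubeEval x) ^ 2 - 1)]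
  have averaged := isProbWeight_coin.pi.expectation_mono tangent
  rw [expectation_sub, expectation_const_mul, isProbWeight_coin.pi.expectation_const,
    expectation_cubeEval_sq] at averaged
  linarith

lemma DegLE.expectation_sub_sq_mul_le (hc : c.DegLE d) (hκ : c.normSq ≤ κ ^ 2 * c.variance)
    (hA : 1 ≤ κ ^ 2 * A ^ 2 * c.variance) :
    𝔼[coin] (fun x => 𝔼[coin] fun y =>
      (κ * A * c.cubeEval x + -(κ * A) * c.cubeEval y) ^ 2 * ((A * c.cubeEval x) ^ 2 +
        (κ * A * c.cubeEval x + -(κ * A) * c.cubeEval y) ^ 2 + 1)) ≤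
      27 * 9 ^ d * (κ ^ 2 * A ^ 2 * c.variance) ^ 2 := by
  have pointwise (x y : ι → Bool) :
      (κ * A * c.cubeEval x + -(κ * A) * c.cubeEval y) ^ 2 * ((A * c.cubeEval x) ^ 2 +
        (κ * A * c.cubeEval x + -(κ * A) * c.cubeEval y) ^ 2 + 1) ≤
      3 / 2 * (κ * A) ^ 4 * (c.cubeEval x - c.cubeEval y) ^ 4 +
        1 / 2 * A ^ 4 * c.cubeEval x ^ 4 + (κ * A) ^ 2 * (c.cubeEval x - c.cubeEval y) ^ 2 := by
    linarith [sq_nonneg ((κ * A * (c.cubeEval x - c.cubeEval y)) ^ 2 - (A * c.cubeEval x) ^ 2)]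
  have averaged := isProbWeight_coin.pi.expectation_mono fun x =>
    isProbWeight_coin.pi.expectation_mono (pointwise x)
  simp only [expectation_add, expectation_const_mul, isProbWeight_coin.pi.expectation_const,
    expectation_cubeEval_sub_sq] at averaged
  refine averaged.trans ?_
  have hnorm := c.normSq_nonneg
  have h9 : (1 : ℝ) ≤ 9 ^ d := one_le_pow₀ (by norm_num)
  calc _ ≤ 3 / 2 * (κ * A) ^ 4 * (16 * 9 ^ d * c.variance ^ 2) +
        1 / 2 * A ^ 4 * (9 ^ d * (κ ^ 2 * c.variance) ^ 2) +
          1 * (1 * (κ ^ 2 * A ^ 2 * c.variance)) * 2 := by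
        gcongr ?_ + ?_ + ?_
        · gcongr
          exact hc.expectation_cubeEval_sub_pow_four_le
        · gcongr
          exact hc.expectation_cubeEval_pow_four_le.trans (by gcongr)
        · linarith
    _ ≤ 3 / 2 * (κ * A) ^ 4 * (16 * 9 ^ d * c.variance ^ 2) +
        1 / 2 * A ^ 4 * (9 ^ d * (κ ^ 2 * c.variance) ^ 2) +
          9 ^ d * (κ ^ 2 * A ^ 2 * c.variance * (κ ^ 2 * A ^ 2 * c.variance)) * 2 := by
        gcongr
    _ ≤ 27 * 9 ^ d * (κ ^ 2 * A ^ 2 * c.variance) ^ 2 := by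
        have : 0 ≤ (9 : ℝ) ^ d * (κ ^ 2 * A ^ 2 * c.variance) ^ 2 := by positivity
        linarith

lemma DegLE.one_le_expectation_ratioTest_sub (hc : c.DegLE d)
    (hκ : c.normSq ≤ κ ^ 2 * c.variance) (hA : 1 ≤ κ ^ 2 * A ^ 2 * c.variance) :
    1 ≤ 8 * 9 ^ d * 𝔼[coin] (fun x => 𝔼[coin] fun y =>
      ratioTest (A * c.cubeEval x) (κ * A * c.cubeEval x + -(κ * A) * c.cubeEval y)) := by
  set V := κ ^ 2 * A ^ 2 * c.variance with hV
  set E := 𝔼[coin] (fun x => 𝔼[coin] fun y =>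
    ratioTest (A * c.cubeEval x) (κ * A * c.cubeEval x + -(κ * A) * c.cubeEval y))
  have hE : 0 ≤ E := isProbWeight_coin.pi.expectation_nonneg fun x =>
    isProbWeight_coin.pi.expectation_nonneg fun y => ratioTest_nonneg _ _
  have cauchy := (isProbWeight_coin.pi.prod isProbWeight_coin.pi).sq_expectation_sq_le_mul_ratioTest
    (fun q => A * c.cubeEval q.1) fun q => κ * A * c.cubeEval q.1 + -(κ * A) * c.cubeEval q.2
  simp only [expectation_prodWeight] at cauchy
  have second : 𝔼[coin] (fun x => 𝔼[coin] fun y =>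
      (κ * A * c.cubeEval x + -(κ * A) * c.cubeEval y) ^ 2) = 2 * V := by
    have factor (x y : ι → Bool) : (κ * A * c.cubeEval x + -(κ * A) * c.cubeEval y) ^ 2 =
        κ ^ 2 * A ^ 2 * (c.cubeEval x - c.cubeEval y) ^ 2 := by ring
    simp only [factor, expectation_const_mul, expectation_cubeEval_sub_sq]
    ring
  have : V ^ 2 * 4 ≤ V ^ 2 * (27 * 9 ^ d * E) := by
    have := cauchy.trans (mul_le_mul_of_nonneg_left (hc.expectation_sub_sq_mul_le hκ hA) hE)
    rw [second, ← hV] at this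
    linarith
  linarith [le_of_mul_le_mul_left this (pow_pos (zero_lt_one.trans_le hA) 2)]

lemma DegLE.one_le_of_not_skew (hc : c.DegLE d) {K : ℝ} (hκ : K + 1 ≤ κ ^ 2)
    (hns : ¬ K * c.variance ≤ c ∅ ^ 2) (A : ℝ) :
    1 ≤ 8 * 9 ^ d * 𝔼[coin] (fun x => 𝔼[coin] fun y =>
          ratioTest (A * c.cubeEval x) (κ * A * c.cubeEval x + -(κ * A) * c.cubeEval y))
      + 2 * 𝔼[coin] (fun x => 1 / ((A * c.cubeEval x) ^ 2 + 1)) := by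
  have hnorm : c.normSq ≤ κ ^ 2 * c.variance := by
    rw [normSq_eq_sq_add_variance]
    nlinarith [c.variance_nonneg]
  rcases le_total (κ ^ 2 * A ^ 2 * c.variance) 1 with hV | hV
  · have small := half_le_expectation_inv_sq_add_one (A := A) (c := c) (by nlinarith [sq_nonneg A])
    have := isProbWeight_coin.pi.expectation_nonneg fun x =>
      isProbWeight_coin.pi.expectation_nonneg fun y =>
        ratioTest_nonneg (A * c.cubeEval x) (κ * A * c.cubeEval x + -(κ * A) * c.cubeEval y)
    have h9 : (0 : ℝ) ≤ 8 * 9 ^ d := by positivity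
    linarith [mul_nonneg h9 this]
  · have := isProbWeight_coin.pi.expectation_nonneg fun x : ι → Bool =>
      show 0 ≤ 1 / ((A * c.cubeEval x) ^ 2 + 1) by positivity
    linarith [hc.one_le_expectation_ratioTest_sub hnorm hV]

lemma DegLE.expectation_inv_sq_add_one_le (hc : c.DegLE d) (hnorm : 1 ≤ c.normSq) (A : ℝ) :
    𝔼[coin] (fun x => 1 / ((A * c.cubeEval x) ^ 2 + 1)) ≤ (1 + 9 ^ d) *
      𝔼[coin] (fun x => 𝔼[coin] fun y => ratioTest (A * c.cubeEval x) (c.cubeEval y)) := by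
  rw [← expectation_const_mul]
  refine isProbWeight_coin.pi.expectation_mono fun x => ?_
  set s := (A * c.cubeEval x) ^ 2 + 1
  set E := 𝔼[coin] fun y => ratioTest (A * c.cubeEval x) (c.cubeEval y)
  have hs : 1 ≤ s := le_add_of_nonneg_left (sq_nonneg _)
  have hE : 0 ≤ E := isProbWeight_coin.pi.expectation_nonneg fun y => ratioTest_nonneg _ _
  have fourth : 𝔼[coin] (fun y => c.cubeEval y ^ 2 *
      ((A * c.cubeEval x) ^ 2 + c.cubeEval y ^ 2 + 1)) ≤ s * (1 + 9 ^ d) * c.normSq ^ 2 := by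
    have expand (y : ι → Bool) :
        c.cubeEval y ^ 2 * ((A * c.cubeEval x) ^ 2 + c.cubeEval y ^ 2 + 1) =
        s * c.cubeEval y ^ 2 + c.cubeEval y ^ 4 := by ring
    simp only [expand, expectation_add, expectation_const_mul, expectation_cubeEval_sq]
    calc s * c.normSq + 𝔼[coin] (fun y => c.cubeEval y ^ 4)
        ≤ s * c.normSq ^ 2 + s * (9 ^ d * c.normSq ^ 2) := by
          gcongr
          · exact le_self_pow₀ hnorm two_ne_zero
          · exact hc.expectation_cubeEval_pow_four_le.trans
              (le_mul_of_one_le_left (by positivity) hs)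
      _ = s * (1 + 9 ^ d) * c.normSq ^ 2 := by ring
  have cauchy := isProbWeight_coin.pi.sq_expectation_sq_le_mul_ratioTest
    (fun _ => A * c.cubeEval x) c.cubeEval
  rw [expectation_cubeEval_sq] at cauchy
  have scaled := cauchy.trans (mul_le_mul_of_nonneg_left fourth hE)
  have : 1 ≤ (1 + 9 ^ d) * E * s := by
    refine le_of_mul_le_mul_right ?_ (pow_pos (zero_lt_one.trans_le hnorm) 2)
    linarith
  rwa [div_le_iff₀ (by positivity)]

end Anticoncentration

end MLPoly

section CoinPairs

lemma isStandardizedPair_prod_coin :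
    IsStandardizedPair (prodWeight coin coin) (fun q => chi q.1) (fun q => chi q.2) 0 := by
  refine ⟨⟨?_, ?_, ?_, ?_⟩, ⟨?_, ?_, ?_, ?_⟩, ?_, ?_, ?_⟩ <;>
    norm_num [expectation, Fintype.sum_prod_type, prodWeight, coin, chi]

/-- The weights of `(t, y, x, x')` with `t` a coin of bias `δ` and `y`, `x`, `x'` fair coins, all
independent. -/
noncomputable def resampleWeight (δ : ℝ) : Bool × Bool × Bool × Bool → ℝ :=
  prodWeight (biasedCoin δ) (prodWeight coin (prodWeight coin coin))

lemma isProbWeight_resampleWeight {δ : ℝ} (h0 : 0 ≤ δ) (h1 : δ ≤ 1) :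
    IsProbWeight (resampleWeight δ) :=
  (isProbWeight_biasedCoin h0 h1).prod
    (isProbWeight_coin.prod (isProbWeight_coin.prod isProbWeight_coin))

lemma isStandardizedPair_resampleWeight (δ : ℝ) :
    IsStandardizedPair (resampleWeight δ) (fun q => chi (if q.1 then q.2.2.1 else q.2.1))
      (fun q => chi (if q.1 then q.2.2.2 else q.2.1)) (1 - δ) := by
  refine ⟨⟨?_, ?_, ?_, ?_⟩, ⟨?_, ?_, ?_, ?_⟩, ?_, ?_, ?_⟩ <;>
  · simp only [expectation, Fintype.sum_prod_type, Fintype.sum_bool, resampleWeight, prodWeight,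
      biasedCoin, coin, chi, if_true, if_false, Bool.false_eq_true]
    ring_nf
    try norm_num

variable {ι : Type*} [Fintype ι] [DecidableEq ι]

lemma MLPoly.expectation_prod_coin (c : MLPoly ι) (F : ℝ → ℝ → ℝ) :
    𝔼[prodWeight coin coin] (fun ω => F (c.randEval (fun _ q => chi q.1) ω)
        (c.randEval (fun _ q => chi q.2) ω)) =
      𝔼[coin] (fun x => 𝔼[coin] fun y => F (c.cubeEval x) (c.cubeEval y)) := by
  rw [expectation_pi_prodWeight]
  rfl

lemma MLPoly.expectation_resampleWeight (δ : ℝ) (c : MLPoly ι) (F : ℝ → ℝ → ℝ) :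
    𝔼[resampleWeight δ] (fun ω =>
        F (c.randEval (fun _ q => chi (if q.1 then q.2.2.1 else q.2.1)) ω)
          (c.randEval (fun _ q => chi (if q.1 then q.2.2.2 else q.2.1)) ω)) =
      𝔼[biasedCoin δ] (fun t => 𝔼[coin] fun y => 𝔼[coin] fun x => 𝔼[coin] fun x' =>
        F ((c.restrictTo t y).cubeEval x) ((c.restrictTo t y).cubeEval x')) := by
  simp only [resampleWeight, expectation_pi_prodWeight, cubeEval_restrictTo]
  rfl

end CoinPairs

/-- The bias `1 - cos (2π / N)` of a coin, chosen so that the pair in `resampleWeight` has the same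
correlation as two neighbouring points of the circle `ZMod N`. -/
noncomputable def circleGap (N : ℕ) [NeZero N] : ℝ := 1 - (ZMod.stdAddChar (1 : ZMod N)).re

section CircleGap

variable {N : ℕ} [NeZero N]

lemma le_circleGap (hN : 2 ≤ N) : 8 / (N : ℝ) ^ 2 ≤ circleGap N := by
  rw [circleGap]
  linarith [re_stdAddChar_one_le hN]

lemma circleGap_le_one (hN : 7 ≤ N) : circleGap N ≤ 1 := by
  have hN' : (7 : ℝ) ≤ N := by exact_mod_cast hN
  have dist := norm_stdAddChar_add_one_sub_le (N := N) 0
  rw [zero_add, AddChar.map_zero_eq_one] at dist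
  have hre := (Complex.abs_re_le_norm _).trans dist
  rw [Complex.sub_re, Complex.one_re] at hre
  have : 7 / (N : ℝ) ≤ 1 := div_le_one_of_le₀ hN' (by positivity)
  rw [circleGap]
  linarith [neg_abs_le ((ZMod.stdAddChar (1 : ZMod N)).re - 1)]

lemma one_le_rpow_mul_circleGap_rpow {α : ℝ} (h0 : 0 ≤ α) (hN : 2 ≤ N) :
    1 ≤ (N : ℝ) ^ (2 * α) * circleGap N ^ α := by
  have hgap := le_circleGap hN
  have hgap0 : 0 ≤ circleGap N := le_trans (by positivity) hgap
  have hN0 : (0 : ℝ) < N := by positivity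
  rw [Real.rpow_mul hN0.le, ← Real.mul_rpow (by positivity) hgap0]
  refine Real.one_le_rpow ?_ h0
  rw [Real.rpow_ofNat]
  rw [div_le_iff₀' (by positivity)] at hgap
  linarith

end CircleGap

namespace MLPoly

section Regular

variable {ι : Type*} [DecidableEq ι]

lemma pderiv_smul (a : ℝ) (c : MLPoly ι) (j : ι) : (a • c).pderiv j = a • c.pderiv j := by
  funext S
  simp only [pderiv, Pi.smul_apply, smul_eq_mul]
  split_ifs <;> simp

variable [Fintype ι] {d : ℕ} {c : MLPoly ι} {τ κ A : ℝ}

lemma IsRegular.smul (hc : c.IsRegular τ) (a : ℝ) : (a • c).IsRegular τ := fun j => by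
  rw [pderiv_smul, normSq_smul, variance_smul]
  linarith [mul_le_mul_of_nonneg_left (hc j) (sq_nonneg a)]

lemma IsRegular.sum_normSq_pderiv_sq_le (hreg : c.IsRegular τ) (hc : c.DegLE d) (hτ : 0 ≤ τ) :
    ∑ j, (c.pderiv j).normSq ^ 2 ≤ τ * d * c.variance ^ 2 :=
  calc ∑ j, (c.pderiv j).normSq ^ 2
      ≤ ∑ j, τ * c.variance * (c.pderiv j).normSq := by
        refine sum_le_sum fun j _ => ?_
        rw [sq]
        exact mul_le_mul_of_nonneg_right (hreg j) (normSq_nonneg _)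
    _ = τ * c.variance * c.totalInfluence := by rw [← mul_sum, sum_normSq_pderiv]
    _ ≤ τ * c.variance * (d * c.variance) := by
        have := c.variance_nonneg
        gcongr
        exact hc.totalInfluence_le
    _ = τ * d * c.variance ^ 2 := by ring

variable {N L : ℕ} [NeZero N]

lemma DegLE.expectation_ratioTest_restrictTo_sub_le (hc : c.DegLE d) (hd : 1 ≤ d) (hL : N = 4 * L)
    (hκ : 1 ≤ κ) (hκN : κ ≤ N) (hdN : 14 * d ≤ N)
    (herr : 216000 * (κ * A) ^ 4 * 9 ^ d * ∑ j, (c.pderiv j).normSq ^ 2 ≤ 1 / N) :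
    𝔼[biasedCoin (circleGap N)] (fun t => 𝔼[coin] fun y => 𝔼[coin] fun x => 𝔼[coin] fun x' =>
      ratioTest (A * (c.restrictTo t y).cubeEval x)
        (κ * A * (c.restrictTo t y).cubeEval x + -(κ * A) * (c.restrictTo t y).cubeEval x')) ≤
      733 * d ^ 2 * κ / N := by
  have hd' : (1 : ℝ) ≤ d := by exact_mod_cast hd
  have hw := isProbWeight_resampleWeight
    (le_trans (by positivity) (le_circleGap (N := N) (by lia))) (circleGap_le_one (by lia))
  have circle := isStandardizedPair_circleCoord hL (1 : ZMod N)
  have resample := isStandardizedPair_resampleWeight (circleGap N)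
  rw [circleGap, sub_sub_cancel, ← circleGap] at resample
  have replacement := (le_abs_self _).trans <| abs_expectation_sub_le_sum_normSq_pderiv hw
    isProbWeight_circleWeight resample circle (by positivity)
    (hasCubicApprox_ratioTest_linear (A := A) (P := κ * A) (Q := -(κ * A)) (B := (κ * A) ^ 4)
      (by rw [mul_pow]; exact le_mul_of_one_le_left (by positivity) (one_le_pow₀ hκ)) le_rfl
      (by rw [Even.neg_pow (by decide)])) hc
  rw [expectation_resampleWeight _ c
    fun u v => ratioTest (A * u) (κ * A * u + -(κ * A) * v)] at replacement
  have bound := expectation_ratioTest_circleCoord_sub_le (N := N) hd hκ hκN hdN (A := A) hc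
  calc _ ≤ 732 * d ^ 2 * κ / (N : ℝ) + 1 / N := by linarith
    _ ≤ 733 * d ^ 2 * κ / N := by
      rw [← add_div]
      gcongr
      nlinarith [one_le_mul_of_one_le_of_one_le (one_le_pow₀ hd' (n := 2)) hκ]

lemma DegLE.expectation_ratioTest_le (hc : c.DegLE d) (hd : 1 ≤ d) (hL : N = 4 * L) {B : ℝ}
    (hB : 1 ≤ B) (hA : ((3 * N : ℝ) ^ (2 * d) * N) ^ 4 ≤ B)
    (herr : 216000 * B * 9 ^ d * ∑ j, (c.pderiv j).normSq ^ 2 ≤ 1 / N) :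
    𝔼[coin] (fun x => 𝔼[coin] fun y =>
      ratioTest ((3 * N) ^ (2 * d) * N * c.cubeEval x) (c.cubeEval y)) ≤ 14 * d / N := by
  have hd' : (1 : ℝ) ≤ d := by exact_mod_cast hd
  have circle := isStandardizedPair_circleCoord hL (L : ZMod N)
  rw [stdAddChar_quarter hL, Complex.I_re] at circle
  have approx := hasCubicApprox_ratioTest_linear (P := 0) (Q := 1) hA
    (by rw [zero_pow (by norm_num)]; linarith) (by rwa [one_pow])
  simp only [zero_mul, one_mul, zero_add] at approx
  have replacement := (le_abs_self _).trans <| abs_expectation_sub_le_sum_normSq_pderiv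
    (isProbWeight_coin.prod isProbWeight_coin) isProbWeight_circleWeight
    isStandardizedPair_prod_coin circle (by linarith) approx hc
  rw [expectation_prod_coin c fun u v => ratioTest ((3 * N) ^ (2 * d) * N * u) v] at replacement
  have bound := expectation_ratioTest_circleCoord_le (N := N) hd (L : ZMod N) hc
  calc _ ≤ 13 * d / (N : ℝ) + 1 / N := by linarith
    _ ≤ 14 * d / N := by
      rw [← add_div]
      gcongr
      linarith

end Regular

section RegularCase

lemma expectation_comp_restrictTo {ι : Type*} [Fintype ι] [DecidableEq ι] (c : MLPoly ι)
    (t : ι → Bool) (G : ℝ → ℝ) :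
    𝔼[coin] (fun y => 𝔼[coin] fun x => G ((c.restrictTo t y).cubeEval x)) =
      𝔼[coin] (fun x => G (c.cubeEval x)) := by
  simp only [cubeEval_restrictTo]
  exact isProbWeight_coin.expectation_merge t fun x => G (c.cubeEval x)

variable {n d N L : ℕ} {α δ τ κ K M : ℝ} {c : MLPoly (Fin n)}

lemma DegLE.sensMoment_sgn_le_add_mul (hκ : K + 1 ≤ κ ^ 2) (hM0 : 0 ≤ M)
    (hM : sensMoment α c.sgn ≤ M)
    (hskew : K * c.variance ≤ c ∅ ^ 2 → sensMoment α c.sgn ≤ 1) (hc : c.DegLE d) (A : ℝ) :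
    sensMoment α c.sgn ≤ 1 + M * (8 * 9 ^ d * 𝔼[coin] (fun x => 𝔼[coin] fun y =>
          ratioTest (A * c.cubeEval x) (κ * A * c.cubeEval x + -(κ * A) * c.cubeEval y))
      + 2 * 𝔼[coin] (fun x => 1 / ((A * c.cubeEval x) ^ 2 + 1))) := by
  by_cases hs : K * c.variance ≤ c ∅ ^ 2
  · refine (hskew hs).trans (le_add_of_nonneg_right (mul_nonneg hM0 (add_nonneg ?_ ?_))) <;>
      refine mul_nonneg (by positivity) (isProbWeight_coin.pi.expectation_nonneg fun x => ?_)
    · exact isProbWeight_coin.pi.expectation_nonneg fun y => ratioTest_nonneg _ _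
    · positivity
  · linarith [le_mul_of_one_le_right hM0 (hc.one_le_of_not_skew hκ hs A)]

lemma DegLE.rpow_mul_sensMoment_sgn_le_add_mul (h0 : 0 < α) (h1 : α ≤ 1) (hδ0 : 0 ≤ δ)
    (hδ1 : δ ≤ 1) (hκ : K + 1 ≤ κ ^ 2) (hM0 : 0 ≤ M)
    (hM : ∀ c : MLPoly (Fin n), c.DegLE d → sensMoment α c.sgn ≤ M)
    (hskew : ∀ c : MLPoly (Fin n), c.DegLE d → K * c.variance ≤ c ∅ ^ 2 →
      sensMoment α c.sgn ≤ 1) (hc : c.DegLE d) (A : ℝ) :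
    δ ^ α * sensMoment α c.sgn ≤ 3 + 2 * (M * (8 * 9 ^ d *
        𝔼[biasedCoin δ] (fun t => 𝔼[coin] fun y => 𝔼[coin] fun x => 𝔼[coin] fun x' =>
          ratioTest (A * (c.restrictTo t y).cubeEval x) (κ * A * (c.restrictTo t y).cubeEval x +
            -(κ * A) * (c.restrictTo t y).cubeEval x'))
      + 2 * 𝔼[coin] (fun x => 1 / ((A * c.cubeEval x) ^ 2 + 1)))) := by
  have hδ := (isProbWeight_biasedCoin hδ0 hδ1).pi (ι := Fin n)
  have averaged := hδ.expectation_mono fun t => isProbWeight_coin.pi.expectation_mono fun y =>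
    have hq := hc.restrictTo t y
    hq.sensMoment_sgn_le_add_mul hκ hM0 (hM _ hq) (hskew _ hq) A
  simp only [expectation_add, expectation_const_mul, isProbWeight_coin.pi.expectation_const,
    hδ.expectation_const, c.expectation_comp_restrictTo _ fun u => 1 / ((A * u) ^ 2 + 1)]
    at averaged
  linarith [rpow_mul_sensMoment_sgn_le h0 h1 hδ0 hδ1 c]

/-- The constraints that link the number `N` of points of the circle, the factor `κ` by which
differences of values are magnified, and the threshold `K` above which `c ∅ ^ 2 / c.variance` counts
as skew. -/
structure IsAdmissible (d N : ℕ) (K κ : ℝ) : Prop where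
  four_dvd : 4 ∣ N
  mul_le : 14 * d ≤ N
  one_le : 1 ≤ κ
  le_natCast : κ ≤ N
  nonneg : 0 ≤ K
  add_one_le_sq : K + 1 ≤ κ ^ 2

private lemma regularCase_error_le (hκ : 1 ≤ κ) :
    8 * 9 ^ d * (733 * d ^ 2 * κ / N) + 2 * ((1 + 9 ^ d) * (14 * d / N)) ≤
      6000 * 9 ^ d * d ^ 2 * κ / N := by
  rw [mul_div_assoc', mul_div_assoc', mul_div_assoc', ← add_div]
  gcongr
  have h9 : (1 : ℝ) ≤ 9 ^ d := one_le_pow₀ (by norm_num)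
  have hd2 : (d : ℝ) ≤ d ^ 2 := by exact_mod_cast Nat.le_self_pow two_ne_zero d
  have hdκ : (d : ℝ) ≤ d ^ 2 * κ := hd2.trans (le_mul_of_one_le_right (by positivity) hκ)
  have hd9 : (d : ℝ) ≤ 9 ^ d * d := le_mul_of_one_le_left (by positivity) h9
  linarith [mul_le_mul_of_nonneg_left hdκ (zero_le_one.trans h9)]

lemma IsRegular.sensMoment_sgn_le_of_variance_eq_one (h0 : 0 < α) (h1 : α ≤ 1) (hd : 1 ≤ d)
    (hadm : IsAdmissible d N K κ) (hτ0 : 0 ≤ τ)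
    (hτ : 216000 * (κ * ((3 * N) ^ (2 * d) * N)) ^ 4 * 9 ^ d * (τ * d) ≤ 1 / N)
    (hM : ∀ c : MLPoly (Fin n), c.DegLE d → sensMoment α c.sgn ≤ M)
    (hskew : ∀ c : MLPoly (Fin n), c.DegLE d → K * c.variance ≤ c ∅ ^ 2 →
      sensMoment α c.sgn ≤ 1)
    (hc : c.DegLE d) (hreg : c.IsRegular τ) (hvar : c.variance = 1) :
    sensMoment α c.sgn ≤ (N : ℝ) ^ (2 * α) * (3 + 12000 * 9 ^ d * d ^ 2 * κ * M / N) := by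
  obtain ⟨⟨L, hL⟩, hdN, hκ1, hκN, -, hκ⟩ := hadm
  have : NeZero N := ⟨by lia⟩
  have hM0 : 0 ≤ M := (sensMoment_nonneg _ _).trans (hM c hc)
  set A : ℝ := (3 * N) ^ (2 * d) * N
  have hN : (1 : ℝ) ≤ N := by exact_mod_cast (by lia : 1 ≤ N)
  have hA : 1 ≤ A := one_le_mul_of_one_le_of_one_le (one_le_pow₀ (by linarith)) hN
  have herr : 216000 * (κ * A) ^ 4 * 9 ^ d * ∑ j, (c.pderiv j).normSq ^ 2 ≤ 1 / N := by
    refine le_trans ?_ hτ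
    gcongr
    simpa [hvar] using hreg.sum_normSq_pderiv_sq_le hc hτ0
  have hgap0 : 0 ≤ circleGap N := le_trans (by positivity) (le_circleGap (by lia))
  have sampled := hc.rpow_mul_sensMoment_sgn_le_add_mul h0 h1
    hgap0 (circleGap_le_one (by lia)) hκ hM0 hM hskew A
  have difference := hc.expectation_ratioTest_restrictTo_sub_le hd hL hκ1 hκN hdN herr
  have small : 𝔼[coin] (fun x => 1 / ((A * c.cubeEval x) ^ 2 + 1)) ≤
      (1 + 9 ^ d) * (14 * d / N) := by
    refine (hc.expectation_inv_sq_add_one_le ?_ A).trans ?_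
    · linarith [c.normSq_eq_sq_add_variance, sq_nonneg (c ∅)]
    · gcongr
      exact hc.expectation_ratioTest_le hd hL
        (one_le_pow₀ (one_le_mul_of_one_le_of_one_le hκ1 hA))
        (pow_le_pow_left₀ (by positivity) (le_mul_of_one_le_left (by positivity) hκ1) 4) herr
  calc sensMoment α c.sgn
      ≤ (N : ℝ) ^ (2 * α) * circleGap N ^ α * sensMoment α c.sgn :=
        le_mul_of_one_le_left (sensMoment_nonneg _ _)
          (one_le_rpow_mul_circleGap_rpow h0.le (by lia))
    _ = (N : ℝ) ^ (2 * α) * (circleGap N ^ α * sensMoment α c.sgn) := by ring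
    _ ≤ (N : ℝ) ^ (2 * α) * (3 + 2 * (M * (6000 * 9 ^ d * d ^ 2 * κ / N))) := by
        gcongr
        refine sampled.trans ?_
        gcongr
        refine le_trans ?_ (regularCase_error_le hκ1)
        gcongr
    _ = (N : ℝ) ^ (2 * α) * (3 + 12000 * 9 ^ d * d ^ 2 * κ * M / N) := by ring

lemma IsRegular.sensMoment_sgn_le (h0 : 0 < α) (h1 : α ≤ 1) (hd : 1 ≤ d)
    (hadm : IsAdmissible d N K κ) (hτ0 : 0 ≤ τ)
    (hτ : 216000 * (κ * ((3 * N) ^ (2 * d) * N)) ^ 4 * 9 ^ d * (τ * d) ≤ 1 / N)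
    (hM : ∀ c : MLPoly (Fin n), c.DegLE d → sensMoment α c.sgn ≤ M)
    (hskew : ∀ c : MLPoly (Fin n), c.DegLE d → K * c.variance ≤ c ∅ ^ 2 →
      sensMoment α c.sgn ≤ 1)
    (hc : c.DegLE d) (hreg : c.IsRegular τ) :
    sensMoment α c.sgn ≤ (N : ℝ) ^ (2 * α) * (3 + 12000 * 9 ^ d * d ^ 2 * κ * M / N) := by
  rcases c.variance_nonneg.eq_or_lt' with hvar | hvar
  · rw [sensMoment_sgn_of_variance_eq_zero h0 hvar]
    have hM0 : 0 ≤ M := (sensMoment_nonneg _ _).trans (hM c hc)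
    have hκ0 : 0 ≤ κ := zero_le_one.trans hadm.one_le
    positivity
  · have ha : 0 < 1 / √c.variance := by positivity
    rw [← sgn_smul ha c]
    refine (hreg.smul _).sensMoment_sgn_le_of_variance_eq_one h0 h1 hd hadm hτ0 hτ hM hskew
      (hc.smul _) ?_
    rw [variance_smul, div_pow, Real.sq_sqrt hvar.le, one_pow, one_div_mul_cancel hvar.ne']

end RegularCase

section Recursion

lemma one_sub_pow_le_inv {x y : ℝ} {t : ℕ} (hx : x ≤ 1) (hy : 0 < y) (h : y ≤ t * x) :
    (1 - x) ^ t ≤ y⁻¹ :=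
  calc (1 - x) ^ t ≤ Real.exp (-x) ^ t :=
        pow_le_pow_left₀ (by linarith) (Real.one_sub_le_exp_neg x) t
    _ = (Real.exp (t * x))⁻¹ := by rw [← Real.exp_nat_mul, ← Real.exp_neg, mul_neg]
    _ ≤ y⁻¹ := by
        gcongr
        linarith [Real.add_one_le_exp (t * x)]

lemma exists_isLUB_sensMoment_sgn {α : ℝ} (h0 : 0 < α) (h1 : α ≤ 1) (n d : ℕ) :
    ∃ M, IsLUB {r | ∃ c : MLPoly (Fin n), c.DegLE d ∧ sensMoment α c.sgn = r} M := by
  refine Real.exists_isLUB ⟨_, 0, fun S _ => rfl, rfl⟩ ⟨n, ?_⟩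
  rintro r ⟨c, -, rfl⟩
  exact sensMoment_le_card h0 h1 _

variable {n d N : ℕ} {α κ K M : ℝ} {c : MLPoly (Fin n)}

/-- The inverse of the regularity at which the replacement error is at most `1 / N`. -/
def regularityScale (d N : ℕ) : ℕ :=
  216000 * 9 ^ d * d * 3 ^ (8 * d) * N ^ (8 * d + 9)

lemma IsAdmissible.mul_one_div_regularityScale_le (hd : 1 ≤ d) (hadm : IsAdmissible d N K κ) :
    216000 * (κ * ((3 * N) ^ (2 * d) * N)) ^ 4 * 9 ^ d * (1 / regularityScale d N * d) ≤
      1 / (N : ℝ) := by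
  have hκ0 : 0 ≤ κ := zero_le_one.trans hadm.one_le
  have hN : 0 < (N : ℝ) := zero_lt_one.trans_le (hadm.one_le.trans hadm.le_natCast)
  calc 216000 * (κ * ((3 * N) ^ (2 * d) * N)) ^ 4 * 9 ^ d * (1 / regularityScale d N * d)
      ≤ 216000 * (N * ((3 * N) ^ (2 * d) * (N : ℝ))) ^ 4 * 9 ^ d *
          (1 / regularityScale d N * d) := by
        gcongr
        exact hadm.le_natCast
    _ = 1 / (N : ℝ) := by
        have h3 : (3 : ℝ) ^ (8 * d) = (3 ^ (2 * d)) ^ 4 := by rw [← pow_mul]; ring_nf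
        have hpow : (N : ℝ) ^ (8 * d + 9) = (N ^ (2 * d)) ^ 4 * N ^ 9 := by ring
        rw [regularityScale]
        push_cast
        rw [h3, hpow]
        simp only [mul_pow]
        field_simp

lemma IsRegular.sensMoment_sgn_le_add_mul (h0 : 0 < α) (h1 : α ≤ 1) (hd : 1 ≤ d)
    (hadm : IsAdmissible d N K κ) (hgap : 192000 * 81 ^ d * d ^ 2 * κ * (N : ℝ) ^ (2 * α) ≤ N)
    (hM : ∀ c : MLPoly (Fin n), c.DegLE d → sensMoment α c.sgn ≤ M)
    (hskew : ∀ c : MLPoly (Fin n), c.DegLE d → K * c.variance ≤ c ∅ ^ 2 →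
      sensMoment α c.sgn ≤ 1)
    (hc : c.DegLE d) (hreg : c.IsRegular (1 / regularityScale d N)) :
    sensMoment α c.sgn ≤ 3 * N + M * (1 / (16 * 9 ^ d)) := by
  have hM0 : 0 ≤ M := (sensMoment_nonneg _ _).trans (hM c hc)
  have hN : 0 < (N : ℝ) := zero_lt_one.trans_le (hadm.one_le.trans hadm.le_natCast)
  have : 0 ≤ κ := zero_le_one.trans hadm.one_le
  have hNα : (N : ℝ) ^ (2 * α) ≤ N := by
    refine le_trans (le_mul_of_one_le_left (by positivity) ?_) hgap
    have h81 : (1 : ℝ) ≤ 81 ^ d := one_le_pow₀ (by norm_num)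
    have hd2 : (1 : ℝ) ≤ d ^ 2 := one_le_pow₀ (by exact_mod_cast hd)
    exact one_le_mul_of_one_le_of_one_le (one_le_mul_of_one_le_of_one_le
      (one_le_mul_of_one_le_of_one_le (by norm_num) h81) hd2) hadm.one_le
  calc sensMoment α c.sgn
      ≤ (N : ℝ) ^ (2 * α) * (3 + 12000 * 9 ^ d * d ^ 2 * κ * M / N) :=
        hreg.sensMoment_sgn_le h0 h1 hd hadm (by positivity)
          (hadm.mul_one_div_regularityScale_le hd) hM hskew hc
    _ = 3 * (N : ℝ) ^ (2 * α) + 192000 * 81 ^ d * d ^ 2 * κ * (N : ℝ) ^ (2 * α) *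
          (M / (16 * 9 ^ d * N)) := by
        rw [show (81 : ℝ) ^ d = 9 ^ d * 9 ^ d by rw [← mul_pow]; norm_num]
        field_simp
        ring
    _ ≤ 3 * N + N * (M / (16 * 9 ^ d * N)) := by gcongr
    _ = 3 * N + M * (1 / (16 * 9 ^ d)) := by field_simp

lemma one_le_regularityScale (hd : 1 ≤ d) (hN : 1 ≤ N) : 1 ≤ regularityScale d N := by
  unfold regularityScale
  exact Nat.pos_of_ne_zero (by positivity)

lemma two_mul_mul_one_sub_pow_mul_le {U : ℝ} {t : ℕ} (hd : 1 ≤ d) (hK : 0 ≤ K) (hU : 1 ≤ U)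
    (ht : 16 * 9 ^ d * d ^ 2 * (K + 1) * U ≤ t) :
    2 * (K + 1) * (1 - 1 / U / d) ^ t * d ≤ 1 / (8 * 9 ^ d) := by
  have hd1 : (1 : ℝ) ≤ d := by exact_mod_cast hd
  have hUd : 1 / U / d ≤ 1 := by
    rw [div_div]
    exact div_le_one_of_le₀ (one_le_mul_of_one_le_of_one_le hU hd1) (by positivity)
  have hexp : 16 * 9 ^ d * d * (K + 1) ≤ t * (1 / U / d) := by
    rw [div_div, mul_one_div, le_div_iff₀ (by positivity)]
    linarith
  calc 2 * (K + 1) * (1 - 1 / U / d) ^ t * d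
      ≤ 2 * (K + 1) * (16 * 9 ^ d * d * (K + 1))⁻¹ * d := by
        gcongr
        exact one_sub_pow_le_inv hUd (by positivity) hexp
    _ = 1 / (8 * 9 ^ d) := by
        field_simp
        norm_num

theorem DegLE.sensMoment_sgn_le_mul_pow (h0 : 0 < α) (h1 : α ≤ 1) (hd : 1 ≤ d)
    (hadm : IsAdmissible d N K κ) (hgap : 192000 * 81 ^ d * d ^ 2 * κ * (N : ℝ) ^ (2 * α) ≤ N)
    (hskew : ∀ c : MLPoly (Fin n), c.DegLE d → K * c.variance ≤ c ∅ ^ 2 →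
      sensMoment α c.sgn ≤ 1) (hc : c.DegLE d) :
    sensMoment α c.sgn ≤
      16 * 9 ^ d * (16 * 9 ^ d * d ^ 2 * (216000 * 9 ^ d * d * 3 ^ (8 * d)) + 4) *
        N ^ (8 * d + 11) := by
  obtain ⟨M, hlub⟩ := exists_isLUB_sensMoment_sgn h0 h1 n d
  have hM : ∀ c : MLPoly (Fin n), c.DegLE d → sensMoment α c.sgn ≤ M :=
    fun c hc => hlub.1 ⟨c, hc, rfl⟩
  have hM0 : 0 ≤ M := (sensMoment_nonneg _ _).trans (hM c hc)
  have hN1 : (1 : ℝ) ≤ N := hadm.one_le.trans hadm.le_natCast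
  have hscale : (1 : ℝ) ≤ regularityScale d N := by
    exact_mod_cast one_le_regularityScale hd (by exact_mod_cast hN1)
  set t : ℕ := 16 * 9 ^ d * d ^ 2 * N ^ 2 * regularityScale d N with ht
  have hKN : K + 1 ≤ (N : ℝ) ^ 2 := hadm.add_one_le_sq.trans
    (pow_le_pow_left₀ (zero_le_one.trans hadm.one_le) hadm.le_natCast 2)
  have decay := two_mul_mul_one_sub_pow_mul_le (t := t) hd hadm.nonneg hscale <| by
    rw [ht]
    push_cast
    gcongr
  have contraction : M ≤ t + 1 + (3 * N + M * (1 / (16 * 9 ^ d))) + M * (1 - 1 / (8 * 9 ^ d)) := by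
    refine hlub.2 ?_
    rintro _ ⟨q, hq, rfl⟩
    exact hq.sensMoment_sgn_le_of_decisionTree h0 h1 hd hM0 (by positivity) (by positivity)
      (div_le_one_of_le₀ hscale (by positivity)) hadm.nonneg hM
      (fun c hc hreg => hreg.sensMoment_sgn_le_add_mul h0 h1 hd hadm hgap hM hskew hc) hskew decay
  have hNpow : (N : ℝ) ≤ N ^ (8 * d + 11) := le_self_pow₀ hN1 (by lia)
  calc sensMoment α c.sgn ≤ M := hM c hc
    _ = 16 * 9 ^ d * (M * (1 / (8 * 9 ^ d)) - M * (1 / (16 * 9 ^ d))) := by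
        field_simp
        norm_num
    _ ≤ 16 * 9 ^ d * (t + 4 * N ^ (8 * d + 11)) := by
        gcongr
        linarith
    _ = _ := by
        rw [ht, regularityScale]
        push_cast
        ring

end Recursion

end MLPoly

section Parameters

lemma exists_pow_two_pow {n : ℕ} (hn : 1 ≤ n) :
    ∃ j : ℕ, (n : ℝ) * (n + 1) ≤ 2 ^ 2 ^ j ∧ 2 ^ j ≤ 10 * Real.log (Real.exp 1 * n) := by
  have hn1 : (1 : ℝ) ≤ n := by exact_mod_cast hn
  set ℓ := Real.log (Real.exp 1 * n) with ℓ_def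
  have hℓ : ℓ = 1 + Real.log n := by
    rw [ℓ_def, Real.log_mul (Real.exp_ne_zero _) (by positivity), Real.log_exp]
  have hlog : 0 ≤ Real.log n := Real.log_nonneg hn1
  set m := ⌈4 * ℓ⌉₊
  have hm : 4 * ℓ ≤ m := Nat.le_ceil _
  have hm2 : 2 ≤ m := by
    have : (2 : ℝ) ≤ m := by linarith
    exact_mod_cast this
  refine ⟨Nat.clog 2 m, ?_, ?_⟩
  · calc (n : ℝ) * (n + 1) ≤ 2 * n ^ 2 := by nlinarith
      _ ≤ 2 ^ m := by
          rw [← Real.log_le_log_iff (by positivity) (by positivity),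
            Real.log_mul two_ne_zero (by positivity), Real.log_pow, Real.log_pow]
          have : 4 * ℓ * Real.log 2 ≤ m * Real.log 2 := by gcongr
          push_cast
          nlinarith [Real.log_two_gt_d9, Real.log_two_lt_d9]
      _ ≤ 2 ^ 2 ^ Nat.clog 2 m :=
          pow_le_pow_right₀ one_le_two (Nat.le_pow_clog one_lt_two m)
  · have hlt := Nat.pow_pred_clog_lt_self one_lt_two hm2
    have hclog : 2 ^ Nat.clog 2 m ≤ 2 * m := by
      rw [← Nat.succ_pred_eq_of_pos (Nat.clog_pos one_lt_two hm2), pow_succ']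
      exact Nat.mul_le_mul_left 2 hlt.le
    calc (2 : ℝ) ^ Nat.clog 2 m ≤ 2 * m := by exact_mod_cast hclog
      _ ≤ 10 * ℓ := by linarith [Nat.ceil_lt_add_one (a := 4 * ℓ) (by linarith)]

namespace MLPoly

variable {α : ℝ} {d : ℕ}

lemma exists_isAdmissible {K κ : ℝ} (h0 : 0 < α) (h1 : α < 1 / 2) (hd : 1 ≤ d) (hκ : 1 ≤ κ)
    (hK : 0 ≤ K) (hKκ : K + 1 ≤ κ ^ 2) :
    ∃ N : ℕ, IsAdmissible d N K κ ∧ 192000 * 81 ^ d * d ^ 2 * κ * (N : ℝ) ^ (2 * α) ≤ N ∧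
      N ≤ 8 * (192000 * 81 ^ d * d ^ 2 * κ) ^ (1 / (1 - 2 * α)) := by
  have hα : 0 < 1 - 2 * α := by linarith
  set β := 1 / (1 - 2 * α)
  have hβ : 1 ≤ β := one_le_one_div hα (by linarith)
  set G := 192000 * 81 ^ d * d ^ 2 * κ with hG
  have hd1 : (1 : ℝ) ≤ d := by exact_mod_cast hd
  have h81 : (1 : ℝ) ≤ 81 ^ d := one_le_pow₀ (by norm_num)
  have hκG : κ ≤ G := le_mul_of_one_le_left (zero_le_one.trans hκ)
    (one_le_mul_of_one_le_of_one_le (one_le_mul_of_one_le_of_one_le (by norm_num) h81)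
      (one_le_pow₀ hd1))
  have hdG : 14 * d ≤ G :=
    calc (14 : ℝ) * d ≤ 192000 * 1 * d ^ 2 * 1 := by nlinarith
      _ ≤ G := by rw [hG]; gcongr
  have hGβ : G ≤ G ^ β := Real.self_le_rpow_of_one_le (hκ.trans hκG) hβ
  set L := ⌈G ^ β⌉₊
  have hL : G ^ β ≤ L := Nat.le_ceil _
  have hGN : G ^ β ≤ (4 * L : ℕ) := by push_cast; linarith
  have hN : (0 : ℝ) < (4 * L : ℕ) := by linarith
  refine ⟨4 * L, ⟨dvd_mul_right 4 L, ?_, hκ, by linarith, hK, hKκ⟩, ?_, ?_⟩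
  · exact_mod_cast hdG.trans (hGβ.trans hGN)
  · have hroot : G ≤ ((4 * L : ℕ) : ℝ) ^ (1 - 2 * α) := by
      rwa [← Real.rpow_inv_le_iff_of_pos (by linarith) hN.le hα, ← one_div]
    calc G * ((4 * L : ℕ) : ℝ) ^ (2 * α)
        ≤ ((4 * L : ℕ) : ℝ) ^ (1 - 2 * α) * ((4 * L : ℕ) : ℝ) ^ (2 * α) := by gcongr
      _ = (4 * L : ℕ) := by rw [← Real.rpow_add hN, sub_add_cancel, Real.rpow_one]
  · push_cast
    linarith [Nat.ceil_lt_add_one (a := G ^ β) (by linarith)]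

theorem DegLE.exists_sensMoment_sgn_le_mul_log_rpow (h0 : 0 < α) (h1 : α < 1 / 2) (hd : 1 ≤ d) :
    ∃ a b : ℝ, 0 < a ∧ ∀ n : ℕ, 1 ≤ n → ∀ c : MLPoly (Fin n), c.DegLE d →
      sensMoment α c.sgn ≤ a * Real.log (Real.exp 1 * n) ^ b := by
  set β := 1 / (1 - 2 * α)
  set p := 8 * d + 11
  set B : ℝ := 16 * 9 ^ d * (16 * 9 ^ d * d ^ 2 * (216000 * 9 ^ d * d * 3 ^ (8 * d)) + 4)
  set G : ℝ := 192000 * 81 ^ d * d ^ 2 * (2 * 10 ^ (2 * d))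
  refine ⟨B * (8 * G ^ β) ^ p, 2 * d * β * p, by positivity, fun n hn c hc => ?_⟩
  obtain ⟨j, hnj, hj⟩ := exists_pow_two_pow hn
  set ℓ := Real.log (Real.exp 1 * n)
  have hℓ : 1 ≤ 10 * ℓ := (one_le_pow₀ one_le_two).trans hj
  have hℓ0 : 0 ≤ ℓ := by linarith
  have hpow : 1 ≤ (10 * ℓ) ^ (2 * d) := one_le_pow₀ hℓ
  have hKκ : (2 : ℝ) * 9 ^ (d * j) + 1 ≤ (2 * (10 * ℓ) ^ (2 * d)) ^ 2 := by
    have h9 : (9 : ℝ) ^ (d * j) ≤ ((10 * ℓ) ^ (2 * d)) ^ 2 :=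
      calc (9 : ℝ) ^ (d * j) ≤ 16 ^ (d * j) := by gcongr; norm_num
        _ = ((2 ^ j) ^ (2 * d)) ^ 2 := by
            rw [show (16 : ℝ) = 2 ^ 4 by norm_num, ← pow_mul, ← pow_mul, ← pow_mul]
            ring_nf
        _ ≤ ((10 * ℓ) ^ (2 * d)) ^ 2 := by gcongr
    linarith [one_le_pow₀ hpow (n := 2)]
  obtain ⟨N, hadm, hgap, hN⟩ := exists_isAdmissible h0 h1 hd
    (by linarith : 1 ≤ 2 * (10 * ℓ) ^ (2 * d)) (by positivity) hKκ
  calc sensMoment α c.sgn ≤ B * N ^ p :=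
        hc.sensMoment_sgn_le_mul_pow h0 (by linarith) hd hadm hgap fun c hc hskew =>
          hc.sensMoment_sgn_le_one_of_skew h0 (by linarith) hskew hnj
    _ ≤ B * (8 * (192000 * 81 ^ d * d ^ 2 * (2 * (10 * ℓ) ^ (2 * d))) ^ β) ^ p := by gcongr
    _ = B * (8 * (G * ℓ ^ (2 * d)) ^ β) ^ p := by
        rw [mul_pow 10 ℓ, ← mul_assoc 2, ← mul_assoc _ _ (ℓ ^ _)]
    _ = B * (8 * G ^ β) ^ p * ℓ ^ (2 * d * β * p) := by
        rw [Real.mul_rpow (by positivity) (by positivity), ← mul_assoc, mul_pow, ← mul_assoc,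
          ← Real.rpow_natCast ℓ, ← Real.rpow_mul hℓ0, ← Real.rpow_natCast (ℓ ^ _),
          ← Real.rpow_mul hℓ0]
        push_cast
        rfl

end MLPoly

end Parameters

section CoefficientFamily

variable {n d : ℕ}

/-- The coefficient family of a polynomial: its entry at `S` is the coefficient of the squarefree
monomial `∏ i ∈ S, X i`. -/
noncomputable def MLPoly.ofMvPolynomial (p : MvPolynomial (Fin n) ℝ) : MLPoly (Fin n) :=
  fun S => p.coeff (Finsupp.indicator S fun _ _ => 1)

lemma support_indicator_one (S : Finset (Fin n)) :
    (Finsupp.indicator S fun _ _ => 1 : Fin n →₀ ℕ).support = S := by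
  ext i
  simp

lemma indicator_support_one_eq_self {m : Fin n →₀ ℕ} (hm : ∀ i, m i ≤ 1) :
    (Finsupp.indicator m.support fun _ _ => 1 : Fin n →₀ ℕ) = m := by
  ext i
  have := hm i
  rw [Finsupp.indicator_apply]
  grind

lemma MLPoly.degLE_ofMvPolynomial {p : MvPolynomial (Fin n) ℝ} (hp : p.totalDegree ≤ d) :
    (ofMvPolynomial p).DegLE d := by
  intro S hS
  refine MvPolynomial.coeff_eq_zero_of_totalDegree_lt (hp.trans_lt ?_)
  rw [support_indicator_one]
  refine hS.trans_eq ?_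
  rw [card_eq_sum_ones]
  exact sum_congr rfl fun i hi => by simp [hi]

lemma chi_ne_zero (b : Bool) : chi b ≠ 0 := by
  cases b <;> norm_num [chi]

lemma MLPoly.cubeEval_ofMvPolynomial {p : MvPolynomial (Fin n) ℝ}
    (hp : ∀ m ∈ p.support, ∀ i, m i ≤ 1) (x : Fin n → Bool) :
    (ofMvPolynomial p).cubeEval x = pev p x := by
  rw [pev, MvPolynomial.eval_eq, cubeEval, randEval, eq_comm]
  refine sum_bij_ne_zero (fun m _ _ => m.support) (fun _ _ _ => mem_univ _) ?_ ?_ ?_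
  · intro m hm _ m' hm' _ h
    rw [← indicator_support_one_eq_self (hp m hm), h, indicator_support_one_eq_self (hp m' hm')]
  · intro S _ hS
    have hcoeff := left_ne_zero_of_mul hS
    refine ⟨_, MvPolynomial.mem_support_iff.2 hcoeff, mul_ne_zero hcoeff ?_,
      support_indicator_one S⟩
    exact prod_ne_zero_iff.2 fun i _ => pow_ne_zero _ (chi_ne_zero _)
  · intro m hm _
    rw [ofMvPolynomial, indicator_support_one_eq_self (hp m hm)]
    congr 1
    refine prod_congr rfl fun i hi => ?_
    have := hp m hm i
    rw [show m i = 1 by grind, pow_one]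

lemma IsPTF.exists_eq_sgn {f : (Fin n → Bool) → ℝ} (hf : IsPTF d f) :
    ∃ c : MLPoly (Fin n), c.DegLE d ∧ f = c.sgn := by
  obtain ⟨p, hmultilinear, hdeg, hp⟩ := hf
  refine ⟨.ofMvPolynomial p, MLPoly.degLE_ofMvPolynomial hdeg, funext fun x => ?_⟩
  rw [(hp x).2, MLPoly.sgn, MLPoly.cubeEval_ofMvPolynomial hmultilinear]

end CoefficientFamily

lemma sensMoment_eq_sum_div {n : ℕ} (α : ℝ) (f : (Fin n → Bool) → ℝ) :
    sensMoment α f = (∑ x, (sens f x : ℝ) ^ α) / 2 ^ n := by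
  simp [sensMoment, expectation, piWeight, coin, ← mul_sum, div_eq_inv_mul]

/-- Subcritical fractional moments of the sensitivity of degree-`d` PTFs are polylogarithmic. -/
theorem sens_fractional_moment (d : ℕ) (hd : 1 ≤ d) (α : ℝ) (hα0 : 0 < α) (hα1 : α < 1 / 2) :
    ∃ C : ℝ, 0 < C ∧ ∀ n : ℕ, 1 ≤ n → ∀ f : (Fin n → Bool) → ℝ, IsPTF d f →
      (∑ x : Fin n → Bool, ((sens f x : ℝ)) ^ α) / 2 ^ n
        ≤ C * Real.log (Real.exp 1 * n) ^ C := by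
  obtain ⟨a, b, ha, hbound⟩ := MLPoly.DegLE.exists_sensMoment_sgn_le_mul_log_rpow hα0 hα1 hd
  refine ⟨max a b, lt_max_of_lt_left ha, fun n hn f hf => ?_⟩
  obtain ⟨c, hc, rfl⟩ := hf.exists_eq_sgn
  have hn1 : (1 : ℝ) ≤ n := by exact_mod_cast hn
  have hlog : 1 ≤ Real.log (Real.exp 1 * n) := by
    rw [Real.le_log_iff_exp_le (by positivity)]
    exact le_mul_of_one_le_right (Real.exp_pos 1).le hn1
  calc (∑ x, (sens c.sgn x : ℝ) ^ α) / 2 ^ n = sensMoment α c.sgn :=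
        (sensMoment_eq_sum_div α c.sgn).symm
    _ ≤ a * Real.log (Real.exp 1 * n) ^ b := hbound n hn c hc
    _ ≤ max a b * Real.log (Real.exp 1 * n) ^ max a b :=
        mul_le_mul (le_max_left a b) (Real.rpow_le_rpow_of_exponent_le hlog (le_max_right a b))
          (by positivity) (ha.le.trans (le_max_left a b))
end

section
/- Let n ≥ 1 and 1 ≤ m ≤ n be integers and let f : {-1,1}^n → {-1,1} be any function. Sample x uniformly on {-1,1}^n and, independently, a random set J ⊆ {1,…,n} by including each element independently with probability 1/m. Then P_{x,J}[∃ i ∈ J with f(x) ≠ f(x^{⊕i})] ≥ (1 − (1 − 1/m)^m) · P_x[s_f(x) ≥ m]; in particular the left-hand side is at least (1/2)·P_x[s_f(x) ≥ m]. -/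
/-! A random set `J` misses a fixed set `S` with probability `(1 - p) ^ #S`, because missing `S`
means being a random subset of `Sᶜ`. For `#S ≥ m` this is at most `(1 - p) ^ m`, and for `p = 1 / m`
at most `exp (-1) < 1 / 2`. Averaging over `x`, with `S` the set of sensitive coordinates at `x`,
gives the theorem. -/

open Finset
open scoped Classical

theorem sum_disjoint_pow_mul_pow {ι R : Type*} [Fintype ι] [CommSemiring R]
    (S : Finset ι) (p q : R) :
    ∑ J : Finset ι with Disjoint J S, p ^ #J * q ^ (Fintype.card ι - #J) =
      q ^ #S * (p + q) ^ #Sᶜ := by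
  have hfilter : ({J | Disjoint J S} : Finset (Finset ι)) = Sᶜ.powerset := by
    ext J
    simp [subset_compl_iff_disjoint_right]
  rw [hfilter, ← sum_pow_mul_eq_add_pow, mul_sum]
  refine sum_congr rfl fun J hJ => ?_
  have hcard : Fintype.card ι - #J = #S + (#Sᶜ - #J) := by
    have := card_le_card (mem_powerset.mp hJ)
    have := card_add_card_compl S
    omega
  rw [hcard, pow_add, mul_left_comm]

/-- The probability that a random subset of `ι`, containing each element independently with
probability `p`, meets `S`. It is a polynomial in `p`, so it is defined over any ring. -/
noncomputable def hittingProb {ι R : Type*} [Fintype ι] [Ring R] (p : R) (S : Finset ι) : R :=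
  ∑ J : Finset ι with ∃ i ∈ J, i ∈ S, p ^ #J * (1 - p) ^ (Fintype.card ι - #J)

theorem hittingProb_eq_one_sub_pow {ι R : Type*} [Fintype ι] [CommRing R]
    (p : R) (S : Finset ι) : hittingProb p S = 1 - (1 - p) ^ #S := by
  have hmiss : ∑ J : Finset ι with Disjoint J S, p ^ #J * (1 - p) ^ (Fintype.card ι - #J) =
      (1 - p) ^ #S := by
    rw [sum_disjoint_pow_mul_pow, add_sub_cancel, one_pow, mul_one]
  have htotal : ∑ J : Finset ι, p ^ #J * (1 - p) ^ (Fintype.card ι - #J) = 1 := by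
    rw [Fintype.sum_pow_mul_eq_add_pow, add_sub_cancel, one_pow]
  simp only [hittingProb, ← not_disjoint_iff]
  rw [eq_sub_iff_add_eq', ← hmiss, sum_filter_add_sum_filter_not, htotal]

theorem one_sub_pow_mul_sum_le_sum_mul_hittingProb {Ω ι R : Type*} [Fintype Ω] [Fintype ι]
    [CommRing R] [LinearOrder R] [IsStrictOrderedRing R] {w : Ω → R} (hw : ∀ x, 0 ≤ w x)
    (S : Ω → Finset ι) {p : R} (hp₀ : 0 ≤ p) (hp₁ : p ≤ 1) (m : ℕ) :
    (1 - (1 - p) ^ m) * ∑ x with m ≤ #(S x), w x ≤ ∑ x, w x * hittingProb p (S x) := by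
  have hq₀ : 0 ≤ 1 - p := sub_nonneg.mpr hp₁
  have hq₁ : 1 - p ≤ 1 := sub_le_self 1 hp₀
  simp only [hittingProb_eq_one_sub_pow]
  calc (1 - (1 - p) ^ m) * ∑ x with m ≤ #(S x), w x
      = ∑ x with m ≤ #(S x), w x * (1 - (1 - p) ^ m) := by rw [mul_comm, sum_mul]
    _ ≤ ∑ x with m ≤ #(S x), w x * (1 - (1 - p) ^ #(S x)) := by
        refine sum_le_sum fun x hx => mul_le_mul_of_nonneg_left ?_ (hw x)
        exact sub_le_sub_left (pow_le_pow_of_le_one hq₀ hq₁ (mem_filter.mp hx).2) 1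
    _ ≤ ∑ x, w x * (1 - (1 - p) ^ #(S x)) :=
        sum_le_univ_sum_of_nonneg fun x =>
          mul_nonneg (hw x) (sub_nonneg.mpr (pow_le_one₀ hq₀ hq₁))

theorem one_sub_one_div_pow_le_half {m : ℕ} (hm : 1 ≤ m) : (1 - 1 / (m : ℝ)) ^ m ≤ 1 / 2 :=
  calc (1 - 1 / (m : ℝ)) ^ m ≤ Real.exp (-1) :=
        Real.one_sub_div_pow_le_exp_neg (by exact_mod_cast hm)
    _ ≤ 1 / 2 := Real.exp_neg_one_lt_half.le

theorem random_subset_hits_sensitive_coordinate_general {Ω ι : Type*} [Fintype Ω] [Fintype ι]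
    {w : Ω → ℝ} (hw : ∀ x, 0 ≤ w x) (S : Ω → Finset ι) {m : ℕ} (hm : 1 ≤ m) :
    (1 - (1 - 1 / (m : ℝ)) ^ m) * ∑ x with m ≤ #(S x), w x ≤
      ∑ x, w x * hittingProb (1 / (m : ℝ)) (S x) ∧
    1 / 2 * ∑ x with m ≤ #(S x), w x ≤ ∑ x, w x * hittingProb (1 / (m : ℝ)) (S x) := by
  have hp₁ : 1 / (m : ℝ) ≤ 1 := div_le_one_of_le₀ (by exact_mod_cast hm) m.cast_nonneg
  have hbound := one_sub_pow_mul_sum_le_sum_mul_hittingProb hw S (by positivity) hp₁ m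
  refine ⟨hbound, le_trans ?_ hbound⟩
  refine mul_le_mul_of_nonneg_right ?_ (sum_nonneg fun x _ => hw x)
  linarith [one_sub_one_div_pow_le_half hm]

/-- If the sensitivity at `x` is at least `m`, a random set `J` keeping each coordinate with
probability `1/m` hits a sensitive coordinate with probability at least `1 - (1-1/m)^m ≥ 1/2`. -/
theorem random_subset_hits_sensitive_coordinate (n m : ℕ) (hn : 1 ≤ n) (hm : 1 ≤ m)
    (hmn : m ≤ n) (f : (Fin n → Bool) → ℝ) :
    (1 - (1 - 1 / (m : ℝ)) ^ m) *
        (((Finset.univ.filter (fun x : Fin n → Bool => m ≤ sens f x)).card : ℝ) / 2 ^ n)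
      ≤ (∑ x : Fin n → Bool, ∑ J : Finset (Fin n),
          ((1 : ℝ) / m) ^ J.card * (1 - 1 / (m : ℝ)) ^ (n - J.card) *
            (if ∃ i ∈ J, f (flipAt x i) ≠ f x then 1 else 0)) / 2 ^ n ∧
    (1 / 2 : ℝ) *
        (((Finset.univ.filter (fun x : Fin n → Bool => m ≤ sens f x)).card : ℝ) / 2 ^ n)
      ≤ (∑ x : Fin n → Bool, ∑ J : Finset (Fin n),
          ((1 : ℝ) / m) ^ J.card * (1 - 1 / (m : ℝ)) ^ (n - J.card) *
            (if ∃ i ∈ J, f (flipAt x i) ≠ f x then 1 else 0)) / 2 ^ n := by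
  simpa [sens, hittingProb, sum_filter, div_eq_inv_mul, mul_sum, mul_comm, mul_left_comm] using
    random_subset_hits_sensitive_coordinate_general (w := fun _ => (2 ^ n)⁻¹)
      (fun _ => by positivity) (fun x => univ.filter fun i => f (flipAt x i) ≠ f x) hm
end
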